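/- arXiv:1706.03306 — 2 statements merged into one kernel-verified Lean document; each statement's English description precedes it below -/
import Mathlib

section
/- For every integer r ≥ 3 and every real ε > 0 there exists N such that for every integer n ≥ N there exists an r-uniform r-partite linear hypergraph H on n vertices which contains no rainbow cycles of length three or four and has more than n^{2−ε} edges. -/
open Finset

/-- `H` (an `r`-uniform `r`-partite hypergraph with parts given by `part`) contains a rainbow
cycle of length `k`: `k` distinct vertices and `k` distinct edges, with `vᵢ, vᵢ₊₁ ∈ Aᵢ`
(cyclically), and the `k` vertices lying in `k` distinct vertex parts. -/
def HasRainbowCycle {V : Type*} {r : ℕ} (H : Finset (Finset V)) (part : V → Fin r)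
    (k : ℕ) : Prop :=
  ∃ (v : Fin k → V) (A : Fin k → Finset V),
    Function.Injective v ∧ Function.Injective A ∧
    (∀ i, A i ∈ H) ∧
    (∀ i : Fin k, v i ∈ A i ∧ v (finRotate k i) ∈ A i) ∧
    Function.Injective (fun i => part (v i))

lemma rb_lambda (r : ℕ) : ∃ lam : Fin r → Polynomial ℤ, ∀ (k : ℕ) (p : Fin k → Fin r),
    Function.Injective p →
    {θ : ℝ | StrictMono fun i => Polynomial.aeval θ (lam (p i))}.Infinite := by
  classical
  let F := Fin r → Fin r
  let c : F → ℤ := fun q => ((Fintype.equivFin F q : ℕ) : ℤ)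
  have hc : Function.Injective c := by
    intro a b h
    have h' : (Fintype.equivFin F a : ℕ) = (Fintype.equivFin F b : ℕ) := by simpa [c] using h
    exact (Fintype.equivFin F).injective (Fin.ext h')
  let g : F → Polynomial ℤ := fun q =>
    ∏ q' ∈ univ.erase q, (Polynomial.X - Polynomial.C (c q')) ^ 2
  refine ⟨fun i => ∑ q : F, Polynomial.C ((q i : ℕ) : ℤ) * g q, ?_⟩
  intro k p hp
  have hkr : k ≤ r := by simpa using Fintype.card_le_of_injective p hp
  by_cases hk : k = 0
  · subst hk
    have : {θ : ℝ | StrictMono fun i => Polynomial.aeval θ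
        ((fun i => ∑ q : F, Polynomial.C ((q i : ℕ) : ℤ) * g q) (p i))} = Set.univ := by
      ext θ; simp only [Set.mem_ofPred_eq, Set.mem_univ, iff_true]
      intro i; exact i.elim0
    rw [this]; exact Set.infinite_univ
  have : Nonempty (Fin k) := ⟨⟨0, by omega⟩⟩
  let q : F := fun i => Fin.castLE hkr (Function.invFun p i)
  have hq : ∀ i, q (p i) = Fin.castLE hkr i := fun i => by
    simp [q, Function.leftInverse_invFun hp i]
  have hgne : ∀ q' : F, q' ≠ q → Polynomial.aeval ((c q : ℤ) : ℝ) (g q') = 0 := by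
    intro q' h
    simp only [g, map_prod]
    apply Finset.prod_eq_zero (i := q) (by simp [h.symm])
    simp
  have hgpos : 0 < Polynomial.aeval ((c q : ℤ) : ℝ) (g q) := by
    simp only [g, map_prod]
    apply Finset.prod_pos
    intro q' h
    have h1 : q' ≠ q := by simpa using h
    have h2 : c q - c q' ≠ 0 := sub_ne_zero.2 (fun h => h1 (hc h.symm))
    have h3 : ((c q : ℝ) - (c q' : ℝ)) ≠ 0 := by exact_mod_cast h2
    simp only [map_pow, map_sub, Polynomial.aeval_X, Polynomial.aeval_C]
    have : (algebraMap ℤ ℝ) (c q') = (c q' : ℝ) := rfl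
    rw [this]
    positivity
  have hval : ∀ i, Polynomial.aeval ((c q : ℤ) : ℝ)
      (∑ q : F, Polynomial.C ((q (p i) : ℕ) : ℤ) * g q)
      = (i : ℕ) * Polynomial.aeval ((c q : ℤ) : ℝ) (g q) := by
    intro i
    rw [map_sum, Finset.sum_eq_single q]
    · rw [map_mul, Polynomial.aeval_C, hq]; simp
    · intro q' _ h; rw [map_mul, hgne q' h, mul_zero]
    · simp
  apply infinite_of_mem_nhds ((c q : ℤ) : ℝ)
  apply IsOpen.mem_nhds
  · have : {θ : ℝ | StrictMono fun i => Polynomial.aeval θ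
        ((fun i => ∑ q : F, Polynomial.C ((q i : ℕ) : ℤ) * g q) (p i))} =
        ⋂ i : Fin k, ⋂ j : Fin k, {θ : ℝ | i < j →
          Polynomial.aeval θ (∑ q : F, Polynomial.C ((q (p i) : ℕ) : ℤ) * g q) <
          Polynomial.aeval θ (∑ q : F, Polynomial.C ((q (p j) : ℕ) : ℤ) * g q)} := by
      ext θ
      simp only [Set.mem_ofPred_eq, Set.mem_iInter]
      exact Iff.rfl
    rw [this]
    refine isOpen_iInter_of_finite fun i => isOpen_iInter_of_finite fun j => ?_
    by_cases hij : i < j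
    · simp only [hij, true_imp_iff]
      exact isOpen_lt (Polynomial.continuous_aeval _) (Polynomial.continuous_aeval _)
    · simp [hij]
  · intro i j hij
    show Polynomial.aeval _ _ < Polynomial.aeval _ _
    rw [hval, hval]
    have : ((i : ℕ) : ℝ) < ((j : ℕ) : ℝ) := by exact_mod_cast hij
    exact mul_lt_mul_of_pos_right this hgpos

lemma rb_convex {k c : ℕ} (y : Fin (k + 1) → Fin c → ℝ) (w : Fin (k + 1) → ℝ) (ρ : ℝ)
    (hy : ∀ i, ∑ j, y i j ^ 2 = ρ) (hw : ∀ i, i ≠ Fin.last k → 0 < w i)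
    (hs : ∑ i, w i = 0) (h : ∀ j, ∑ i, w i * y i j = 0) :
    ∀ i, y i = y (Fin.last k) := by
  set z := y (Fin.last k) with hz
  have h1 : ∀ i, ∑ j, (y i j - z j) ^ 2 = - 2 * ∑ j, (y i j - z j) * z j := by
    intro i
    have e : ∑ j, (y i j ^ 2 - z j ^ 2) = 0 := by
      rw [Finset.sum_sub_distrib, hy i, hz, hy, sub_self]
    rw [Finset.mul_sum, ← sub_eq_zero, ← Finset.sum_sub_distrib, ← e]
    apply Finset.sum_congr rfl; intro j _; ring
  have h2 : ∑ i, w i * ∑ j, (y i j - z j) ^ 2 = 0 := by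
    have e : ∀ j, ∑ i, w i * ((y i j - z j) * z j) = 0 := by
      intro j
      have : ∀ i, w i * ((y i j - z j) * z j) = w i * y i j * z j - w i * (z j * z j) := by
        intro i; ring
      simp_rw [this]
      rw [Finset.sum_sub_distrib, ← Finset.sum_mul, ← Finset.sum_mul, hs, h j]; ring
    calc _ = ∑ i, ∑ j, (-2) * (w i * ((y i j - z j) * z j)) := by
          apply Finset.sum_congr rfl; intro i _
          rw [h1, ← Finset.mul_sum, ← Finset.mul_sum]; ring
      _ = ∑ j, ∑ i, (-2) * (w i * ((y i j - z j) * z j)) := Finset.sum_comm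
      _ = 0 := by
          apply Finset.sum_eq_zero; intro j _; rw [← Finset.mul_sum, e, mul_zero]
  have h3 : ∀ i ∈ univ, 0 ≤ w i * ∑ j, (y i j - z j) ^ 2 := by
    intro i _
    by_cases hi : i = Fin.last k
    · subst hi; simp [hz]
    · exact mul_nonneg (hw i hi).le (Finset.sum_nonneg fun j _ => sq_nonneg _)
  intro i
  by_cases hi : i = Fin.last k
  · subst hi; rfl
  have h4 := (Finset.sum_eq_zero_iff_of_nonneg h3).1 h2 i (mem_univ _)
  have h5 : ∑ j, (y i j - z j) ^ 2 = 0 := by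
    rcases mul_eq_zero.1 h4 with h | h
    · exact absurd h (hw i hi).ne'
    · exact h
  funext j
  have := (Finset.sum_eq_zero_iff_of_nonneg (fun j _ => sq_nonneg _)).1 h5 j (mem_univ _)
  exact sub_eq_zero.1 (pow_eq_zero_iff (two_ne_zero) |>.1 this)

/-- the edge with parameters `(x, a)` -/
noncomputable def rbEdge {r c : ℕ} (lam : Fin r → Polynomial ℤ)
    (xa : (Fin c → Polynomial ℤ) × (Fin c → Polynomial ℤ)) :
    Finset (Fin r × (Fin c → Polynomial ℤ)) :=
  univ.map ⟨fun i => (i, xa.1 + lam i • xa.2), fun _ _ h => (Prod.ext_iff.1 h).1⟩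

lemma rb_mem {r c : ℕ} (lam : Fin r → Polynomial ℤ)
    (xa : (Fin c → Polynomial ℤ) × (Fin c → Polynomial ℤ))
    (v : Fin r × (Fin c → Polynomial ℤ)) :
    v ∈ rbEdge lam xa ↔ v.2 = xa.1 + lam v.1 • xa.2 := by
  simp only [rbEdge, mem_map, mem_univ, true_and]
  constructor
  · rintro ⟨i, rfl⟩; rfl
  · intro h; exact ⟨v.1, Prod.ext rfl h.symm⟩

lemma rb_two {r c : ℕ} (lam : Fin r → Polynomial ℤ) (hlam : Function.Injective lam)
    (e f : (Fin c → Polynomial ℤ) × (Fin c → Polynomial ℤ)) (i j : Fin r) (hij : i ≠ j)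
    (hi : e.1 + lam i • e.2 = f.1 + lam i • f.2)
    (hj : e.1 + lam j • e.2 = f.1 + lam j • f.2) : e = f := by
  have h2 : e.2 = f.2 := by
    funext t
    have h1 := congrFun hi t
    have h2 := congrFun hj t
    simp only [Pi.add_apply, Pi.smul_apply, smul_eq_mul] at h1 h2
    have : (lam i - lam j) * (e.2 t - f.2 t) = 0 := by linear_combination h1 - h2
    rcases mul_eq_zero.1 this with h | h
    · exact absurd (hlam (sub_eq_zero.1 h)) hij
    · exact sub_eq_zero.1 h
  refine Prod.ext ?_ h2
  rw [h2] at hi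
  exact add_right_cancel hi

lemma rb_nocycle {r c : ℕ} (lam : Fin r → Polynomial ℤ)
    (hlam : ∀ (k : ℕ) (p : Fin k → Fin r), Function.Injective p →
      {θ : ℝ | StrictMono fun i => Polynomial.aeval θ (lam (p i))}.Infinite)
    (P : Finset ((Fin c → Polynomial ℤ) × (Fin c → Polynomial ℤ))) (ν : Polynomial ℤ)
    (hP : ∀ e ∈ P, ∑ j, e.2 j ^ 2 = ν) (H : Finset (Finset (Fin r × (Fin c → Polynomial ℤ))))
    (hH : ∀ A ∈ H, ∃ e ∈ P, rbEdge lam e = A) (k : ℕ) (hk : 2 ≤ k) :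
    ¬ HasRainbowCycle H Prod.fst k := by
  rintro ⟨v, A, -, hA, hAH, hv, hp⟩
  obtain ⟨k, rfl⟩ : ∃ k', k = k' + 1 := ⟨k - 1, by omega⟩
  choose e heP heA using fun i => hH (A i) (hAH i)
  have hv1 : ∀ i, (v i).2 = (e i).1 + lam (v i).1 • (e i).2 := fun i =>
    (rb_mem lam _ _).1 (by rw [heA]; exact (hv i).1)
  have hv2 : ∀ i, (v (finRotate _ i)).2 = (e i).1 + lam (v (finRotate _ i)).1 • (e i).2 :=
    fun i => (rb_mem lam _ _).1 (by rw [heA]; exact (hv i).2)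
  have hsum : ∑ i, (v (finRotate _ i)).2 = ∑ i, (v i).2 :=
    Equiv.sum_comp (finRotate (k + 1)) (fun i => (v i).2)
  have hsl : ∀ θ : ℝ, ∑ i, (Polynomial.aeval θ (lam (v (finRotate _ i)).1) -
      Polynomial.aeval θ (lam (v i).1)) = 0 := by
    intro θ
    rw [Finset.sum_sub_distrib, sub_eq_zero]
    exact Equiv.sum_comp (finRotate (k + 1)) (fun i => Polynomial.aeval θ (lam (v i).1))
  have hrel : ∀ j, ∑ i, (lam (v (finRotate _ i)).1 - lam (v i).1) * (e i).2 j = 0 := by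
    intro j
    have h1 := congrFun hsum j
    simp_rw [hv2] at h1
    rw [Finset.sum_congr rfl (fun i _ => hv1 i)] at h1
    simp only [Finset.sum_apply, Pi.add_apply, Pi.smul_apply, smul_eq_mul] at h1
    rw [← sub_eq_zero, ← Finset.sum_sub_distrib] at h1
    rw [← h1]
    apply Finset.sum_congr rfl; intro i _; ring
  have hall : ∀ i j, (e i).2 j = (e (Fin.last k)).2 j := by
    intro i j
    have hinf := hlam (k + 1) (fun i => (v i).1) hp
    have hinj : Function.Injective (Polynomial.map (Int.castRingHom ℝ)) :=
      Polynomial.map_injective _ Int.cast_injective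
    apply hinj
    apply Polynomial.eq_of_infinite_eval_eq
    refine hinf.mono ?_
    intro θ hθ
    have := rb_convex (fun i j => Polynomial.aeval θ ((e i).2 j))
      (fun i => Polynomial.aeval θ (lam (v (finRotate _ i)).1) -
        Polynomial.aeval θ (lam (v i).1)) (Polynomial.aeval θ ν)
      (fun i => by rw [← hP (e i) (heP i)]; simp) ?_ (hsl θ) ?_ i
    · have := congrFun this j
      simpa [Polynomial.aeval_def, Polynomial.eval_map] using this
    · intro i hi
      rw [sub_pos]
      apply hθ
      rw [Fin.lt_def, coe_finRotate_of_ne_last hi]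
      omega
    · intro j
      have := congrArg (Polynomial.aeval θ) (hrel j)
      simpa using this
  have h01 : e ⟨0, by omega⟩ = e (finRotate _ ⟨0, by omega⟩) := by
    have h2 : (e ⟨0, by omega⟩).2 = (e (finRotate _ ⟨0, by omega⟩)).2 := by
      funext j; rw [hall, ← hall (finRotate _ _)]
    refine Prod.ext ?_ h2
    have a1 := hv2 ⟨0, by omega⟩
    rw [hv1, h2] at a1
    exact (add_right_cancel a1).symm
  have h3 := hA ((heA _).symm.trans ((congrArg (rbEdge lam) h01).trans (heA _)))
  have h4 := congrArg Fin.val h3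
  rw [coe_finRotate_of_ne_last] at h4
  · simp at h4
  · intro h; have := congrArg Fin.val h; simp at this; omega

lemma rb_transfer {V : Type*} [Infinite V] [DecidableEq V] {r : ℕ} (H : Finset (Finset V)) (part : V → Fin r)
    (S : Finset V) (hS : ∀ A ∈ H, A ⊆ S) (n : ℕ) (hn : S.card ≤ n)
    (h1 : ∀ A ∈ H, ∀ i : Fin r, (A.filter fun x => part x = i).card = 1)
    (h2 : ∀ A ∈ H, ∀ B ∈ H, A ≠ B → (A ∩ B).card ≤ 1) :
    ∃ (H' : Finset (Finset (Fin n))) (part' : Fin n → Fin r),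
        (∀ A ∈ H', ∀ i : Fin r, (A.filter fun x => part' x = i).card = 1) ∧
        (∀ A ∈ H', ∀ B ∈ H', A ≠ B → (A ∩ B).card ≤ 1) ∧
        (∀ k, HasRainbowCycle H' part' k → HasRainbowCycle H part k) ∧
        H'.card = H.card := by
  classical
  obtain ⟨S', hSS, hcard⟩ := Infinite.exists_superset_card_eq S n hn
  let eq : Fin n ≃ S' := (Finset.equivFinOfCardEq hcard).symm
  let g : Fin n ↪ V := eq.toEmbedding.trans (Function.Embedding.subtype _)
  have hg : ∀ x ∈ S', ∃ y, g y = x := fun x hx => ⟨eq.symm ⟨x, hx⟩, by simp [g]⟩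
  refine ⟨univ.filter fun A => A.map g ∈ H, part ∘ g, ?_, ?_, ?_, ?_⟩
  · intro A hA i
    rw [← h1 _ (mem_filter.1 hA).2 i, Finset.filter_map, card_map]; rfl
  · intro A hA B hB hAB
    have := h2 _ (mem_filter.1 hA).2 _ (mem_filter.1 hB).2 (fun h => hAB (map_injective g h))
    rwa [← map_inter, card_map] at this
  · rintro k ⟨v, A, hv, hA, hAH, hvA, hp⟩
    refine ⟨g ∘ v, fun i => (A i).map g, g.injective.comp hv, (map_injective g).comp hA,
      fun i => (mem_filter.1 (hAH i)).2, fun i => ?_, hp⟩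
    exact ⟨mem_map_of_mem g (hvA i).1, mem_map_of_mem g (hvA i).2⟩
  · rw [← card_map ⟨fun A : Finset (Fin n) => A.map g, map_injective g⟩]
    congr 1
    ext A
    simp only [mem_map, mem_filter, mem_univ, true_and, Function.Embedding.coeFn_mk]
    constructor
    · rintro ⟨B, hB, rfl⟩; exact hB
    · intro hA
      have : (A.preimage g g.injective.injOn).map g = A := by
        ext x
        simp only [mem_map, mem_preimage]
        constructor
        · rintro ⟨y, hy, rfl⟩; exact hy
        · intro hx
          obtain ⟨y, rfl⟩ := hg x (hSS (hS A hA hx))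
          exact ⟨y, hx, rfl⟩
      exact ⟨_, by rw [this]; exact hA, this⟩

/-- polynomial with coefficients vanishing from `d` on and bounded by `M` -/
def RbBd (d : ℕ) (M : ℤ) (p : Polynomial ℤ) : Prop :=
  (∀ t, d ≤ t → p.coeff t = 0) ∧ ∀ t, |p.coeff t| ≤ M

lemma rbBd_mul {d₁ d₂ : ℕ} {M₁ M₂ : ℤ} {p q : Polynomial ℤ} (hp : RbBd d₁ M₁ p)
    (hq : RbBd d₂ M₂ q) : RbBd (d₁ + d₂) ((d₁ + d₂ : ℕ) * (M₁ * M₂)) (p * q) := by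
  have hM1 : 0 ≤ M₁ := (abs_nonneg _).trans (hp.2 0)
  have hM2 : 0 ≤ M₂ := (abs_nonneg _).trans (hq.2 0)
  have h0 : ∀ t, d₁ + d₂ ≤ t → (p * q).coeff t = 0 := by
    intro t ht
    rw [Polynomial.coeff_mul]
    apply Finset.sum_eq_zero
    rintro ⟨a, b⟩ hab
    rw [HasAntidiagonal.mem_antidiagonal] at hab
    simp only at hab
    rcases le_or_gt d₁ a with h | h
    · simp [hp.1 a h]
    · simp [hq.1 b (by omega)]
  refine ⟨h0, fun t => ?_⟩
  rcases le_or_gt (d₁ + d₂) t with h | h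
  · rw [h0 t h, abs_zero]; positivity
  · rw [Polynomial.coeff_mul]
    refine (Finset.abs_sum_le_sum_abs _ _).trans ?_
    refine (Finset.sum_le_card_nsmul _ _ (M₁ * M₂) ?_).trans ?_
    · rintro ⟨a, b⟩ _
      rw [abs_mul]
      exact mul_le_mul (hp.2 _) (hq.2 _) (abs_nonneg _) hM1
    · rw [Nat.card_antidiagonal, nsmul_eq_mul]
      apply mul_le_mul_of_nonneg_right _ (mul_nonneg hM1 hM2)
      exact_mod_cast h

/-- all polynomials of length `d` with coefficients of absolute value at most `M` -/
noncomputable def rbQ (d M : ℕ) : Finset (Polynomial ℤ) := by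
  classical
  exact (univ : Finset (Fin d → Fin (2 * M + 1))).image
    fun β => Polynomial.ofFn d fun t => ((β t : ℕ) : ℤ) - M

lemma rbQ_card (d M : ℕ) : (rbQ d M).card ≤ (2 * M + 1) ^ d := by
  classical
  unfold rbQ
  refine card_image_le.trans ?_
  simp

lemma rbQ_mem {d M : ℕ} {p : Polynomial ℤ} (h : RbBd d M p) : p ∈ rbQ d M := by
  classical
  unfold rbQ
  rw [mem_image]
  have hb := fun t => abs_le.1 (h.2 t)
  refine ⟨fun t => ⟨(p.coeff t + M).toNat, ?_⟩, mem_univ _, ?_⟩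
  · have := hb t; omega
  · ext t
    rcases lt_or_ge t d with ht | ht
    · rw [Polynomial.ofFn_coeff_eq_val_of_lt _ ht]
      have := hb t
      simp only
      omega
    · rw [Polynomial.ofFn_coeff_eq_zero_of_ge _ ht, h.1 t ht]

/-- all polynomials of length `d` with coefficients in `[0, m)` -/
noncomputable def rbP (d m : ℕ) : Finset (Polynomial ℤ) := by
  classical
  exact (univ : Finset (Fin d → Fin m)).image
    fun β => Polynomial.ofFn d fun t => ((β t : ℕ) : ℤ)

lemma rbP_card (d m : ℕ) : (rbP d m).card = m ^ d := by
  classical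
  unfold rbP
  rw [card_image_of_injective]
  · simp
  · intro a b h
    have := Polynomial.injective_ofFn d h
    funext t
    have := congrFun this t
    exact Fin.ext (by exact_mod_cast this)

lemma rbP_bd {d m : ℕ} {p : Polynomial ℤ} (h : p ∈ rbP d m) : RbBd d m p := by
  classical
  unfold rbP at h
  rw [mem_image] at h
  obtain ⟨β, -, rfl⟩ := h
  refine ⟨fun t ht => Polynomial.ofFn_coeff_eq_zero_of_ge _ ht, fun t => ?_⟩
  rcases lt_or_ge t d with ht | ht
  · rw [Polynomial.ofFn_coeff_eq_val_of_lt _ ht]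
    have := (β ⟨t, ht⟩).2
    rw [abs_le]; omega
  · rw [Polynomial.ofFn_coeff_eq_zero_of_ge _ ht]; simp

lemma rb_build (r : ℕ) (hr : 3 ≤ r) : ∃ e C : ℕ, ∀ K m : ℕ, 1 ≤ K → 1 ≤ m → ∀ n : ℕ,
    r * ((2 * ((1 + (e + K) * C) * m) + 1) ^ (K + e)) ^ K ≤ n →
    ∃ (H : Finset (Finset (Fin n))) (part : Fin n → Fin r),
        (∀ A ∈ H, ∀ i : Fin r, (A.filter fun x => part x = i).card = 1) ∧
        (∀ A ∈ H, ∀ B ∈ H, A ≠ B → (A ∩ B).card ≤ 1) ∧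
        (∀ k, 2 ≤ k → ¬ HasRainbowCycle H part k) ∧
        (m ^ (K + e)) ^ K * (m ^ K) ^ K ≤
          H.card * (2 * (K * ((K + K) * (m * m))) + 1) ^ (K + K) := by
  classical
  obtain ⟨lam, hlam⟩ := rb_lambda r
  have hlinj : Function.Injective lam := by
    intro i j h
    by_contra hij
    obtain ⟨θ, hθ⟩ := (hlam 2 ![i, j] (by
      intro a b; fin_cases a <;> fin_cases b <;> simp [hij, Ne.symm hij])).nonempty
    have : (0 : Fin 2) < 1 := by decide
    have := hθ this
    simp [h] at this
  obtain ⟨e, he⟩ : ∃ e, ∀ i t, e ≤ t → (lam i).coeff t = 0 := by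
    refine ⟨∑ i, ((lam i).natDegree + 1), fun i t ht => ?_⟩
    apply Polynomial.coeff_eq_zero_of_natDegree_lt
    have := Finset.single_le_sum (f := fun i => (lam i).natDegree + 1)
      (fun _ _ => Nat.zero_le _) (mem_univ i)
    omega
  obtain ⟨C, hC⟩ : ∃ C : ℕ, ∀ i t, |(lam i).coeff t| ≤ C := by
    refine ⟨∑ i, ∑ t ∈ range e, ((lam i).coeff t).natAbs, fun i t => ?_⟩
    rcases lt_or_ge t e with h | h
    · have h1 := Finset.single_le_sum (f := fun i => ∑ t ∈ range e, ((lam i).coeff t).natAbs)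
        (fun _ _ => Nat.zero_le _) (mem_univ i)
      have h2 := Finset.single_le_sum (f := fun t => ((lam i).coeff t).natAbs)
        (fun _ _ => Nat.zero_le _) (mem_range.2 h)
      have h3 := h2.trans h1
      rw [Int.abs_eq_natAbs]
      exact_mod_cast h3
    · rw [he i t h, abs_zero]; positivity
  have hlb : ∀ i, RbBd e C (lam i) := fun i => ⟨he i, hC i⟩
  refine ⟨e, C, fun K m hK hm n hn => ?_⟩
  set M := (1 + (e + K) * C) * m with hM
  let Apos : Finset (Fin K → Polynomial ℤ) := Fintype.piFinset fun _ => rbP K m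
  let Xs : Finset (Fin K → Polynomial ℤ) := Fintype.piFinset fun _ => rbP (K + e) m
  let T := rbQ (K + K) (K * ((K + K) * (m * m)))
  have hmaps : ∀ a ∈ Apos, ∑ j, a j ^ 2 ∈ T := by
    intro a ha
    apply rbQ_mem
    have hb : ∀ j, RbBd (K + K) ((K + K : ℕ) * ((m : ℤ) * m)) (a j ^ 2) := fun j => by
      rw [pow_two]; exact rbBd_mul (rbP_bd (Fintype.mem_piFinset.1 ha j))
        (rbP_bd (Fintype.mem_piFinset.1 ha j))
    refine ⟨fun t ht => ?_, fun t => ?_⟩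
    · rw [Polynomial.finsetSum_coeff]
      exact Finset.sum_eq_zero fun j _ => (hb j).1 t ht
    · rw [Polynomial.finsetSum_coeff]
      refine (Finset.abs_sum_le_sum_abs _ _).trans ?_
      refine (Finset.sum_le_card_nsmul _ _ _ fun j _ => (hb j).2 t).trans ?_
      simp
  obtain ⟨ν, hν⟩ : ∃ ν, Apos.card ≤ (Apos.filter fun a => ∑ j, a j ^ 2 = ν).card * T.card := by
    by_contra hcon
    push Not at hcon
    have hA : Apos.Nonempty := by
      rw [← card_pos]; simp only [Apos, Fintype.card_piFinset_const, rbP_card]; positivity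
    obtain ⟨a0, ha0⟩ := hA
    have hT : 0 < T.card := card_pos.2 ⟨_, hmaps a0 ha0⟩
    obtain ⟨y, hy, hh⟩ := Finset.exists_lt_card_fiber_of_mul_lt_card_of_maps_to (s := Apos)
      (t := T) (n := (Apos.card - 1) / T.card) hmaps (by
        have := Nat.mul_div_le (Apos.card - 1) T.card
        have : 0 < Apos.card := card_pos.2 ⟨_, ha0⟩
        omega)
    have h1 := hcon y
    have h2 := (Nat.div_lt_iff_lt_mul hT).1 hh
    omega
  let A := Apos.filter fun a => ∑ j, a j ^ 2 = ν
  let P := Xs ×ˢ A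
  let H := P.image (rbEdge lam)
  have hHP : ∀ B ∈ H, ∃ e ∈ P, rbEdge lam e = B := fun B hB => mem_image.1 hB
  have hinj : Function.Injective (rbEdge (c := K) lam) := by
    intro p q h
    have hh : ∀ i, p.1 + lam i • p.2 = q.1 + lam i • q.2 := by
      intro i
      have : (i, p.1 + lam i • p.2) ∈ rbEdge lam p := (rb_mem _ _ _).2 rfl
      rw [h] at this
      exact (rb_mem _ _ _).1 this
    exact rb_two lam hlinj p q ⟨0, by omega⟩ ⟨1, by omega⟩ (by simp) (hh _) (hh _)
  let S : Finset (Fin r × (Fin K → Polynomial ℤ)) :=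
    univ ×ˢ Fintype.piFinset fun _ => rbQ (K + e) M
  have hS : ∀ B ∈ H, B ⊆ S := by
    intro B hB v hv
    obtain ⟨⟨x, a⟩, hxa, rfl⟩ := hHP B hB
    have hv' := (rb_mem _ _ _).1 hv
    simp only [P, A, mem_product, mem_filter] at hxa
    simp only [S, mem_product, mem_univ, true_and, Fintype.mem_piFinset]
    intro j
    apply rbQ_mem
    rw [hv']
    have hx := rbP_bd (Fintype.mem_piFinset.1 hxa.1 j)
    have ha := rbBd_mul (hlb v.1) (rbP_bd (Fintype.mem_piFinset.1 hxa.2.1 j))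
    simp only [Pi.add_apply, Pi.smul_apply, smul_eq_mul]
    refine ⟨fun t ht => ?_, fun t => ?_⟩
    · rw [Polynomial.coeff_add, hx.1 t ht, ha.1 t (by omega), add_zero]
    · rw [Polynomial.coeff_add]
      refine (abs_add_le _ _).trans ((add_le_add (hx.2 t) (ha.2 t)).trans (le_of_eq ?_))
      rw [hM]; push_cast; ring
  have hScard : S.card ≤ n := by
    refine le_trans ?_ hn
    simp only [S, card_product, card_univ, Fintype.card_fin, Fintype.card_piFinset_const]
    gcongr
    exact rbQ_card _ _
  have : Nonempty (Fin K) := ⟨⟨0, hK⟩⟩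
  have : Nonempty (Fin r) := ⟨⟨0, by omega⟩⟩
  have : Infinite (Fin r × (Fin K → Polynomial ℤ)) := inferInstance
  obtain ⟨H', part', h1, h2, h3, h4⟩ := rb_transfer H Prod.fst S hS n hScard (by
      intro B hB i
      obtain ⟨⟨x, a⟩, hxa, rfl⟩ := hHP B hB
      rw [card_eq_one]
      refine ⟨(i, x + lam i • a), ?_⟩
      ext v
      rw [mem_filter, rb_mem, mem_singleton]
      constructor
      · rintro ⟨h, rfl⟩; exact Prod.ext rfl h
      · rintro rfl; exact ⟨rfl, rfl⟩) (by
      intro B hB B' hB' hne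
      obtain ⟨p, hp, rfl⟩ := hHP B hB
      obtain ⟨q, hq, rfl⟩ := hHP B' hB'
      rw [card_le_one]
      intro v hv w hw
      rw [mem_inter, rb_mem, rb_mem] at hv hw
      by_contra hvw
      apply hne
      have : v.1 ≠ w.1 := by
        intro h
        apply hvw
        refine Prod.ext h ?_
        rw [hv.1, hw.1, h]
      rw [rb_two lam hlinj p q v.1 w.1 this (hv.1.symm.trans hv.2) (hw.1.symm.trans hw.2)])
  refine ⟨H', part', h1, h2, fun k hk hc => ?_, ?_⟩
  · exact rb_nocycle lam hlam P ν (fun p hp => (mem_filter.1 (mem_product.1 hp).2).2) H hHP k hk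
      (h3 k hc)
  · rw [h4]
    have e1 : H.card = Xs.card * A.card := by
      rw [card_image_of_injective _ hinj, card_product]
    have e2 : Xs.card = (m ^ (K + e)) ^ K := by
      simp only [Xs, Fintype.card_piFinset_const, rbP_card]
    have e3 : Apos.card = (m ^ K) ^ K := by
      simp only [Apos, Fintype.card_piFinset_const, rbP_card]
    rw [e1, e2, ← e3, mul_assoc]
    apply Nat.mul_le_mul_left
    exact hν.trans (Nat.mul_le_mul_left _ (rbQ_card _ _))

theorem exists_large_rainbowFree_hypergraph (r : ℕ) (hr : 3 ≤ r) (ε : ℝ) (hε : 0 < ε) :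
    ∃ N : ℕ, ∀ n : ℕ, N ≤ n →
      ∃ (H : Finset (Finset (Fin n))) (part : Fin n → Fin r),
        (∀ A ∈ H, ∀ i : Fin r, (A.filter fun x => part x = i).card = 1) ∧
        (∀ A ∈ H, ∀ B ∈ H, A ≠ B → (A ∩ B).card ≤ 1) ∧
        ¬ HasRainbowCycle H part 3 ∧ ¬ HasRainbowCycle H part 4 ∧
        (n : ℝ) ^ ((2 : ℝ) - ε) < (H.card : ℝ) := by
  obtain ⟨e, C, hb⟩ := rb_build r hr
  obtain ⟨K0, hK0⟩ := exists_nat_gt ((4 + e) / ε)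
  obtain ⟨J, hJ⟩ : ∃ J, J = K0 := ⟨_, rfl⟩
  set K := J + 4 with hK
  have hKε : (4 + e : ℝ) < ε * (K + e) := by
    have h1 : (4 + e : ℝ) / ε < K + e := by
      have : (K : ℝ) = K0 + 4 := by rw [hK, hJ]; push_cast; ring
      rw [this]; have : (0 : ℝ) ≤ e := by positivity
      linarith
    rw [div_lt_iff₀ hε] at h1; linarith
  have hKpos : (0 : ℝ) < K := by rw [hK]; positivity
  set T := (K + e) * K with hT
  have hTpos : 0 < T := by rw [hT, hK]; positivity
  have hTr : (0 : ℝ) < T := by exact_mod_cast hTpos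
  set D := 1 + (e + K) * C with hD
  set c := 3 * D * r with hc
  have hDpos : 1 ≤ D := by rw [hD]; omega
  have hcpos : 0 < c := by rw [hc]; positivity
  have hcr : (0 : ℝ) < c := by exact_mod_cast hcpos
  set E := T + K * J with hE
  set Q := (5 * K ^ 2) ^ (K + K) with hQ
  have hQpos : (0 : ℝ) < Q := by rw [hQ]; push_cast; positivity
  set δ : ℝ := E - T * (2 - ε) with hδ
  have hδpos : 0 < δ := by
    have : δ = K * (ε * (K + e) - (4 + e)) := by
      have : (K : ℝ) = J + 4 := by rw [hK]; push_cast; ring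
      rw [hδ, hE, hT]; push_cast; rw [this]; ring
    rw [this]; exact mul_pos hKpos (by linarith)
  have hlim : Filter.Tendsto (fun n : ℕ => (n : ℝ) ^ (1 / (T : ℝ))) Filter.atTop Filter.atTop :=
    (tendsto_rpow_atTop (by positivity)).comp tendsto_natCast_atTop_atTop
  have hlim2 : Filter.Tendsto (fun n : ℕ => ((n : ℝ) ^ (1 / (T : ℝ))) ^ δ)
      Filter.atTop Filter.atTop := (tendsto_rpow_atTop hδpos).comp hlim
  have hev := (hlim.eventually_ge_atTop (2 * c : ℝ)).and
    (hlim2.eventually_gt_atTop ((2 * c : ℝ) ^ E * Q))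
  obtain ⟨N, hN⟩ := Filter.eventually_atTop.1 hev
  refine ⟨N, fun n hn => ?_⟩
  obtain ⟨hy1, hy2⟩ := hN n hn
  set y : ℝ := (n : ℝ) ^ (1 / (T : ℝ)) with hy
  have hypos : 0 < y := by linarith
  have hyT : y ^ T = n := by
    rw [hy, one_div]; exact Real.rpow_inv_natCast_pow (by positivity) hTpos.ne'
  set m := ⌊y / c⌋₊ with hm
  have hm1 : (m : ℝ) ≤ y / c := Nat.floor_le (by positivity)
  have hyc : 2 ≤ y / c := by rw [le_div_iff₀ hcr]; exact hy1
  have hm2 : y / (2 * c) ≤ m := by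
    have h1 : y / c < m + 1 := Nat.lt_floor_add_one _
    have h2 : y / (2 * c) = (y / c) / 2 := by field_simp
    rw [h2]; linarith
  have hmpos : 1 ≤ m := Nat.le_floor (by push_cast; linarith)
  have hmr : (0 : ℝ) < m := by exact_mod_cast hmpos
  have hcm : (c * m) ^ T ≤ n := by
    have : ((c * m : ℕ) : ℝ) ^ T ≤ y ^ T := by
      gcongr
      push_cast
      rw [le_div_iff₀ hcr] at hm1; linarith
    rw [hyT] at this
    exact_mod_cast this
  have hroom : r * ((2 * (D * m) + 1) ^ (K + e)) ^ K ≤ n := by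
    refine le_trans ?_ hcm
    rw [← pow_mul, ← hT]
    have h1 : c * m = r * (3 * (D * m)) := by rw [hc]; ring
    rw [h1, mul_pow]
    have h2 : 1 ≤ D * m := Nat.mul_pos hDpos hmpos
    gcongr
    · exact Nat.le_self_pow hTpos.ne' r
    · omega
  obtain ⟨H, part, h1, h2, h3, h4⟩ := hb K m (by omega) hmpos n hroom
  refine ⟨H, part, h1, h2, h3 3 (by norm_num), h3 4 (by norm_num), ?_⟩
  have h5 : m ^ E ≤ H.card * Q := by
    have e1 : 2 * (K * ((K + K) * (m * m))) + 1 ≤ 5 * K ^ 2 * m ^ 2 := by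
      have : 1 ≤ K ^ 2 * m ^ 2 := Nat.mul_pos (by positivity) (by positivity)
      nlinarith
    have e2 := h4.trans (Nat.mul_le_mul_left H.card (Nat.pow_le_pow_left e1 (K + K)))
    have e3 : (m ^ (K + e)) ^ K * (m ^ K) ^ K = m ^ E * m ^ (2 * (K + K)) := by
      rw [← pow_mul, ← pow_mul, ← pow_add, ← pow_add]
      congr 1
      rw [hE, hT, hK]; ring
    rw [e3, mul_pow, ← pow_mul, ← mul_assoc] at e2
    exact Nat.le_of_mul_le_mul_right e2 (by positivity)
  have h6 : (m : ℝ) ^ E ≤ H.card * Q := by exact_mod_cast h5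
  have h7 : (y / (2 * c)) ^ E ≤ H.card * Q := le_trans (by gcongr) h6
  have h8 : (n : ℝ) ^ ((2 : ℝ) - ε) = y ^ ((T : ℝ) * (2 - ε)) := by
    rw [← hyT, ← Real.rpow_natCast y T, ← Real.rpow_mul hypos.le]
  have h9 : y ^ E = y ^ ((T : ℝ) * (2 - ε)) * y ^ δ := by
    rw [← Real.rpow_natCast y E, ← Real.rpow_add hypos, hδ]; congr 1; ring
  rw [h8]
  have hz : 0 < y ^ ((T : ℝ) * (2 - ε)) := Real.rpow_pos_of_pos hypos _
  rw [div_pow, div_le_iff₀ (by positivity), h9] at h7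
  have h10 : y ^ ((T : ℝ) * (2 - ε)) * ((2 * c : ℝ) ^ E * Q) <
      H.card * ((2 * c : ℝ) ^ E * Q) := by
    calc _ < y ^ ((T : ℝ) * (2 - ε)) * y ^ δ := mul_lt_mul_of_pos_left hy2 hz
      _ ≤ _ := h7
      _ = _ := by ring
  exact lt_of_mul_lt_mul_right h10 (by positivity)
end

section
/- For every integer r ≥ 3, every e ∈ {4, 5, 7, 8} and every real ε > 0, there exists N such that for all integers n ≥ N, f_r(n, e(r−2)+3, e) > n^{2−ε}. -/
open Finset

/-- A hypergraph `H` is `G_r(v,e)`-free if any `e` distinct edges span at least `v+1` vertices. -/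
def GFree {V : Type*} [DecidableEq V] (H : Finset (Finset V)) (v e : ℕ) : Prop :=
  ∀ S ⊆ H, S.card = e → v + 1 ≤ (S.biUnion id).card

/-- `extremalF r n v e` is the maximum number of edges of a `G_r(v,e)`-free `r`-uniform
hypergraph on `n` vertices. -/
noncomputable def extremalF (r n v e : ℕ) : ℕ :=
  sSup {m : ℕ | ∃ H : Finset (Finset (Fin n)),
    (∀ A ∈ H, A.card = r) ∧ GFree H v e ∧ H.card = m}

set_option linter.all false





section comb
variable {P V : Type*} [DecidableEq P] [DecidableEq V] {r : ℕ}

def dTimes (l : Fin r → P → V) (S : Finset P) (p : P) : Finset (Fin r) :=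
  univ.filter (fun i => ∃ q ∈ S, q ≠ p ∧ l i q = l i p)

def sav (l : Fin r → P → V) (S : Finset P) : ℕ := ∑ i, (S.card - (S.image (l i)).card)

def Ad (l : Fin r → P → V) (p q : P) : Prop := p ≠ q ∧ ∃ t, l t p = l t q

def NA (l : Fin r → P → V) (p q : P) : Prop := ∀ t, l t p ≠ l t q

theorem Ad.symm {l : Fin r → P → V} {p q : P} (h : Ad l p q) : Ad l q p :=
  ⟨h.1.symm, h.2.imp fun _ h => h.symm⟩

theorem sav_erase (l : Fin r → P → V) (S : Finset P) (p : P) (hp : p ∈ S) :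
    sav l S = sav l (S.erase p) + (dTimes l S p).card := by
  unfold sav dTimes
  rw [card_filter, ← sum_add_distrib]
  refine sum_congr rfl fun i _ => ?_
  have h1 : S.image (l i) = insert (l i p) ((S.erase p).image (l i)) := by
    rw [← image_insert, insert_erase hp]
  have h2 : (S.erase p).card + 1 = S.card := card_erase_add_one hp
  have h3 : ((S.erase p).image (l i)).card ≤ (S.erase p).card := card_image_le
  by_cases h : ∃ q ∈ S, q ≠ p ∧ l i q = l i p
  · have h4 : l i p ∈ (S.erase p).image (l i) := by
      obtain ⟨q, hq, hqp, e⟩ := h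
      exact mem_image.2 ⟨q, mem_erase.2 ⟨hqp, hq⟩, e⟩
    rw [insert_eq_of_mem h4] at h1
    rw [if_pos h, h1]; omega
  · have h4 : l i p ∉ (S.erase p).image (l i) := by
      intro h4
      obtain ⟨q, hq, e⟩ := mem_image.1 h4
      exact h ⟨q, (mem_erase.1 hq).2, (mem_erase.1 hq).1, e⟩
    rw [if_neg h, h1, card_insert_of_notMem h4]; omega

open Classical in
noncomputable def nb (l : Fin r → P → V) (S : Finset P) (p : P) : Finset P :=
  S.filter (fun q => Ad l p q)

theorem mem_nb {l : Fin r → P → V} {S : Finset P} {p q : P} :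
    q ∈ nb l S p ↔ q ∈ S ∧ Ad l p q := by
  classical
  unfold nb; rw [mem_filter]

structure Lin (l : Fin r → P → V) : Prop where
  lin : ∀ p q i j, p ≠ q → l i p = l i q → l j p = l j q → i = j
  tri : ∀ p q s i j k, p ≠ q → q ≠ s → p ≠ s → l i p = l i q → l j q = l j s → l k p = l k s → i = j

theorem times_le_nb {l : Fin r → P → V} (hl : Lin l) (S : Finset P) (p : P) :
    (dTimes l S p).card ≤ (nb l S p).card := by
  classical
  haveI : Nonempty P := ⟨p⟩
  have h : ∀ i ∈ dTimes l S p, ∃ q ∈ S, q ≠ p ∧ l i q = l i p := by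
    intro i hi; exact (mem_filter.1 hi).2
  choose! f hf using h
  refine card_le_card_of_injOn f (fun i hi => ?_) (fun i hi j hj e => ?_)
  · have := hf i hi
    exact mem_nb.2 ⟨this.1, this.2.1.symm, i, this.2.2.symm⟩
  · have h1 := hf i hi
    have h2 := hf j hj
    rw [← e] at h2
    exact hl.lin _ _ i j h1.2.1 h1.2.2 h2.2.2

/-- three mutually adjacent: all the same time -/
theorem Lin.tri3 {l : Fin r → P → V} (hl : Lin l) {p q s : P} {i j k : Fin r}
    (h1 : p ≠ q) (h2 : q ≠ s) (h3 : p ≠ s) (hi : l i p = l i q) (hj : l j q = l j s)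
    (hk : l k p = l k s) : i = j ∧ k = i := by
  have := hl.tri p q s i j k h1 h2 h3 hi hj hk
  subst this
  exact ⟨rfl, hl.lin p s _ _ h3 hk (hi.trans hj)⟩

theorem no_tri {l : Fin r → P → V} (hl : Lin l) (S : Finset P) (hS : S.card ≤ 8)
    (hd : ∀ p ∈ S, 3 ≤ (dTimes l S p).card) {p q s : P} (hp : p ∈ S) (hq : q ∈ S) (hs : s ∈ S)
    (h1 : Ad l p q) (h2 : Ad l q s) (h3 : Ad l p s) : False := by
  classical
  obtain ⟨n1, i, e1⟩ := h1
  obtain ⟨n2, j, e2⟩ := h2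
  obtain ⟨n3, k, e3⟩ := h3
  obtain ⟨rfl, rfl⟩ := hl.tri3 n1 n2 n3 e1 e2 e3
  let N : P → Finset P := fun x => S.filter (fun y => y ≠ x ∧ ∃ j, j ≠ k ∧ l j y = l j x)
  have hN : ∀ x ∈ S, 2 ≤ (N x).card := by
    intro x hx
    have hx3 := hd x hx
    have : 2 ≤ ((dTimes l S x).erase k).card := by
      have := pred_card_le_card_erase (s := dTimes l S x) (a := k); omega
    refine this.trans ?_
    haveI : Nonempty P := ⟨x⟩
    have h : ∀ i ∈ (dTimes l S x).erase k, ∃ q ∈ S, q ≠ x ∧ l i q = l i x := by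
      intro i hi; exact (mem_filter.1 (mem_erase.1 hi).2).2
    choose! f hf using h
    refine card_le_card_of_injOn f (fun i hi => ?_) (fun i hi j hj e => ?_)
    · have := hf i hi
      exact mem_filter.2 ⟨this.1, this.2.1, i, (mem_erase.1 hi).1, this.2.2⟩
    · have h1 := hf i hi
      have h2 := hf j hj
      rw [← e] at h2
      exact hl.lin _ _ i j h1.2.1 h1.2.2 h2.2.2
  have hdis : ∀ x y, x ≠ y → l k x = l k y → Disjoint (N x) (N y) := by
    intro x y hxy e
    rw [Finset.disjoint_left]
    intro z hz hz'
    obtain ⟨-, a1, j1, a2, a3⟩ := mem_filter.1 hz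
    obtain ⟨-, b1, j2, b2, b3⟩ := mem_filter.1 hz'
    have := hl.tri3 hxy (Ne.symm b1) (Ne.symm a1) e b3.symm a3.symm
    exact b2 this.1.symm
  have hL : ∀ x y, x ≠ y → l k x = l k y → y ∉ N x := by
    intro x y hxy e hy
    obtain ⟨-, a1, j1, a2, a3⟩ := mem_filter.1 hy
    exact a2 (hl.lin _ _ _ _ hxy a3.symm e)
  have hself : ∀ x, x ∉ N x := fun x hx => (mem_filter.1 hx).2.1 rfl
  have hsub : ({p, q, s} ∪ (N p ∪ (N q ∪ N s))) ⊆ S := by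
    intro z hz
    simp only [mem_union, mem_insert, mem_singleton] at hz
    rcases hz with (rfl | rfl | rfl) | h | h | h
    · exact hp
    · exact hq
    · exact hs
    all_goals exact (mem_filter.1 h).1
  have c1 : (N q ∪ N s).card = (N q).card + (N s).card := card_union_of_disjoint (hdis _ _ n2 e2)
  have c2 : (N p ∪ (N q ∪ N s)).card = (N p).card + (N q ∪ N s).card :=
    card_union_of_disjoint (disjoint_union_right.2 ⟨hdis _ _ n1 e1, hdis _ _ n3 e3⟩)
  have c3 : ({p, q, s} ∪ (N p ∪ (N q ∪ N s))).card = ({p, q, s} : Finset P).card + (N p ∪ (N q ∪ N s)).card := by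
    refine card_union_of_disjoint ?_
    rw [Finset.disjoint_left]
    intro z hz
    simp only [mem_insert, mem_singleton] at hz
    simp only [mem_union, not_or]
    rcases hz with rfl | rfl | rfl
    · exact ⟨hself _, hL _ _ n1.symm e1.symm, hL _ _ n3.symm e3.symm⟩
    · exact ⟨hL _ _ n1 e1, hself _, hL _ _ n2.symm e2.symm⟩
    · exact ⟨hL _ _ n3 e3, hL _ _ n2 e2, hself _⟩
  have c4 : ({p, q, s} : Finset P).card = 3 := card_eq_three.2 ⟨p, q, s, n1, n3, n2, rfl⟩
  have := card_le_card hsub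
  have := hN p hp
  have := hN q hq
  have := hN s hs
  omega

theorem two_sav_le {l : Fin r → P → V} (S : Finset P)
    (ht : ∀ p ∈ S, ∀ q ∈ S, ∀ s ∈ S, Ad l p q → Ad l q s → Ad l p s → False) :
    2 * sav l S ≤ ∑ p ∈ S, (dTimes l S p).card := by
  classical
  have hsw : ∑ p ∈ S, (dTimes l S p).card
      = ∑ i, (S.filter (fun p => ∃ q ∈ S, q ≠ p ∧ l i q = l i p)).card := by
    simp only [dTimes, card_filter]
    exact sum_comm
  rw [hsw, sav, mul_sum]
  refine sum_le_sum fun i _ => ?_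
  set D := S.filter (fun p => ∃ q ∈ S, q ≠ p ∧ l i q = l i p) with hD
  -- weight
  have hw : ∑ p ∈ S, (if p ∈ D then 1 else 2) ≤ ∑ y ∈ S.image (l i), 2 := by
    rw [← sum_fiberwise_of_maps_to (s := S) (t := S.image (l i)) (g := l i)
      (fun x hx => mem_image_of_mem _ hx)]
    refine sum_le_sum fun y hy => ?_
    obtain ⟨p, hp, rfl⟩ := mem_image.1 hy
    by_cases hpD : p ∈ D
    · obtain ⟨-, q, hq, hqp, e⟩ := mem_filter.1 hpD
      have : S.filter (fun x => l i x = l i p) ⊆ {p, q} := by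
        intro z hz
        obtain ⟨hz, ez⟩ := mem_filter.1 hz
        simp only [mem_insert, mem_singleton]
        by_contra hcon
        push Not at hcon
        exact ht p hp q hq z hz ⟨hqp.symm, i, e.symm⟩ ⟨hcon.2.symm, i, e.trans ez.symm⟩
          ⟨hcon.1.symm, i, ez.symm⟩
      have hqD : q ∈ D := mem_filter.2 ⟨hq, p, hp, hqp.symm, e.symm⟩
      refine (sum_le_sum_of_subset this).trans ?_
      rw [sum_pair hqp.symm, if_pos hpD, if_pos hqD]
    · have : S.filter (fun x => l i x = l i p) ⊆ {p} := by
        intro z hz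
        obtain ⟨hz, ez⟩ := mem_filter.1 hz
        rw [mem_singleton]
        by_contra hcon
        exact hpD (mem_filter.2 ⟨hp, z, hz, hcon, ez⟩)
      refine (sum_le_sum_of_subset this).trans ?_
      rw [sum_singleton]; split_ifs <;> omega
  have h2 : ∑ p ∈ S, (if p ∈ D then 1 else 2) + D.card = 2 * S.card := by
    have : D.card = ∑ p ∈ S, if p ∈ D then 1 else 0 := by
      rw [← card_filter]; congr 1; ext z; simp [hD]
    rw [this, ← sum_add_distrib, mul_comm, ← smul_eq_mul, ← sum_const]
    refine sum_congr rfl fun x _ => ?_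
    split_ifs <;> rfl
  rw [sum_const, smul_eq_mul] at hw
  omega

end comb

section graph
variable {W : Type*} [Fintype W] [DecidableEq W] (A : W → W → Prop)

structure GH : Prop where
  symm : ∀ p q, A p q → A q p
  irr : ∀ p, ¬ A p p
  tf : ∀ p q s, A p q → A q s → A p s → False
  third : ∀ z a b, ∃ w, A z w ∧ w ≠ a ∧ w ≠ b

def N7 : Prop := ∀ u1 u2 u3 v1 v2 v3 v4 : W, u1 ≠ u2 → u1 ≠ u3 → u2 ≠ u3 →
  v1 ≠ v2 → v1 ≠ v3 → v1 ≠ v4 → v2 ≠ v3 → v2 ≠ v4 → v3 ≠ v4 →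
  A u1 v1 → A u1 v2 → A u1 v3 → A u1 v4 → A u2 v1 → A u2 v2 → A u2 v3 → A u2 v4 →
  A u3 v1 → A u3 v2 → A u3 v3 → False

def N8a : Prop := ∀ u1 u2 u3 u4 v1 v2 v3 v4 : W, 
  u1 ≠ u2 → u1 ≠ u3 → u1 ≠ u4 → u2 ≠ u3 → u2 ≠ u4 → u3 ≠ u4 →
  v1 ≠ v2 → v1 ≠ v3 → v1 ≠ v4 → v2 ≠ v3 → v2 ≠ v4 → v3 ≠ v4 →
  A u1 v2 → A u1 v3 → A u1 v4 → A u2 v1 → A u2 v3 → A u2 v4 →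
  A u3 v1 → A u3 v2 → A u3 v4 → A u4 v1 → A u4 v2 → A u4 v3 → A u4 v4 → False

def N8b : Prop := ∀ u u' v1 v2 v3 v4 e d : W, 
  u ≠ u' → v1 ≠ v2 → v1 ≠ v3 → v1 ≠ v4 → v2 ≠ v3 → v2 ≠ v4 → v3 ≠ v4 →
  e ≠ u → e ≠ u' → d ≠ u → d ≠ u' → e ≠ v3 → e ≠ v4 → d ≠ v1 → d ≠ v2 → 
  A u v1 → A u v2 → A u v3 → A u v4 → A u' v1 → A u' v2 → A u' v3 → A u' v4 →
  A e v1 → A e v2 → A d v3 → A d v4 → A e d → False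

variable {A}

theorem GH.all3 (g : GH A) {z a b c : W} (h : ∀ w, A z w → w = a ∨ w = b ∨ w = c) :
    A z a ∧ A z b ∧ A z c := by
  obtain ⟨w3, b3, c3, d3⟩ := g.third z b c
  obtain ⟨w4, b4, c4, d4⟩ := g.third z a c
  obtain ⟨w5, b5, c5, d5⟩ := g.third z a b
  refine ⟨?_, ?_, ?_⟩
  · rcases h _ b3 with rfl | rfl | rfl
    exacts [b3, absurd rfl c3, absurd rfl d3]
  · rcases h _ b4 with rfl | rfl | rfl
    exacts [absurd rfl c4, b4, absurd rfl d4]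
  · rcases h _ b5 with rfl | rfl | rfl
    exacts [absurd rfl c5, absurd rfl d5, b5]

/-- seven-vertex closing: K33 plus a vertex meeting one side -/
theorem g7k0 (g : GH A) (h7 : N7 A) {p x y z q1 q2 q3 : W} 
    (exh : ∀ w, w = p ∨ w = x ∨ w = y ∨ w = z ∨ w = q1 ∨ w = q2 ∨ w = q3)
    (npx : p ≠ x) (npy : p ≠ y) (nxy : x ≠ y) (n12 : q1 ≠ q2) (n13 : q1 ≠ q3) (n23 : q2 ≠ q3)
    (nz1 : q1 ≠ z) (nz2 : q2 ≠ z) (nz3 : q3 ≠ z)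
    (a1 : A p q1) (a2 : A p q2) (a3 : A p q3) (a4 : A x q1) (a5 : A x q2) (a6 : A x q3) 
    (a7 : A y q1) (a8 : A y q2) (a9 : A y q3) (hh : A z p ∨ A z x ∨ A z y) : False := by
  have sy := g.symm
  have tf := g.tf
  have nq : ¬ A z q1 ∧ ¬ A z q2 ∧ ¬ A z q3 := by
    rcases hh with h | h | h
    · exact ⟨fun k => tf _ _ _ h a1 k, fun k => tf _ _ _ h a2 k, fun k => tf _ _ _ h a3 k⟩
    · exact ⟨fun k => tf _ _ _ h a4 k, fun k => tf _ _ _ h a5 k, fun k => tf _ _ _ h a6 k⟩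
    · exact ⟨fun k => tf _ _ _ h a7 k, fun k => tf _ _ _ h a8 k, fun k => tf _ _ _ h a9 k⟩
  obtain ⟨t1, t2, t3⟩ := g.all3 (z := z) (a := p) (b := x) (c := y) (by
    intro w hw
    rcases exh w with h | h | h | h | h | h | h
    · exact Or.inl h
    · exact Or.inr (Or.inl h)
    · exact Or.inr (Or.inr h)
    · exact absurd (h ▸ hw) (g.irr z)
    · exact absurd (h ▸ hw) nq.1
    · exact absurd (h ▸ hw) nq.2.1
    · exact absurd (h ▸ hw) nq.2.2)
  exact h7 p x y q1 q2 q3 z npx npy nxy n12 n13 nz1 n23 nz2 nz3 a1 a2 a3 (sy _ _ t1)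
    a4 a5 a6 (sy _ _ t2) a7 a8 a9

theorem g7k (g : GH A) (h7 : N7 A) {p x y z q1 q2 q3 : W} 
    (exh : ∀ w, w = p ∨ w = x ∨ w = y ∨ w = z ∨ w = q1 ∨ w = q2 ∨ w = q3)
    (npx : p ≠ x) (npy : p ≠ y) (nxy : x ≠ y) (n12 : q1 ≠ q2) (n13 : q1 ≠ q3) (n23 : q2 ≠ q3)
    (nz1 : q1 ≠ z) (nz2 : q2 ≠ z) (nz3 : q3 ≠ z) (nz4 : p ≠ z) (nz5 : x ≠ z) (nz6 : y ≠ z)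
    (a1 : A p q1) (a2 : A p q2) (a3 : A p q3) (a4 : A x q1) (a5 : A x q2) (a6 : A x q3) 
    (a7 : A y q1) (a8 : A y q2) (a9 : A y q3) : False := by
  have sy := g.symm
  by_cases hh : A z p ∨ A z x ∨ A z y
  · exact g7k0 g h7 exh npx npy nxy n12 n13 n23 nz1 nz2 nz3 a1 a2 a3 a4 a5 a6 a7 a8 a9 hh
  · refine g7k0 g h7 (p := q1) (x := q2) (y := q3) (z := z) (q1 := p) (q2 := x) (q3 := y)
      (fun w => ?_) n12 n13 n23 npx npy nxy nz4 nz5 nz6 (sy _ _ a1) (sy _ _ a4) (sy _ _ a7) (sy _ _ a2) (sy _ _ a5) (sy _ _ a8) (sy _ _ a3) (sy _ _ a6) (sy _ _ a9) ?_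
    · rcases exh w with h | h | h | h | h | h | h <;> simp only [h, true_or, or_true]
    · obtain ⟨w1, b1, -, -⟩ := g.third z z z
      rcases exh w1 with h | h | h | h | h | h | h <;> subst h
      · exact absurd (Or.inl b1) hh
      · exact absurd (Or.inr (Or.inl b1)) hh
      · exact absurd (Or.inr (Or.inr b1)) hh
      · exact absurd b1 (g.irr _)
      · exact Or.inl b1
      · exact Or.inr (Or.inl b1)
      · exact Or.inr (Or.inr b1)

def Pr (A : W → W → Prop) (q x y z : W) : Prop := (A q x ∧ A q y) ∨ (A q x ∧ A q z) ∨ (A q y ∧ A q z)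

theorem Pr.s1 {q x y z : W} (h : Pr A q x y z) : Pr A q y x z := by unfold Pr at *; tauto
theorem Pr.s2 {q x y z : W} (h : Pr A q x y z) : Pr A q x z y := by unfold Pr at *; tauto

theorem GH.pr (g : GH A) {q p x y z : W} (h : ∀ w, A q w → w = p ∨ w = x ∨ w = y ∨ w = z) :
    Pr A q x y z := by
  obtain ⟨w1, b1, c1, -⟩ := g.third q p p
  obtain ⟨w2, b2, c2, d2⟩ := g.third q p w1
  unfold Pr
  rcases h _ b1 with h1 | h1 | h1 | h1 <;> rcases h _ b2 with h2 | h2 | h2 | h2 <;> subst h1 <;> first | subst h2 | skip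
  all_goals first | exact absurd rfl ‹_› | simp only [*, and_self, true_or, or_true]

theorem g7two (g : GH A) (h7 : N7 A) {p x y z q1 q2 q3 : W} 
    (exh : ∀ w, w = p ∨ w = x ∨ w = y ∨ w = z ∨ w = q1 ∨ w = q2 ∨ w = q3)
    (npx : p ≠ x) (npy : p ≠ y) (nxy : x ≠ y) (n12 : q1 ≠ q2) (n13 : q1 ≠ q3) (n23 : q2 ≠ q3)
    (nz1 : q1 ≠ z) (nz2 : q2 ≠ z) (nz3 : q3 ≠ z) (nz4 : p ≠ z) (nz5 : x ≠ z) (nz6 : y ≠ z)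
    (a1 : A p q1) (a2 : A p q2) (a3 : A p q3) (a4 : A q1 x) (a5 : A q2 x) 
    (a7 : A q1 y) (a8 : A q2 y) (a6 : A q3 x) (a9 : A q3 z) : False := by
  have sy := g.symm
  have tf := g.tf
  have nz : ¬ A y q3 → A y z := by
    intro h
    obtain ⟨w, b, c, d⟩ := g.third y q1 q2
    rcases exh w with h | h | h | h | h | h | h <;> subst h
    · exact (tf _ _ _ a1 a7 (sy _ _ b)).elim
    · exact (tf _ _ _ a4 (sy _ _ b) a7).elim
    · exact (g.irr _ b).elim
    · exact b
    · exact absurd rfl c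
    · exact absurd rfl d
    · exact absurd b h
  by_cases hy : A y q3
  · exact g7k g h7 exh npx npy nxy n12 n13 n23 nz1 nz2 nz3 nz4 nz5 nz6 a1 a2 a3 (sy _ _ a4) (sy _ _ a5) (sy _ _ a6) (sy _ _ a7) (sy _ _ a8) hy
  · have hz := nz hy
    obtain ⟨w, b, c, d⟩ := g.third z q3 y
    rcases exh w with h | h | h | h | h | h | h <;> subst h
    · exact (tf _ _ _ a3 a9 (sy _ _ b)).elim
    · exact (tf _ _ _ a6 (sy _ _ b) a9).elim
    · exact absurd rfl d
    · exact (g.irr _ b).elim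
    · exact (tf _ _ _ a7 hz (sy _ _ b)).elim
    · exact (tf _ _ _ a8 hz (sy _ _ b)).elim
    · exact absurd rfl c

theorem g7two' (g : GH A) (h7 : N7 A) {p x y z q1 q2 q3 : W} 
    (exh : ∀ w, w = p ∨ w = x ∨ w = y ∨ w = z ∨ w = q1 ∨ w = q2 ∨ w = q3)
    (npx : p ≠ x) (npy : p ≠ y) (nxy : x ≠ y) (n12 : q1 ≠ q2) (n13 : q1 ≠ q3) (n23 : q2 ≠ q3)
    (nz1 : q1 ≠ z) (nz2 : q2 ≠ z) (nz3 : q3 ≠ z) (nz4 : p ≠ z) (nz5 : x ≠ z) (nz6 : y ≠ z)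
    (a1 : A p q1) (a2 : A p q2) (a3 : A p q3) (a4 : A q1 x) (a5 : A q2 x) 
    (a7 : A q1 y) (a8 : A q2 y) (h : Pr A q3 x y z) : False := by
  have sy := g.symm
  rcases h with ⟨h, k⟩ | ⟨h, k⟩ | ⟨h, k⟩
  · exact g7k g h7 exh npx npy nxy n12 n13 n23 nz1 nz2 nz3 nz4 nz5 nz6 a1 a2 a3 (sy _ _ a4) (sy _ _ a5) (sy _ _ h) (sy _ _ a7) (sy _ _ a8) (sy _ _ k)
  · exact g7two g h7 exh npx npy nxy n12 n13 n23 nz1 nz2 nz3 nz4 nz5 nz6 a1 a2 a3 a4 a5 a7 a8 h k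
  · refine g7two g h7 (x := y) (y := x) (fun w => ?_) npy npx nxy.symm n12 n13 n23 nz1 nz2 nz3 nz4 nz6 nz5 a1 a2 a3 a7 a8 a4 a5 h k
    rcases exh w with h | h | h | h | h | h | h <;> simp only [h, true_or, or_true]

theorem g7d (g : GH A) (h7 : N7 A) {p x y z q1 q2 q3 : W} 
    (exh : ∀ w, w = p ∨ w = x ∨ w = y ∨ w = z ∨ w = q1 ∨ w = q2 ∨ w = q3)
    (npx : p ≠ x) (npy : p ≠ y) (nxy : x ≠ y) (n12 : q1 ≠ q2) (n13 : q1 ≠ q3) (n23 : q2 ≠ q3)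
    (nz1 : q1 ≠ z) (nz2 : q2 ≠ z) (nz3 : q3 ≠ z) (nz4 : p ≠ z) (nz5 : x ≠ z) (nz6 : y ≠ z)
    (a1 : A p q1) (a2 : A p q2) (a3 : A p q3) (a4 : A q1 x) (a5 : A q1 y) 
    (a7 : A q2 x) (a8 : A q2 z) (a9 : A q3 y) (a10 : A q3 z) : False := by
  have sy := g.symm
  have tf := g.tf
  have nz : A y q2 := by
    obtain ⟨w, b, c, d⟩ := g.third y q1 q3
    rcases exh w with h | h | h | h | h | h | h <;> subst h
    · exact (tf _ _ _ a1 a5 (sy _ _ b)).elim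
    · exact (tf _ _ _ a4 (sy _ _ b) a5).elim
    · exact (g.irr _ b).elim
    · exact (tf _ _ _ a9 b a10).elim
    · exact absurd rfl c
    · exact b
    · exact absurd rfl d
  refine g7two' g h7 exh npx npy nxy n12 n13 n23 nz1 nz2 nz3 nz4 nz5 nz6 a1 a2 a3 a4 a7 a5 (sy _ _ nz) (Or.inr (Or.inr ⟨a9, a10⟩))


theorem g7 (g : GH A) (h7 : N7 A) (hW : Fintype.card W = 7) : False := by
  have hne : Nonempty W := Fintype.card_pos_iff.1 (by omega)
  obtain ⟨p⟩ := hne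
  obtain ⟨q1, a1, -, -⟩ := g.third p p p
  obtain ⟨q2, a2, n21, -⟩ := g.third p q1 q1
  obtain ⟨q3, a3, n31, n32⟩ := g.third p q1 q2
  have irr' : ∀ q, A p q → q ≠ p := fun q h e => g.irr p (e ▸ h)
  have m1 := irr' _ a1
  have m2 := irr' _ a2
  have m3 := irr' _ a3
  have c4 : (({p, q1, q2, q3} : Finset W)ᶜ).card = 3 := by
    rw [card_compl, hW, card_insert_of_notMem, card_insert_of_notMem, card_insert_of_notMem, card_singleton] <;> simp [m1.symm, m2.symm, m3.symm, n21.symm, n31.symm, n32.symm]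
  obtain ⟨x, y, z, nxy, nxz, nyz, hs⟩ := card_eq_three.1 c4
  have exh : ∀ w, w = p ∨ w = x ∨ w = y ∨ w = z ∨ w = q1 ∨ w = q2 ∨ w = q3 := by
    intro w
    by_cases hw : w ∈ ({p, q1, q2, q3} : Finset W)
    · simp only [mem_insert, mem_singleton] at hw
      rcases hw with h | h | h | h <;> simp only [h, true_or, or_true]
    · rw [← mem_compl, hs] at hw
      simp only [mem_insert, mem_singleton] at hw
      rcases hw with h | h | h <;> simp only [h, true_or, or_true]
  have out : ∀ w ∈ ({x, y, z} : Finset W), p ≠ w ∧ q1 ≠ w ∧ q2 ≠ w ∧ q3 ≠ w := by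
    intro w hw
    rw [← hs, mem_compl] at hw
    simp only [mem_insert, mem_singleton, not_or] at hw
    exact ⟨Ne.symm hw.1, Ne.symm hw.2.1, Ne.symm hw.2.2.1, Ne.symm hw.2.2.2⟩
  obtain ⟨x1, x2, x3, x4⟩ := out x (by simp)
  obtain ⟨y1, y2, y3, y4⟩ := out y (by simp)
  obtain ⟨z1, z2, z3, z4⟩ := out z (by simp)
  have n12 := n21.symm
  have n13 := n31.symm
  have n23 := n32.symm
  have nyx := nxy.symm
  have nzx := nxz.symm
  have nzy := nyz.symm
  have pr : ∀ q, A p q → Pr A q x y z := by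
    intro q hq
    refine g.pr (p := p) (fun w hw => ?_)
    rcases exh w with h | h | h | h | h | h | h
    iterate 4 (simp only [h, true_or, or_true])
    · exact (g.tf _ _ _ hq (h ▸ hw) a1).elim
    · exact (g.tf _ _ _ hq (h ▸ hw) a2).elim
    · exact (g.tf _ _ _ hq (h ▸ hw) a3).elim
  have p1 := pr _ a1
  have p2 := pr _ a2
  have p3 := pr _ a3
  have T := @g7two' W _ _ A g h7 p
  have D := @g7d W _ _ A g h7 p
  rcases p1 with ⟨u1, v1⟩ | ⟨u1, v1⟩ | ⟨u1, v1⟩ <;> rcases p2 with ⟨u2, v2⟩ | ⟨u2, v2⟩ | ⟨u2, v2⟩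
  · exact T (x := x) (y := y) (z := z) (q1 := q1) (q2 := q2) (q3 := q3) (by intro w; rcases exh w with h | h | h | h | h | h | h <;> simp only [h, true_or, or_true]) (by assumption) (by assumption) (by assumption) (by assumption) (by assumption) (by assumption) (by assumption) (by assumption) (by assumption) (by assumption) (by assumption) (by assumption) a1 a2 a3 u1 u2 v1 v2 (p3)
  · have q3' := p3
    have p1 : Pr A q1 x y z := Or.inl ⟨u1, v1⟩
    have p2 : Pr A q2 x y z := Or.inr (Or.inl ⟨u2, v2⟩)
    rcases q3' with ⟨u3, v3⟩ | ⟨u3, v3⟩ | ⟨u3, v3⟩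
    · exact T (x := x) (y := y) (z := z) (q1 := q1) (q2 := q3) (q3 := q2) (by intro w; rcases exh w with h | h | h | h | h | h | h <;> simp only [h, true_or, or_true]) (by assumption) (by assumption) (by assumption) (by assumption) (by assumption) (by assumption) (by assumption) (by assumption) (by assumption) (by assumption) (by assumption) (by assumption) a1 a3 a2 u1 u3 v1 v3 (p2)
    · exact T (x := x) (y := z) (z := y) (q1 := q2) (q2 := q3) (q3 := q1) (by intro w; rcases exh w with h | h | h | h | h | h | h <;> simp only [h, true_or, or_true]) (by assumption) (by assumption) (by assumption) (by assumption) (by assumption) (by assumption) (by assumption) (by assumption) (by assumption) (by assumption) (by assumption) (by assumption) a2 a3 a1 u2 u3 v2 v3 (p1.s2)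
    · exact D (x := x) (y := y) (z := z) (q1 := q1) (q2 := q2) (q3 := q3) (by intro w; rcases exh w with h | h | h | h | h | h | h <;> simp only [h, true_or, or_true]) (by assumption) (by assumption) (by assumption) (by assumption) (by assumption) (by assumption) (by assumption) (by assumption) (by assumption) (by assumption) (by assumption) (by assumption) a1 a2 a3 (by assumption) (by assumption) (by assumption) (by assumption) (by assumption) (by assumption)
  · have q3' := p3
    have p1 : Pr A q1 x y z := Or.inl ⟨u1, v1⟩
    have p2 : Pr A q2 x y z := Or.inr (Or.inr ⟨u2, v2⟩)
    rcases q3' with ⟨u3, v3⟩ | ⟨u3, v3⟩ | ⟨u3, v3⟩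
    · exact T (x := x) (y := y) (z := z) (q1 := q1) (q2 := q3) (q3 := q2) (by intro w; rcases exh w with h | h | h | h | h | h | h <;> simp only [h, true_or, or_true]) (by assumption) (by assumption) (by assumption) (by assumption) (by assumption) (by assumption) (by assumption) (by assumption) (by assumption) (by assumption) (by assumption) (by assumption) a1 a3 a2 u1 u3 v1 v3 (p2)
    · exact D (x := y) (y := x) (z := z) (q1 := q1) (q2 := q2) (q3 := q3) (by intro w; rcases exh w with h | h | h | h | h | h | h <;> simp only [h, true_or, or_true]) (by assumption) (by assumption) (by assumption) (by assumption) (by assumption) (by assumption) (by assumption) (by assumption) (by assumption) (by assumption) (by assumption) (by assumption) a1 a2 a3 (by assumption) (by assumption) (by assumption) (by assumption) (by assumption) (by assumption)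
    · exact T (x := y) (y := z) (z := x) (q1 := q2) (q2 := q3) (q3 := q1) (by intro w; rcases exh w with h | h | h | h | h | h | h <;> simp only [h, true_or, or_true]) (by assumption) (by assumption) (by assumption) (by assumption) (by assumption) (by assumption) (by assumption) (by assumption) (by assumption) (by assumption) (by assumption) (by assumption) a2 a3 a1 u2 u3 v2 v3 (p1.s1.s2)
  · have q3' := p3
    have p1 : Pr A q1 x y z := Or.inr (Or.inl ⟨u1, v1⟩)
    have p2 : Pr A q2 x y z := Or.inl ⟨u2, v2⟩
    rcases q3' with ⟨u3, v3⟩ | ⟨u3, v3⟩ | ⟨u3, v3⟩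
    · exact T (x := x) (y := y) (z := z) (q1 := q2) (q2 := q3) (q3 := q1) (by intro w; rcases exh w with h | h | h | h | h | h | h <;> simp only [h, true_or, or_true]) (by assumption) (by assumption) (by assumption) (by assumption) (by assumption) (by assumption) (by assumption) (by assumption) (by assumption) (by assumption) (by assumption) (by assumption) a2 a3 a1 u2 u3 v2 v3 (p1)
    · exact T (x := x) (y := z) (z := y) (q1 := q1) (q2 := q3) (q3 := q2) (by intro w; rcases exh w with h | h | h | h | h | h | h <;> simp only [h, true_or, or_true]) (by assumption) (by assumption) (by assumption) (by assumption) (by assumption) (by assumption) (by assumption) (by assumption) (by assumption) (by assumption) (by assumption) (by assumption) a1 a3 a2 u1 u3 v1 v3 (p2.s2)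
    · exact D (x := x) (y := z) (z := y) (q1 := q1) (q2 := q2) (q3 := q3) (by intro w; rcases exh w with h | h | h | h | h | h | h <;> simp only [h, true_or, or_true]) (by assumption) (by assumption) (by assumption) (by assumption) (by assumption) (by assumption) (by assumption) (by assumption) (by assumption) (by assumption) (by assumption) (by assumption) a1 a2 a3 (by assumption) (by assumption) (by assumption) (by assumption) (by assumption) (by assumption)
  · exact T (x := x) (y := z) (z := y) (q1 := q1) (q2 := q2) (q3 := q3) (by intro w; rcases exh w with h | h | h | h | h | h | h <;> simp only [h, true_or, or_true]) (by assumption) (by assumption) (by assumption) (by assumption) (by assumption) (by assumption) (by assumption) (by assumption) (by assumption) (by assumption) (by assumption) (by assumption) a1 a2 a3 u1 u2 v1 v2 (p3.s2)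
  · have q3' := p3
    have p1 : Pr A q1 x y z := Or.inr (Or.inl ⟨u1, v1⟩)
    have p2 : Pr A q2 x y z := Or.inr (Or.inr ⟨u2, v2⟩)
    rcases q3' with ⟨u3, v3⟩ | ⟨u3, v3⟩ | ⟨u3, v3⟩
    · exact D (x := z) (y := x) (z := y) (q1 := q1) (q2 := q2) (q3 := q3) (by intro w; rcases exh w with h | h | h | h | h | h | h <;> simp only [h, true_or, or_true]) (by assumption) (by assumption) (by assumption) (by assumption) (by assumption) (by assumption) (by assumption) (by assumption) (by assumption) (by assumption) (by assumption) (by assumption) a1 a2 a3 (by assumption) (by assumption) (by assumption) (by assumption) (by assumption) (by assumption)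
    · exact T (x := x) (y := z) (z := y) (q1 := q1) (q2 := q3) (q3 := q2) (by intro w; rcases exh w with h | h | h | h | h | h | h <;> simp only [h, true_or, or_true]) (by assumption) (by assumption) (by assumption) (by assumption) (by assumption) (by assumption) (by assumption) (by assumption) (by assumption) (by assumption) (by assumption) (by assumption) a1 a3 a2 u1 u3 v1 v3 (p2.s2)
    · exact T (x := y) (y := z) (z := x) (q1 := q2) (q2 := q3) (q3 := q1) (by intro w; rcases exh w with h | h | h | h | h | h | h <;> simp only [h, true_or, or_true]) (by assumption) (by assumption) (by assumption) (by assumption) (by assumption) (by assumption) (by assumption) (by assumption) (by assumption) (by assumption) (by assumption) (by assumption) a2 a3 a1 u2 u3 v2 v3 (p1.s1.s2)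
  · have q3' := p3
    have p1 : Pr A q1 x y z := Or.inr (Or.inr ⟨u1, v1⟩)
    have p2 : Pr A q2 x y z := Or.inl ⟨u2, v2⟩
    rcases q3' with ⟨u3, v3⟩ | ⟨u3, v3⟩ | ⟨u3, v3⟩
    · exact T (x := x) (y := y) (z := z) (q1 := q2) (q2 := q3) (q3 := q1) (by intro w; rcases exh w with h | h | h | h | h | h | h <;> simp only [h, true_or, or_true]) (by assumption) (by assumption) (by assumption) (by assumption) (by assumption) (by assumption) (by assumption) (by assumption) (by assumption) (by assumption) (by assumption) (by assumption) a2 a3 a1 u2 u3 v2 v3 (p1)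
    · exact D (x := y) (y := z) (z := x) (q1 := q1) (q2 := q2) (q3 := q3) (by intro w; rcases exh w with h | h | h | h | h | h | h <;> simp only [h, true_or, or_true]) (by assumption) (by assumption) (by assumption) (by assumption) (by assumption) (by assumption) (by assumption) (by assumption) (by assumption) (by assumption) (by assumption) (by assumption) a1 a2 a3 (by assumption) (by assumption) (by assumption) (by assumption) (by assumption) (by assumption)
    · exact T (x := y) (y := z) (z := x) (q1 := q1) (q2 := q3) (q3 := q2) (by intro w; rcases exh w with h | h | h | h | h | h | h <;> simp only [h, true_or, or_true]) (by assumption) (by assumption) (by assumption) (by assumption) (by assumption) (by assumption) (by assumption) (by assumption) (by assumption) (by assumption) (by assumption) (by assumption) a1 a3 a2 u1 u3 v1 v3 (p2.s1.s2)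
  · have q3' := p3
    have p1 : Pr A q1 x y z := Or.inr (Or.inr ⟨u1, v1⟩)
    have p2 : Pr A q2 x y z := Or.inr (Or.inl ⟨u2, v2⟩)
    rcases q3' with ⟨u3, v3⟩ | ⟨u3, v3⟩ | ⟨u3, v3⟩
    · exact D (x := z) (y := y) (z := x) (q1 := q1) (q2 := q2) (q3 := q3) (by intro w; rcases exh w with h | h | h | h | h | h | h <;> simp only [h, true_or, or_true]) (by assumption) (by assumption) (by assumption) (by assumption) (by assumption) (by assumption) (by assumption) (by assumption) (by assumption) (by assumption) (by assumption) (by assumption) a1 a2 a3 (by assumption) (by assumption) (by assumption) (by assumption) (by assumption) (by assumption)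
    · exact T (x := x) (y := z) (z := y) (q1 := q2) (q2 := q3) (q3 := q1) (by intro w; rcases exh w with h | h | h | h | h | h | h <;> simp only [h, true_or, or_true]) (by assumption) (by assumption) (by assumption) (by assumption) (by assumption) (by assumption) (by assumption) (by assumption) (by assumption) (by assumption) (by assumption) (by assumption) a2 a3 a1 u2 u3 v2 v3 (p1.s2)
    · exact T (x := y) (y := z) (z := x) (q1 := q1) (q2 := q3) (q3 := q2) (by intro w; rcases exh w with h | h | h | h | h | h | h <;> simp only [h, true_or, or_true]) (by assumption) (by assumption) (by assumption) (by assumption) (by assumption) (by assumption) (by assumption) (by assumption) (by assumption) (by assumption) (by assumption) (by assumption) a1 a3 a2 u1 u3 v1 v3 (p2.s1.s2)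
  · exact T (x := y) (y := z) (z := x) (q1 := q1) (q2 := q2) (q3 := q3) (by intro w; rcases exh w with h | h | h | h | h | h | h <;> simp only [h, true_or, or_true]) (by assumption) (by assumption) (by assumption) (by assumption) (by assumption) (by assumption) (by assumption) (by assumption) (by assumption) (by assumption) (by assumption) (by assumption) a1 a2 a3 u1 u2 v1 v2 (p3.s1.s2)


theorem g6 (g : GH A) (hW : Fintype.card W = 6) : ∃ p x y q1 q2 q3 : W,
    (∀ w, w = p ∨ w = x ∨ w = y ∨ w = q1 ∨ w = q2 ∨ w = q3) ∧ (p ≠ x ∧ p ≠ y ∧ x ≠ y) ∧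
    (q1 ≠ q2 ∧ q1 ≠ q3 ∧ q2 ≠ q3) ∧ (A q1 p ∧ A q1 x ∧ A q1 y) ∧ (A q2 p ∧ A q2 x ∧ A q2 y) ∧
    (A q3 p ∧ A q3 x ∧ A q3 y) := by
  have hne : Nonempty W := Fintype.card_pos_iff.1 (by omega)
  obtain ⟨p⟩ := hne
  obtain ⟨q1, a1, -, -⟩ := g.third p p p
  obtain ⟨q2, a2, n21, -⟩ := g.third p q1 q1
  obtain ⟨q3, a3, n31, n32⟩ := g.third p q1 q2
  have irr' : ∀ q, A p q → q ≠ p := fun q h e => g.irr p (e ▸ h)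
  have m1 := irr' _ a1
  have m2 := irr' _ a2
  have m3 := irr' _ a3
  have c4 : (({p, q1, q2, q3} : Finset W)ᶜ).card = 2 := by
    rw [card_compl, hW, card_insert_of_notMem, card_insert_of_notMem, card_insert_of_notMem, card_singleton] <;> simp [m1.symm, m2.symm, m3.symm, n21.symm, n31.symm, n32.symm]
  obtain ⟨x, y, nxy, hs⟩ := card_eq_two.1 c4
  have exh : ∀ w, w = p ∨ w = x ∨ w = y ∨ w = q1 ∨ w = q2 ∨ w = q3 := by
    intro w
    by_cases hw : w ∈ ({p, q1, q2, q3} : Finset W)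
    · simp only [mem_insert, mem_singleton] at hw
      rcases hw with h | h | h | h <;> simp only [h, true_or, or_true]
    · rw [← mem_compl, hs] at hw
      simp only [mem_insert, mem_singleton] at hw
      rcases hw with h | h <;> simp only [h, true_or, or_true]
  have out : ∀ w ∈ ({x, y} : Finset W), p ≠ w := by
    intro w hw
    rw [← hs, mem_compl] at hw
    simp only [mem_insert, mem_singleton, not_or] at hw
    exact Ne.symm hw.1
  have pr : ∀ q, A p q → A q p ∧ A q x ∧ A q y := by
    intro q hq
    refine g.all3 (fun w hw => ?_)
    rcases exh w with h | h | h | h | h | h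
    iterate 3 (simp only [h, true_or, or_true])
    · exact (g.tf _ _ _ hq (h ▸ hw) a1).elim
    · exact (g.tf _ _ _ hq (h ▸ hw) a2).elim
    · exact (g.tf _ _ _ hq (h ▸ hw) a3).elim
  exact ⟨p, x, y, q1, q2, q3, exh, ⟨out x (by simp), out y (by simp), nxy⟩,
    ⟨n21.symm, n31.symm, n32.symm⟩, pr _ a1, pr _ a2, pr _ a3⟩

theorem g8three (g : GH A) (h7 : N7 A) {p x y z q1 q2 q3 q4 : W} 
    (npx : p ≠ x) (npy : p ≠ y) (nxy : x ≠ y) (n12 : q1 ≠ q2) (n13 : q1 ≠ q3) (n23 : q2 ≠ q3)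
    (n14 : q1 ≠ q4) (n24 : q2 ≠ q4) (n34 : q3 ≠ q4)
    (a1 : A p q1) (a2 : A p q2) (a3 : A p q3) (a4 : A p q4) (b1 : A q1 x) (c1 : A q1 y)
    (b2 : A q2 x) (c2 : A q2 y) (b3 : A q3 x) (c3 : A q3 y) (h : Pr A q4 x y z) : False := by
  have sy := g.symm
  have key : A q4 x ∨ A q4 y := by
    rcases h with h | h | h
    exacts [Or.inl h.1, Or.inl h.1, Or.inr h.1]
  rcases key with k | k
  · exact h7 p x y q1 q2 q3 q4 npx npy nxy n12 n13 n14 n23 n24 n34 a1 a2 a3 a4 (sy _ _ b1)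
      (sy _ _ b2) (sy _ _ b3) (sy _ _ k) (sy _ _ c1) (sy _ _ c2) (sy _ _ c3)
  · exact h7 p y x q1 q2 q3 q4 npy npx nxy.symm n12 n13 n14 n23 n24 n34 a1 a2 a3 a4 (sy _ _ c1)
      (sy _ _ c2) (sy _ _ c3) (sy _ _ k) (sy _ _ b1) (sy _ _ b2) (sy _ _ b3)

theorem g8a (g : GH A) (h8a : N8a A) {p x y z q1 q2 q3 q4 : W} 
    (exh : ∀ w, w = p ∨ w = x ∨ w = y ∨ w = z ∨ w = q1 ∨ w = q2 ∨ w = q3 ∨ w = q4)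
    (npx : p ≠ x) (npy : p ≠ y) (nxy : x ≠ y) (n12 : q1 ≠ q2) (n13 : q1 ≠ q3) (n23 : q2 ≠ q3)
    (n14 : q1 ≠ q4) (n24 : q2 ≠ q4) (n34 : q3 ≠ q4) (nz4 : p ≠ z) (nz5 : x ≠ z) (nz6 : y ≠ z)
    (a1 : A p q1) (a2 : A p q2) (a3 : A p q3) (a4 : A p q4) (b1 : A q1 x) (c1 : A q1 y)
    (b2 : A q2 x) (c2 : A q2 y) (b3 : A q3 x) (c3 : A q3 z) (b4 : A q4 y) (c4 : A q4 z) :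
    False := by
  have sy := g.symm
  have tf := g.tf
  have key : A z q1 ∨ A z q2 := by
    obtain ⟨w, b, c, d⟩ := g.third z q3 q4
    rcases exh w with h | h | h | h | h | h | h | h <;> subst h
    · exact (tf _ _ _ a3 c3 (sy _ _ b)).elim
    · exact (tf _ _ _ b3 (sy _ _ b) c3).elim
    · exact (tf _ _ _ b4 (sy _ _ b) c4).elim
    · exact (g.irr _ b).elim
    · exact Or.inl b
    · exact Or.inr b
    · exact absurd rfl c
    · exact absurd rfl d
  rcases key with k | k
  · exact h8a x y z p q4 q3 q2 q1 nxy nz5 npx.symm nz6 npy.symm nz4.symm n34.symm n24.symm n14.symm n23.symm n13.symm n12.symm (sy _ _ b3) (sy _ _ b2) (sy _ _ b1) (sy _ _ b4) (sy _ _ c2) (sy _ _ c1) (sy _ _ c4) (sy _ _ c3) k a4 a3 a2 a1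
  · exact h8a x y z p q4 q3 q1 q2 nxy nz5 npx.symm nz6 npy.symm nz4.symm n34.symm n14.symm n24.symm n13.symm n23.symm n12 (sy _ _ b3) (sy _ _ b1) (sy _ _ b2) (sy _ _ b4) (sy _ _ c1) (sy _ _ c2) (sy _ _ c4) (sy _ _ c3) k a4 a3 a1 a2

theorem g8b (g : GH A) (h7 : N7 A) (h8b : N8b A) {p x y z q1 q2 q3 q4 : W} 
    (exh : ∀ w, w = p ∨ w = x ∨ w = y ∨ w = z ∨ w = q1 ∨ w = q2 ∨ w = q3 ∨ w = q4)
    (npx : p ≠ x) (npy : p ≠ y) (nxy : x ≠ y) (n12 : q1 ≠ q2) (n13 : q1 ≠ q3) (n23 : q2 ≠ q3)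
    (n14 : q1 ≠ q4) (n24 : q2 ≠ q4) (n34 : q3 ≠ q4) (nz4 : p ≠ z) (nz5 : x ≠ z) (nz6 : y ≠ z)
    (y3 : q3 ≠ y) (y4 : q4 ≠ y) (z1 : q1 ≠ z) (z2 : q2 ≠ z)
    (a1 : A p q1) (a2 : A p q2) (a3 : A p q3) (a4 : A p q4) (b1 : A q1 x) (c1 : A q1 y)
    (b2 : A q2 x) (c2 : A q2 y) (b3 : A q3 x) (c3 : A q3 z) (b4 : A q4 x) (c4 : A q4 z) :
    False := by
  have sy := g.symm
  have tf := g.tf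
  obtain ⟨w, b, c, d⟩ := g.third y q1 q2
  rcases exh w with h | h | h | h | h | h | h | h <;> subst h
  · exact (tf _ _ _ a1 c1 (sy _ _ b)).elim
  · exact (tf _ _ _ b1 (sy _ _ b) c1).elim
  · exact (g.irr _ b).elim
  · exact h8b p x q1 q2 q3 q4 y _ npx n12 n13 n14 n23 n24 n34 npy.symm nxy.symm nz4.symm nz5.symm y3.symm y4.symm z1.symm z2.symm a1 a2 a3 a4 (sy _ _ b1) (sy _ _ b2) (sy _ _ b3) (sy _ _ b4) (sy _ _ c1) (sy _ _ c2) (sy _ _ c3) (sy _ _ c4) b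
  · exact absurd rfl c
  · exact absurd rfl d
  · exact g8three g h7 npx npy nxy n12 n13 n23 n14 n24 n34 a1 a2 a3 a4 b1 c1 b2 c2 b3 (sy _ _ b) (Or.inr (Or.inl ⟨b4, c4⟩))
  · exact g8three g h7 npx npy nxy n12 n14 n24 n13 n23 n34.symm a1 a2 a4 a3 b1 c1 b2 c2 b4 (sy _ _ b) (Or.inr (Or.inl ⟨b3, c3⟩))

theorem g8two (g : GH A) (h7 : N7 A) (h8a : N8a A) (h8b : N8b A) {p x y z q1 q2 q3 q4 : W} 
    (exh : ∀ w, w = p ∨ w = x ∨ w = y ∨ w = z ∨ w = q1 ∨ w = q2 ∨ w = q3 ∨ w = q4)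
    (npx : p ≠ x) (npy : p ≠ y) (nxy : x ≠ y) (n12 : q1 ≠ q2) (n13 : q1 ≠ q3) (n23 : q2 ≠ q3)
    (n14 : q1 ≠ q4) (n24 : q2 ≠ q4) (n34 : q3 ≠ q4) (nz4 : p ≠ z) (nz5 : x ≠ z) (nz6 : y ≠ z)
    (y3 : q3 ≠ y) (y4 : q4 ≠ y) (z1 : q1 ≠ z) (z2 : q2 ≠ z) (x3 : q3 ≠ x) (x4 : q4 ≠ x)
    (a1 : A p q1) (a2 : A p q2) (a3 : A p q3) (a4 : A p q4) (b1 : A q1 x) (c1 : A q1 y)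
    (b2 : A q2 x) (c2 : A q2 y) (h3 : Pr A q3 x y z) (h4 : Pr A q4 x y z) : False := by
  have nyx := nxy.symm
  have n43 := n34.symm
  rcases id h3 with ⟨b3, c3⟩ | ⟨b3, c3⟩ | ⟨b3, c3⟩
  · exact g8three g h7 npx npy nxy n12 n13 n23 n14 n24 n34 a1 a2 a3 a4 b1 c1 b2 c2 b3 c3 h4
  · rcases id h4 with ⟨b4, c4⟩ | ⟨b4, c4⟩ | ⟨b4, c4⟩
    · exact g8three g h7 npx npy nxy n12 n14 n24 n13 n23 n43 a1 a2 a4 a3 b1 c1 b2 c2 b4 c4 h3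
    · exact g8b g h7 h8b exh npx npy nxy n12 n13 n23 n14 n24 n34 nz4 nz5 nz6 y3 y4 z1 z2 a1 a2 a3 a4 b1 c1 b2 c2 b3 c3 b4 c4
    · exact g8a g h8a exh npx npy nxy n12 n13 n23 n14 n24 n34 nz4 nz5 nz6 a1 a2 a3 a4 b1 c1 b2 c2 b3 c3 b4 c4
  · rcases id h4 with ⟨b4, c4⟩ | ⟨b4, c4⟩ | ⟨b4, c4⟩
    · exact g8three g h7 npx npy nxy n12 n14 n24 n13 n23 n43 a1 a2 a4 a3 b1 c1 b2 c2 b4 c4 h3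
    · exact g8a g h8a (q3 := q4) (q4 := q3) (x := x) (y := y) (z := z) (by intro w; rcases exh w with h | h | h | h | h | h | h | h <;> simp only [h, true_or, or_true]) npx npy nxy n12 n14 n24 n13 n23 n43 nz4 nz5 nz6 a1 a2 a4 a3 b1 c1 b2 c2 b4 c4 b3 c3
    · exact g8b g h7 h8b (x := y) (y := x) (z := z) (by intro w; rcases exh w with h | h | h | h | h | h | h | h <;> simp only [h, true_or, or_true]) npy npx nyx n12 n13 n23 n14 n24 n34 nz4 nz6 nz5 x3 x4 z1 z2 a1 a2 a3 a4 c1 b1 c2 b2 b3 c3 b4 c4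

theorem g8 (g : GH A) (h7 : N7 A) (h8a : N8a A) (h8b : N8b A) (hW : Fintype.card W = 8)
    (p : W) (hp : ∀ a b c, ∃ w, A p w ∧ w ≠ a ∧ w ≠ b ∧ w ≠ c) : False := by
  obtain ⟨q1, a1, -, -⟩ := g.third p p p
  obtain ⟨q2, a2, n21, -⟩ := g.third p q1 q1
  obtain ⟨q3, a3, n31, n32⟩ := g.third p q1 q2
  obtain ⟨q4, a4, n41, n42, n43⟩ := hp q1 q2 q3
  have irr' : ∀ q, A p q → q ≠ p := fun q h e => g.irr p (e ▸ h)
  have m1 := irr' _ a1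
  have m2 := irr' _ a2
  have m3 := irr' _ a3
  have m4 := irr' _ a4
  have c4 : (({p, q1, q2, q3, q4} : Finset W)ᶜ).card = 3 := by
    rw [card_compl, hW, card_insert_of_notMem, card_insert_of_notMem, card_insert_of_notMem, card_insert_of_notMem, card_singleton] <;> simp [m1.symm, m2.symm, m3.symm, n21.symm, n31.symm, n32.symm, m4.symm, n41.symm, n42.symm, n43.symm]
  obtain ⟨x, y, z, nxy, nxz, nyz, hs⟩ := card_eq_three.1 c4
  have exh : ∀ w, w = p ∨ w = x ∨ w = y ∨ w = z ∨ w = q1 ∨ w = q2 ∨ w = q3 ∨ w = q4 := by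
    intro w
    by_cases hw : w ∈ ({p, q1, q2, q3, q4} : Finset W)
    · simp only [mem_insert, mem_singleton] at hw
      rcases hw with h | h | h | h | h <;> simp only [h, true_or, or_true]
    · rw [← mem_compl, hs] at hw
      simp only [mem_insert, mem_singleton] at hw
      rcases hw with h | h | h <;> simp only [h, true_or, or_true]
  have out : ∀ w ∈ ({x, y, z} : Finset W), p ≠ w ∧ q1 ≠ w ∧ q2 ≠ w ∧ q3 ≠ w ∧ q4 ≠ w := by
    intro w hw
    rw [← hs, mem_compl] at hw
    simp only [mem_insert, mem_singleton, not_or] at hw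
    exact ⟨Ne.symm hw.1, Ne.symm hw.2.1, Ne.symm hw.2.2.1, Ne.symm hw.2.2.2.1, Ne.symm hw.2.2.2.2⟩
  obtain ⟨x1, x2, x3, x4, x5⟩ := out x (by simp)
  obtain ⟨y1, y2, y3, y4, y5⟩ := out y (by simp)
  obtain ⟨z1, z2, z3, z4, z5⟩ := out z (by simp)
  have n12 := n21.symm
  have n13 := n31.symm
  have n23 := n32.symm
  have n14 := n41.symm
  have n24 := n42.symm
  have n34 := n43.symm
  have nyx := nxy.symm
  have nzx := nxz.symm
  have nzy := nyz.symm
  have pr : ∀ q, A p q → Pr A q x y z := by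
    intro q hq
    refine g.pr (p := p) (fun w hw => ?_)
    rcases exh w with h | h | h | h | h | h | h | h
    iterate 4 (simp only [h, true_or, or_true])
    · exact (g.tf _ _ _ hq (h ▸ hw) a1).elim
    · exact (g.tf _ _ _ hq (h ▸ hw) a2).elim
    · exact (g.tf _ _ _ hq (h ▸ hw) a3).elim
    · exact (g.tf _ _ _ hq (h ▸ hw) a4).elim
  have p1 := pr _ a1
  have p2 := pr _ a2
  have p3 := pr _ a3
  have p4 := pr _ a4
  have T := @g8two W _ _ A g h7 h8a h8b p
  rcases id p1 with ⟨u1, v1⟩ | ⟨u1, v1⟩ | ⟨u1, v1⟩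
  · skip
    rcases id p2 with ⟨u2, v2⟩ | ⟨u2, v2⟩ | ⟨u2, v2⟩
    · exact T (x := x) (y := y) (z := z) (q1 := q1) (q2 := q2) (q3 := q3) (q4 := q4) (by intro w; rcases exh w with h | h | h | h | h | h | h | h <;> simp only [h, true_or, or_true]) (by assumption) (by assumption) (by assumption) (by assumption) (by assumption) (by assumption) (by assumption) (by assumption) (by assumption) (by assumption) (by assumption) (by assumption) (by assumption) (by assumption) (by assumption) (by assumption) (by assumption) (by assumption) a1 a2 a3 a4 u1 v1 u2 v2 (p3) (p4)
    · skip
      rcases id p3 with ⟨u3, v3⟩ | ⟨u3, v3⟩ | ⟨u3, v3⟩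
      · exact T (x := x) (y := y) (z := z) (q1 := q1) (q2 := q3) (q3 := q2) (q4 := q4) (by intro w; rcases exh w with h | h | h | h | h | h | h | h <;> simp only [h, true_or, or_true]) (by assumption) (by assumption) (by assumption) (by assumption) (by assumption) (by assumption) (by assumption) (by assumption) (by assumption) (by assumption) (by assumption) (by assumption) (by assumption) (by assumption) (by assumption) (by assumption) (by assumption) (by assumption) a1 a3 a2 a4 u1 v1 u3 v3 (p2) (p4)
      · exact T (x := x) (y := z) (z := y) (q1 := q2) (q2 := q3) (q3 := q1) (q4 := q4) (by intro w; rcases exh w with h | h | h | h | h | h | h | h <;> simp only [h, true_or, or_true]) (by assumption) (by assumption) (by assumption) (by assumption) (by assumption) (by assumption) (by assumption) (by assumption) (by assumption) (by assumption) (by assumption) (by assumption) (by assumption) (by assumption) (by assumption) (by assumption) (by assumption) (by assumption) a2 a3 a1 a4 u2 v2 u3 v3 (p1.s2) (p4.s2)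
      · skip
        rcases id p4 with ⟨u4, v4⟩ | ⟨u4, v4⟩ | ⟨u4, v4⟩
        · exact T (x := x) (y := y) (z := z) (q1 := q1) (q2 := q4) (q3 := q2) (q4 := q3) (by intro w; rcases exh w with h | h | h | h | h | h | h | h <;> simp only [h, true_or, or_true]) (by assumption) (by assumption) (by assumption) (by assumption) (by assumption) (by assumption) (by assumption) (by assumption) (by assumption) (by assumption) (by assumption) (by assumption) (by assumption) (by assumption) (by assumption) (by assumption) (by assumption) (by assumption) a1 a4 a2 a3 u1 v1 u4 v4 (p2) (p3)
        · exact T (x := x) (y := z) (z := y) (q1 := q2) (q2 := q4) (q3 := q1) (q4 := q3) (by intro w; rcases exh w with h | h | h | h | h | h | h | h <;> simp only [h, true_or, or_true]) (by assumption) (by assumption) (by assumption) (by assumption) (by assumption) (by assumption) (by assumption) (by assumption) (by assumption) (by assumption) (by assumption) (by assumption) (by assumption) (by assumption) (by assumption) (by assumption) (by assumption) (by assumption) a2 a4 a1 a3 u2 v2 u4 v4 (p1.s2) (p3.s2)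
        · exact T (x := y) (y := z) (z := x) (q1 := q3) (q2 := q4) (q3 := q1) (q4 := q2) (by intro w; rcases exh w with h | h | h | h | h | h | h | h <;> simp only [h, true_or, or_true]) (by assumption) (by assumption) (by assumption) (by assumption) (by assumption) (by assumption) (by assumption) (by assumption) (by assumption) (by assumption) (by assumption) (by assumption) (by assumption) (by assumption) (by assumption) (by assumption) (by assumption) (by assumption) a3 a4 a1 a2 u3 v3 u4 v4 (p1.s1.s2) (p2.s1.s2)
    · skip
      rcases id p3 with ⟨u3, v3⟩ | ⟨u3, v3⟩ | ⟨u3, v3⟩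
      · exact T (x := x) (y := y) (z := z) (q1 := q1) (q2 := q3) (q3 := q2) (q4 := q4) (by intro w; rcases exh w with h | h | h | h | h | h | h | h <;> simp only [h, true_or, or_true]) (by assumption) (by assumption) (by assumption) (by assumption) (by assumption) (by assumption) (by assumption) (by assumption) (by assumption) (by assumption) (by assumption) (by assumption) (by assumption) (by assumption) (by assumption) (by assumption) (by assumption) (by assumption) a1 a3 a2 a4 u1 v1 u3 v3 (p2) (p4)
      · skip
        rcases id p4 with ⟨u4, v4⟩ | ⟨u4, v4⟩ | ⟨u4, v4⟩
        · exact T (x := x) (y := y) (z := z) (q1 := q1) (q2 := q4) (q3 := q2) (q4 := q3) (by intro w; rcases exh w with h | h | h | h | h | h | h | h <;> simp only [h, true_or, or_true]) (by assumption) (by assumption) (by assumption) (by assumption) (by assumption) (by assumption) (by assumption) (by assumption) (by assumption) (by assumption) (by assumption) (by assumption) (by assumption) (by assumption) (by assumption) (by assumption) (by assumption) (by assumption) a1 a4 a2 a3 u1 v1 u4 v4 (p2) (p3)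
        · exact T (x := x) (y := z) (z := y) (q1 := q3) (q2 := q4) (q3 := q1) (q4 := q2) (by intro w; rcases exh w with h | h | h | h | h | h | h | h <;> simp only [h, true_or, or_true]) (by assumption) (by assumption) (by assumption) (by assumption) (by assumption) (by assumption) (by assumption) (by assumption) (by assumption) (by assumption) (by assumption) (by assumption) (by assumption) (by assumption) (by assumption) (by assumption) (by assumption) (by assumption) a3 a4 a1 a2 u3 v3 u4 v4 (p1.s2) (p2.s2)
        · exact T (x := y) (y := z) (z := x) (q1 := q2) (q2 := q4) (q3 := q1) (q4 := q3) (by intro w; rcases exh w with h | h | h | h | h | h | h | h <;> simp only [h, true_or, or_true]) (by assumption) (by assumption) (by assumption) (by assumption) (by assumption) (by assumption) (by assumption) (by assumption) (by assumption) (by assumption) (by assumption) (by assumption) (by assumption) (by assumption) (by assumption) (by assumption) (by assumption) (by assumption) a2 a4 a1 a3 u2 v2 u4 v4 (p1.s1.s2) (p3.s1.s2)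
      · exact T (x := y) (y := z) (z := x) (q1 := q2) (q2 := q3) (q3 := q1) (q4 := q4) (by intro w; rcases exh w with h | h | h | h | h | h | h | h <;> simp only [h, true_or, or_true]) (by assumption) (by assumption) (by assumption) (by assumption) (by assumption) (by assumption) (by assumption) (by assumption) (by assumption) (by assumption) (by assumption) (by assumption) (by assumption) (by assumption) (by assumption) (by assumption) (by assumption) (by assumption) a2 a3 a1 a4 u2 v2 u3 v3 (p1.s1.s2) (p4.s1.s2)
  · skip
    rcases id p2 with ⟨u2, v2⟩ | ⟨u2, v2⟩ | ⟨u2, v2⟩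
    · skip
      rcases id p3 with ⟨u3, v3⟩ | ⟨u3, v3⟩ | ⟨u3, v3⟩
      · exact T (x := x) (y := y) (z := z) (q1 := q2) (q2 := q3) (q3 := q1) (q4 := q4) (by intro w; rcases exh w with h | h | h | h | h | h | h | h <;> simp only [h, true_or, or_true]) (by assumption) (by assumption) (by assumption) (by assumption) (by assumption) (by assumption) (by assumption) (by assumption) (by assumption) (by assumption) (by assumption) (by assumption) (by assumption) (by assumption) (by assumption) (by assumption) (by assumption) (by assumption) a2 a3 a1 a4 u2 v2 u3 v3 (p1) (p4)
      · exact T (x := x) (y := z) (z := y) (q1 := q1) (q2 := q3) (q3 := q2) (q4 := q4) (by intro w; rcases exh w with h | h | h | h | h | h | h | h <;> simp only [h, true_or, or_true]) (by assumption) (by assumption) (by assumption) (by assumption) (by assumption) (by assumption) (by assumption) (by assumption) (by assumption) (by assumption) (by assumption) (by assumption) (by assumption) (by assumption) (by assumption) (by assumption) (by assumption) (by assumption) a1 a3 a2 a4 u1 v1 u3 v3 (p2.s2) (p4.s2)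
      · skip
        rcases id p4 with ⟨u4, v4⟩ | ⟨u4, v4⟩ | ⟨u4, v4⟩
        · exact T (x := x) (y := y) (z := z) (q1 := q2) (q2 := q4) (q3 := q1) (q4 := q3) (by intro w; rcases exh w with h | h | h | h | h | h | h | h <;> simp only [h, true_or, or_true]) (by assumption) (by assumption) (by assumption) (by assumption) (by assumption) (by assumption) (by assumption) (by assumption) (by assumption) (by assumption) (by assumption) (by assumption) (by assumption) (by assumption) (by assumption) (by assumption) (by assumption) (by assumption) a2 a4 a1 a3 u2 v2 u4 v4 (p1) (p3)
        · exact T (x := x) (y := z) (z := y) (q1 := q1) (q2 := q4) (q3 := q2) (q4 := q3) (by intro w; rcases exh w with h | h | h | h | h | h | h | h <;> simp only [h, true_or, or_true]) (by assumption) (by assumption) (by assumption) (by assumption) (by assumption) (by assumption) (by assumption) (by assumption) (by assumption) (by assumption) (by assumption) (by assumption) (by assumption) (by assumption) (by assumption) (by assumption) (by assumption) (by assumption) a1 a4 a2 a3 u1 v1 u4 v4 (p2.s2) (p3.s2)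
        · exact T (x := y) (y := z) (z := x) (q1 := q3) (q2 := q4) (q3 := q1) (q4 := q2) (by intro w; rcases exh w with h | h | h | h | h | h | h | h <;> simp only [h, true_or, or_true]) (by assumption) (by assumption) (by assumption) (by assumption) (by assumption) (by assumption) (by assumption) (by assumption) (by assumption) (by assumption) (by assumption) (by assumption) (by assumption) (by assumption) (by assumption) (by assumption) (by assumption) (by assumption) a3 a4 a1 a2 u3 v3 u4 v4 (p1.s1.s2) (p2.s1.s2)
    · exact T (x := x) (y := z) (z := y) (q1 := q1) (q2 := q2) (q3 := q3) (q4 := q4) (by intro w; rcases exh w with h | h | h | h | h | h | h | h <;> simp only [h, true_or, or_true]) (by assumption) (by assumption) (by assumption) (by assumption) (by assumption) (by assumption) (by assumption) (by assumption) (by assumption) (by assumption) (by assumption) (by assumption) (by assumption) (by assumption) (by assumption) (by assumption) (by assumption) (by assumption) a1 a2 a3 a4 u1 v1 u2 v2 (p3.s2) (p4.s2)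
    · skip
      rcases id p3 with ⟨u3, v3⟩ | ⟨u3, v3⟩ | ⟨u3, v3⟩
      · skip
        rcases id p4 with ⟨u4, v4⟩ | ⟨u4, v4⟩ | ⟨u4, v4⟩
        · exact T (x := x) (y := y) (z := z) (q1 := q3) (q2 := q4) (q3 := q1) (q4 := q2) (by intro w; rcases exh w with h | h | h | h | h | h | h | h <;> simp only [h, true_or, or_true]) (by assumption) (by assumption) (by assumption) (by assumption) (by assumption) (by assumption) (by assumption) (by assumption) (by assumption) (by assumption) (by assumption) (by assumption) (by assumption) (by assumption) (by assumption) (by assumption) (by assumption) (by assumption) a3 a4 a1 a2 u3 v3 u4 v4 (p1) (p2)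
        · exact T (x := x) (y := z) (z := y) (q1 := q1) (q2 := q4) (q3 := q2) (q4 := q3) (by intro w; rcases exh w with h | h | h | h | h | h | h | h <;> simp only [h, true_or, or_true]) (by assumption) (by assumption) (by assumption) (by assumption) (by assumption) (by assumption) (by assumption) (by assumption) (by assumption) (by assumption) (by assumption) (by assumption) (by assumption) (by assumption) (by assumption) (by assumption) (by assumption) (by assumption) a1 a4 a2 a3 u1 v1 u4 v4 (p2.s2) (p3.s2)
        · exact T (x := y) (y := z) (z := x) (q1 := q2) (q2 := q4) (q3 := q1) (q4 := q3) (by intro w; rcases exh w with h | h | h | h | h | h | h | h <;> simp only [h, true_or, or_true]) (by assumption) (by assumption) (by assumption) (by assumption) (by assumption) (by assumption) (by assumption) (by assumption) (by assumption) (by assumption) (by assumption) (by assumption) (by assumption) (by assumption) (by assumption) (by assumption) (by assumption) (by assumption) a2 a4 a1 a3 u2 v2 u4 v4 (p1.s1.s2) (p3.s1.s2)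
      · exact T (x := x) (y := z) (z := y) (q1 := q1) (q2 := q3) (q3 := q2) (q4 := q4) (by intro w; rcases exh w with h | h | h | h | h | h | h | h <;> simp only [h, true_or, or_true]) (by assumption) (by assumption) (by assumption) (by assumption) (by assumption) (by assumption) (by assumption) (by assumption) (by assumption) (by assumption) (by assumption) (by assumption) (by assumption) (by assumption) (by assumption) (by assumption) (by assumption) (by assumption) a1 a3 a2 a4 u1 v1 u3 v3 (p2.s2) (p4.s2)
      · exact T (x := y) (y := z) (z := x) (q1 := q2) (q2 := q3) (q3 := q1) (q4 := q4) (by intro w; rcases exh w with h | h | h | h | h | h | h | h <;> simp only [h, true_or, or_true]) (by assumption) (by assumption) (by assumption) (by assumption) (by assumption) (by assumption) (by assumption) (by assumption) (by assumption) (by assumption) (by assumption) (by assumption) (by assumption) (by assumption) (by assumption) (by assumption) (by assumption) (by assumption) a2 a3 a1 a4 u2 v2 u3 v3 (p1.s1.s2) (p4.s1.s2)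
  · skip
    rcases id p2 with ⟨u2, v2⟩ | ⟨u2, v2⟩ | ⟨u2, v2⟩
    · skip
      rcases id p3 with ⟨u3, v3⟩ | ⟨u3, v3⟩ | ⟨u3, v3⟩
      · exact T (x := x) (y := y) (z := z) (q1 := q2) (q2 := q3) (q3 := q1) (q4 := q4) (by intro w; rcases exh w with h | h | h | h | h | h | h | h <;> simp only [h, true_or, or_true]) (by assumption) (by assumption) (by assumption) (by assumption) (by assumption) (by assumption) (by assumption) (by assumption) (by assumption) (by assumption) (by assumption) (by assumption) (by assumption) (by assumption) (by assumption) (by assumption) (by assumption) (by assumption) a2 a3 a1 a4 u2 v2 u3 v3 (p1) (p4)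
      · skip
        rcases id p4 with ⟨u4, v4⟩ | ⟨u4, v4⟩ | ⟨u4, v4⟩
        · exact T (x := x) (y := y) (z := z) (q1 := q2) (q2 := q4) (q3 := q1) (q4 := q3) (by intro w; rcases exh w with h | h | h | h | h | h | h | h <;> simp only [h, true_or, or_true]) (by assumption) (by assumption) (by assumption) (by assumption) (by assumption) (by assumption) (by assumption) (by assumption) (by assumption) (by assumption) (by assumption) (by assumption) (by assumption) (by assumption) (by assumption) (by assumption) (by assumption) (by assumption) a2 a4 a1 a3 u2 v2 u4 v4 (p1) (p3)
        · exact T (x := x) (y := z) (z := y) (q1 := q3) (q2 := q4) (q3 := q1) (q4 := q2) (by intro w; rcases exh w with h | h | h | h | h | h | h | h <;> simp only [h, true_or, or_true]) (by assumption) (by assumption) (by assumption) (by assumption) (by assumption) (by assumption) (by assumption) (by assumption) (by assumption) (by assumption) (by assumption) (by assumption) (by assumption) (by assumption) (by assumption) (by assumption) (by assumption) (by assumption) a3 a4 a1 a2 u3 v3 u4 v4 (p1.s2) (p2.s2)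
        · exact T (x := y) (y := z) (z := x) (q1 := q1) (q2 := q4) (q3 := q2) (q4 := q3) (by intro w; rcases exh w with h | h | h | h | h | h | h | h <;> simp only [h, true_or, or_true]) (by assumption) (by assumption) (by assumption) (by assumption) (by assumption) (by assumption) (by assumption) (by assumption) (by assumption) (by assumption) (by assumption) (by assumption) (by assumption) (by assumption) (by assumption) (by assumption) (by assumption) (by assumption) a1 a4 a2 a3 u1 v1 u4 v4 (p2.s1.s2) (p3.s1.s2)
      · exact T (x := y) (y := z) (z := x) (q1 := q1) (q2 := q3) (q3 := q2) (q4 := q4) (by intro w; rcases exh w with h | h | h | h | h | h | h | h <;> simp only [h, true_or, or_true]) (by assumption) (by assumption) (by assumption) (by assumption) (by assumption) (by assumption) (by assumption) (by assumption) (by assumption) (by assumption) (by assumption) (by assumption) (by assumption) (by assumption) (by assumption) (by assumption) (by assumption) (by assumption) a1 a3 a2 a4 u1 v1 u3 v3 (p2.s1.s2) (p4.s1.s2)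
    · skip
      rcases id p3 with ⟨u3, v3⟩ | ⟨u3, v3⟩ | ⟨u3, v3⟩
      · skip
        rcases id p4 with ⟨u4, v4⟩ | ⟨u4, v4⟩ | ⟨u4, v4⟩
        · exact T (x := x) (y := y) (z := z) (q1 := q3) (q2 := q4) (q3 := q1) (q4 := q2) (by intro w; rcases exh w with h | h | h | h | h | h | h | h <;> simp only [h, true_or, or_true]) (by assumption) (by assumption) (by assumption) (by assumption) (by assumption) (by assumption) (by assumption) (by assumption) (by assumption) (by assumption) (by assumption) (by assumption) (by assumption) (by assumption) (by assumption) (by assumption) (by assumption) (by assumption) a3 a4 a1 a2 u3 v3 u4 v4 (p1) (p2)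
        · exact T (x := x) (y := z) (z := y) (q1 := q2) (q2 := q4) (q3 := q1) (q4 := q3) (by intro w; rcases exh w with h | h | h | h | h | h | h | h <;> simp only [h, true_or, or_true]) (by assumption) (by assumption) (by assumption) (by assumption) (by assumption) (by assumption) (by assumption) (by assumption) (by assumption) (by assumption) (by assumption) (by assumption) (by assumption) (by assumption) (by assumption) (by assumption) (by assumption) (by assumption) a2 a4 a1 a3 u2 v2 u4 v4 (p1.s2) (p3.s2)
        · exact T (x := y) (y := z) (z := x) (q1 := q1) (q2 := q4) (q3 := q2) (q4 := q3) (by intro w; rcases exh w with h | h | h | h | h | h | h | h <;> simp only [h, true_or, or_true]) (by assumption) (by assumption) (by assumption) (by assumption) (by assumption) (by assumption) (by assumption) (by assumption) (by assumption) (by assumption) (by assumption) (by assumption) (by assumption) (by assumption) (by assumption) (by assumption) (by assumption) (by assumption) a1 a4 a2 a3 u1 v1 u4 v4 (p2.s1.s2) (p3.s1.s2)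
      · exact T (x := x) (y := z) (z := y) (q1 := q2) (q2 := q3) (q3 := q1) (q4 := q4) (by intro w; rcases exh w with h | h | h | h | h | h | h | h <;> simp only [h, true_or, or_true]) (by assumption) (by assumption) (by assumption) (by assumption) (by assumption) (by assumption) (by assumption) (by assumption) (by assumption) (by assumption) (by assumption) (by assumption) (by assumption) (by assumption) (by assumption) (by assumption) (by assumption) (by assumption) a2 a3 a1 a4 u2 v2 u3 v3 (p1.s2) (p4.s2)
      · exact T (x := y) (y := z) (z := x) (q1 := q1) (q2 := q3) (q3 := q2) (q4 := q4) (by intro w; rcases exh w with h | h | h | h | h | h | h | h <;> simp only [h, true_or, or_true]) (by assumption) (by assumption) (by assumption) (by assumption) (by assumption) (by assumption) (by assumption) (by assumption) (by assumption) (by assumption) (by assumption) (by assumption) (by assumption) (by assumption) (by assumption) (by assumption) (by assumption) (by assumption) a1 a3 a2 a4 u1 v1 u3 v3 (p2.s1.s2) (p4.s1.s2)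
    · exact T (x := y) (y := z) (z := x) (q1 := q1) (q2 := q2) (q3 := q3) (q4 := q4) (by intro w; rcases exh w with h | h | h | h | h | h | h | h <;> simp only [h, true_or, or_true]) (by assumption) (by assumption) (by assumption) (by assumption) (by assumption) (by assumption) (by assumption) (by assumption) (by assumption) (by assumption) (by assumption) (by assumption) (by assumption) (by assumption) (by assumption) (by assumption) (by assumption) (by assumption) a1 a2 a3 a4 u1 v1 u2 v2 (p3.s1.s2) (p4.s1.s2)

end graph


section bridge
variable {P V : Type*} [DecidableEq P] [DecidableEq V] {r : ℕ}

def X7 (l : Fin r → P → V) : Prop := ∀ u1 u2 u3 v1 v2 v3 v4 : P, NA l u1 u2 → NA l u1 u3 → NA l u2 u3 →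
  NA l v1 v2 → NA l v1 v3 → NA l v1 v4 → NA l v2 v3 → NA l v2 v4 → NA l v3 v4 →
  Ad l u1 v1 → Ad l u1 v2 → Ad l u1 v3 → Ad l u1 v4 → Ad l u2 v1 → Ad l u2 v2 → Ad l u2 v3 → Ad l u2 v4 →
  Ad l u3 v1 → Ad l u3 v2 → Ad l u3 v3 → False

def X8a (l : Fin r → P → V) : Prop := ∀ u1 u2 u3 u4 v1 v2 v3 v4 : P,
  NA l u1 u2 → NA l u1 u3 → NA l u1 u4 → NA l u2 u3 → NA l u2 u4 → NA l u3 u4 →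
  NA l v1 v2 → NA l v1 v3 → NA l v1 v4 → NA l v2 v3 → NA l v2 v4 → NA l v3 v4 →
  Ad l u1 v2 → Ad l u1 v3 → Ad l u1 v4 → Ad l u2 v1 → Ad l u2 v3 → Ad l u2 v4 →
  Ad l u3 v1 → Ad l u3 v2 → Ad l u3 v4 → Ad l u4 v1 → Ad l u4 v2 → Ad l u4 v3 → Ad l u4 v4 → False

def X8b (l : Fin r → P → V) : Prop := ∀ u u' v1 v2 v3 v4 e d : P,
  NA l u u' → NA l v1 v2 → NA l v1 v3 → NA l v1 v4 → NA l v2 v3 → NA l v2 v4 → NA l v3 v4 →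
  NA l e u → NA l e u' → NA l d u → NA l d u' → NA l e v3 → NA l e v4 → NA l d v1 → NA l d v2 →
  Ad l u v1 → Ad l u v2 → Ad l u v3 → Ad l u v4 → Ad l u' v1 → Ad l u' v2 → Ad l u' v3 → Ad l u' v4 →
  Ad l e v1 → Ad l e v2 → Ad l d v3 → Ad l d v4 → Ad l e d → False

abbrev AS (l : Fin r → P → V) (S : Finset P) : {x // x ∈ S} → {x // x ∈ S} → Prop :=
  fun a b => Ad l a.1 b.1

theorem mkGH {l : Fin r → P → V} (hl : Lin l) (S : Finset P) (hS : S.card ≤ 8)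
    (hd : ∀ p ∈ S, 3 ≤ (dTimes l S p).card) : GH (AS l S) where
  symm := fun p q h => Ad.symm h
  irr := fun p h => h.1 rfl
  tf := fun p q s h1 h2 h3 => no_tri hl S hS hd p.2 q.2 s.2 h1 h2 h3
  third := by
    intro z a b
    have h := (hd z z.2).trans (times_le_nb hl S z)
    have h2 : 0 < (((nb l S z.1).erase a.1).erase b.1).card := by
      have := pred_card_le_card_erase (s := (nb l S z.1).erase a.1) (a := b.1)
      have := pred_card_le_card_erase (s := (nb l S z.1)) (a := a.1)
      omega
    obtain ⟨w, hw⟩ := card_pos.1 h2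
    obtain ⟨hb, hw⟩ := mem_erase.1 hw
    obtain ⟨ha, hw⟩ := mem_erase.1 hw
    obtain ⟨hS, hA⟩ := mem_nb.1 hw
    exact ⟨⟨w, hS⟩, hA, fun e => ha (congrArg Subtype.val e), fun e => hb (congrArg Subtype.val e)⟩

theorem GH.na {l : Fin r → P → V} {S : Finset P} (g : GH (AS l S)) {p q s : {x // x ∈ S}}
    (h : p ≠ q) (h1 : AS l S p s) (h2 : AS l S q s) : NA l p.1 q.1 :=
  fun t e => g.tf p q s ⟨fun e => h (Subtype.ext e), t, e⟩ h2 h1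

theorem N7_of {l : Fin r → P → V} {S : Finset P} (g : GH (AS l S)) (h : X7 l) : N7 (AS l S) := by
  intro u1 u2 u3 v1 v2 v3 v4 n1 n2 n3 m1 m2 m3 m4 m5 m6 a11 a12 a13 a14 a21 a22 a23 a24 a31 a32 a33
  have sy := g.symm
  exact h u1 u2 u3 v1 v2 v3 v4 (g.na n1 a11 a21) (g.na n2 a11 a31) (g.na n3 a21 a31)
    (g.na m1 (sy _ _ a11) (sy _ _ a12)) (g.na m2 (sy _ _ a11) (sy _ _ a13))
    (g.na m3 (sy _ _ a11) (sy _ _ a14)) (g.na m4 (sy _ _ a12) (sy _ _ a13))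
    (g.na m5 (sy _ _ a12) (sy _ _ a14)) (g.na m6 (sy _ _ a13) (sy _ _ a14))
    a11 a12 a13 a14 a21 a22 a23 a24 a31 a32 a33

theorem N8a_of {l : Fin r → P → V} {S : Finset P} (g : GH (AS l S)) (h : X8a l) : N8a (AS l S) := by
  intro u1 u2 u3 u4 v1 v2 v3 v4 n1 n2 n3 n4 n5 n6 m1 m2 m3 m4 m5 m6 a12 a13 a14 a21 a23 a24 a31 a32 a34 a41 a42 a43 a44
  have sy := g.symm
  exact h u1 u2 u3 u4 v1 v2 v3 v4 (g.na n1 a14 a24) (g.na n2 a14 a34) (g.na n3 a14 a44)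
    (g.na n4 a24 a34) (g.na n5 a24 a44) (g.na n6 a34 a44)
    (g.na m1 (sy _ _ a41) (sy _ _ a42)) (g.na m2 (sy _ _ a41) (sy _ _ a43))
    (g.na m3 (sy _ _ a41) (sy _ _ a44)) (g.na m4 (sy _ _ a42) (sy _ _ a43))
    (g.na m5 (sy _ _ a42) (sy _ _ a44)) (g.na m6 (sy _ _ a43) (sy _ _ a44))
    a12 a13 a14 a21 a23 a24 a31 a32 a34 a41 a42 a43 a44

theorem N8b_of {l : Fin r → P → V} {S : Finset P} (g : GH (AS l S)) (h : X8b l) : N8b (AS l S) := by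
  intro u u' v1 v2 v3 v4 e d n0 m1 m2 m3 m4 m5 m6 e1 e2 d1 d2 e3 e4 d3 d4
    a1 a2 a3 a4 b1 b2 b3 b4 c1 c2 c3 c4 f
  have sy := g.symm
  exact h u u' v1 v2 v3 v4 e d (g.na n0 a1 b1)
    (g.na m1 (sy _ _ a1) (sy _ _ a2)) (g.na m2 (sy _ _ a1) (sy _ _ a3))
    (g.na m3 (sy _ _ a1) (sy _ _ a4)) (g.na m4 (sy _ _ a2) (sy _ _ a3))
    (g.na m5 (sy _ _ a2) (sy _ _ a4)) (g.na m6 (sy _ _ a3) (sy _ _ a4))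
    (g.na e1 c1 a1) (g.na e2 c1 b1) (g.na d1 c3 a3) (g.na d2 c3 b3)
    (g.na e3 f (sy _ _ c3)) (g.na e4 f (sy _ _ c4))
    (g.na d3 (sy _ _ f) (sy _ _ c1)) (g.na d4 (sy _ _ f) (sy _ _ c2))
    a1 a2 a3 a4 b1 b2 b3 b4 c1 c2 c3 c4 f

theorem nb_lt (l : Fin r → P → V) (S : Finset P) (p : P) (hp : p ∈ S) : (nb l S p).card < S.card := by
  refine card_lt_card ⟨fun x hx => (mem_nb.1 hx).1, fun h => ?_⟩
  exact (mem_nb.1 (h hp)).2.1 rfl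

theorem sav1 (l : Fin r → P → V) (S : Finset P) (hS : S.card ≤ 1) : sav l S = 0 := by
  unfold sav
  refine sum_eq_zero fun i _ => ?_
  rcases Finset.eq_empty_or_nonempty S with h | h
  · simp [h]
  · have := card_pos.2 (h.image (l i))
    omega

theorem sav2 {l : Fin r → P → V} (hl : Lin l) (S : Finset P) (hS : S.card = 2) : sav l S ≤ 1 := by
  obtain ⟨p, hp⟩ := card_pos.1 (by omega : 0 < S.card)
  have h1 := sav_erase l S p hp
  have h2 := sav1 l (S.erase p) (by rw [card_erase_of_mem hp]; omega)
  have h3 := times_le_nb hl S p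
  have h4 := nb_lt l S p hp
  omega

theorem sav3 {l : Fin r → P → V} (hl : Lin l) (S : Finset P) (hS : S.card = 3) : sav l S ≤ 2 := by
  by_contra hcon
  have hd : ∀ p ∈ S, 2 ≤ (dTimes l S p).card := by
    intro p hp
    have h1 := sav_erase l S p hp
    have h2 := sav2 hl (S.erase p) (by rw [card_erase_of_mem hp]; omega)
    omega
  have had : ∀ p ∈ S, ∀ q ∈ S, p ≠ q → Ad l p q := by
    intro p hp q hq hpq
    have h1 : nb l S p ⊆ S.erase p := fun x hx =>
      mem_erase.2 ⟨(mem_nb.1 hx).2.1.symm, (mem_nb.1 hx).1⟩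
    have h2 := (hd p hp).trans (times_le_nb hl S p)
    have h3 : nb l S p = S.erase p := eq_of_subset_of_card_le h1 (by rw [card_erase_of_mem hp]; omega)
    have : q ∈ nb l S p := by rw [h3]; exact mem_erase.2 ⟨hpq.symm, hq⟩
    exact (mem_nb.1 this).2
  obtain ⟨p, q, s, n1, n2, n3, rfl⟩ := card_eq_three.1 hS
  obtain ⟨-, i, ei⟩ := had p (by simp) q (by simp) n1
  obtain ⟨-, j, ej⟩ := had q (by simp) s (by simp) n3
  obtain ⟨-, k, ek⟩ := had p (by simp) s (by simp) n2
  obtain ⟨rfl, rfl⟩ := hl.tri3 n1 n3 n2 ei ej ek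
  have : dTimes l {p, q, s} p ⊆ {k} := by
    intro t ht
    obtain ⟨-, w, hw, hwp, e⟩ := mem_filter.1 ht
    rw [mem_singleton]
    simp only [mem_insert, mem_singleton] at hw
    rcases hw with rfl | rfl | rfl
    · exact absurd rfl hwp
    · exact hl.lin _ _ _ _ n1 e.symm ei
    · exact hl.lin _ _ _ _ n2 e.symm ek
  have h1 := card_le_card this
  have h2 := hd p (by simp)
  rw [card_singleton] at h1
  omega

theorem g45 {W : Type*} [Fintype W] [DecidableEq W] {A : W → W → Prop} (g : GH A)
    (hW : Fintype.card W ≤ 5) (p : W) : False := by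
  obtain ⟨q1, a1, -, -⟩ := g.third p p p
  obtain ⟨q2, a2, n21, -⟩ := g.third p q1 q1
  obtain ⟨q3, a3, n31, n32⟩ := g.third p q1 q2
  obtain ⟨w1, b1, -, -⟩ := g.third q1 p p
  obtain ⟨w2, b2, m21, -⟩ := g.third q1 w1 w1
  obtain ⟨w3, b3, m31, m32⟩ := g.third q1 w1 w2
  have k : ∀ w, A q1 w → w ≠ q1 ∧ w ≠ q2 ∧ w ≠ q3 := by
    intro w hw
    refine ⟨?_, ?_, ?_⟩ <;> rintro rfl
    · exact g.irr _ hw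
    · exact g.tf _ _ _ a1 hw a2
    · exact g.tf _ _ _ a1 hw a3
  have k1 := k _ b1
  have k2 := k _ b2
  have k3 := k _ b3
  have : ({w1, w2, w3, q1, q2, q3} : Finset W).card = 6 := by
    rw [card_insert_of_notMem, card_insert_of_notMem, card_insert_of_notMem, card_insert_of_notMem, card_insert_of_notMem, card_singleton] <;>
    simp [k1, k2, k3, m21.symm, m31.symm, m32.symm, n21.symm, n31.symm, n32.symm]
  have := card_le_univ ({w1, w2, w3, q1, q2, q3} : Finset W)
  omega

theorem exLow {l : Fin r → P → V} (hl : Lin l) (S : Finset P) (hS : S.card ≤ 5) (h0 : 0 < S.card) :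
    ∃ p ∈ S, (dTimes l S p).card ≤ 2 := by
  by_contra hcon
  push Not at hcon
  obtain ⟨p, hp⟩ := card_pos.1 h0
  exact g45 (mkGH hl S (by omega) (fun p hp => hcon p hp)) (by rw [Fintype.card_coe]; omega) ⟨p, hp⟩

theorem sav4 {l : Fin r → P → V} (hl : Lin l) (S : Finset P) (hS : S.card = 4) : sav l S ≤ 4 := by
  obtain ⟨p, hp, h⟩ := exLow hl S (by omega) (by omega)
  have h1 := sav_erase l S p hp
  have h2 := sav3 hl (S.erase p) (by rw [card_erase_of_mem hp]; omega)
  omega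

theorem sav5 {l : Fin r → P → V} (hl : Lin l) (S : Finset P) (hS : S.card = 5) : sav l S ≤ 6 := by
  obtain ⟨p, hp, h⟩ := exLow hl S (by omega) (by omega)
  have h1 := sav_erase l S p hp
  have h2 := sav4 hl (S.erase p) (by rw [card_erase_of_mem hp]; omega)
  omega

theorem kz {l : Fin r → P → V} (hl : Lin l) (h7 : X7 l) {u1 u2 u3 v1 v2 v3 z : P} {c1 c2 : Fin r}
    (n1 : NA l u1 u2) (n2 : NA l u1 u3) (n3 : NA l u2 u3) (m1 : NA l v1 v2) (m2 : NA l v1 v3)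
    (m3 : NA l v2 v3) (z1 : v1 ≠ z) (z2 : v2 ≠ z) (z3 : v3 ≠ z) (y1 : u1 ≠ z) (y2 : u2 ≠ z)
    (a11 : Ad l u1 v1) (a12 : Ad l u1 v2) (a13 : Ad l u1 v3)
    (a21 : Ad l u2 v1) (a22 : Ad l u2 v2) (a23 : Ad l u2 v3)
    (a31 : Ad l u3 v1) (a32 : Ad l u3 v2) (a33 : Ad l u3 v3)
    (e1 : l c1 u1 = l c1 z) (e2 : l c2 u2 = l c2 z) (hc : c1 ≠ c2) : False := by
  have key : ∀ v, v ≠ z → Ad l u1 v → Ad l u2 v → NA l v z := by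
    intro v hv h1 h2 t e
    obtain ⟨p1, j1, f1⟩ := h1
    obtain ⟨p2, j2, f2⟩ := h2
    have k1 := hl.tri3 p1 hv y1 f1 e e1
    have k2 := hl.tri3 p2 hv y2 f2 e e2
    exact hc (by rw [k1.2, k1.1, k2.2, k2.1])
  exact h7 u1 u2 u3 v1 v2 v3 z n1 n2 n3 m1 m2 (key _ z1 a11 a21) m3 (key _ z2 a12 a22)
    (key _ z3 a13 a23) a11 a12 a13 ⟨y1, _, e1⟩ a21 a22 a23 ⟨y2, _, e2⟩ a31 a32 a33

theorem NA.symm {l : Fin r → P → V} {p q : P} (h : NA l p q) : NA l q p := fun t e => h t e.symm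

theorem sav7 {l : Fin r → P → V} (hl : Lin l) (h7 : X7 l) (S : Finset P) (hS : S.card = 7) :
    sav l S ≤ 10 := by
  by_contra hcon
  by_cases hd : ∀ p ∈ S, 3 ≤ (dTimes l S p).card
  · have g := mkGH hl S (by omega) hd
    exact g7 g (N7_of g h7) (by rw [Fintype.card_coe]; omega)
  push Not at hd
  obtain ⟨z, hz, hzd⟩ := hd
  have h1 := sav_erase l S z hz
  have hc6 : (S.erase z).card = 6 := by rw [card_erase_of_mem hz]; omega
  obtain ⟨S6, hS6⟩ : ∃ S6, S6 = S.erase z := ⟨_, rfl⟩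
  rw [← hS6] at h1 hc6
  have hd6 : ∀ p ∈ S6, 3 ≤ (dTimes l S6 p).card := by
    intro p hp
    have h1 := sav_erase l S6 p hp
    have h2 := sav5 hl (S6.erase p) (by rw [card_erase_of_mem hp]; omega)
    omega
  have g := mkGH hl S6 (by omega) hd6
  obtain ⟨u1, u2, u3, v1, v2, v3, exh, ⟨n1, n2, n3⟩, ⟨m1, m2, m3⟩, ⟨a11, a21, a31⟩, ⟨a12, a22, a32⟩, ⟨a13, a23, a33⟩⟩ :=
    g6 g (by rw [Fintype.card_coe]; omega)
  have sy := g.symm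
  have nu1 := g.na n1 (sy _ _ a11) (sy _ _ a21)
  have nu2 := g.na n2 (sy _ _ a11) (sy _ _ a31)
  have nu3 := g.na n3 (sy _ _ a21) (sy _ _ a31)
  have nv1 := g.na m1 a11 a12
  have nv2 := g.na m2 a11 a13
  have nv3 := g.na m3 a12 a13
  have h69 : sav l S6 ≤ 9 := by
    have h1 := sav_erase l S6 u1 u1.2
    have h2 := sav5 hl (S6.erase u1) (by rw [card_erase_of_mem u1.2]; omega)
    have h3 := times_le_nb hl S6 u1
    have h4 : nb l S6 u1 ⊆ {v1.1, v2.1, v3.1} := by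
      intro w hw
      obtain ⟨hwS, hA⟩ := mem_nb.1 hw
      simp only [mem_insert, mem_singleton]
      rcases exh ⟨w, hwS⟩ with h | h | h | h | h | h
      · exact absurd (congrArg Subtype.val h) (Ne.symm hA.1)
      · have : w = u2.1 := congrArg Subtype.val h
        subst this
        obtain ⟨-, t, e⟩ := hA
        exact absurd e (nu1 t)
      · have : w = u3.1 := congrArg Subtype.val h
        subst this
        obtain ⟨-, t, e⟩ := hA
        exact absurd e (nu2 t)
      · exact Or.inl (congrArg Subtype.val h)
      · exact Or.inr (Or.inl (congrArg Subtype.val h))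
      · exact Or.inr (Or.inr (congrArg Subtype.val h))
    have h5 := card_le_card h4
    have h6 : ({v1.1, v2.1, v3.1} : Finset P).card ≤ 3 := card_le_three
    omega
  have hz2 : 1 < (dTimes l S z).card := by omega
  obtain ⟨c1, hc1, c2, hc2, hc⟩ := one_lt_card.1 hz2
  obtain ⟨-, w1, hw1, hw1z, e1⟩ := mem_filter.1 hc1
  obtain ⟨-, w2, hw2, hw2z, e2⟩ := mem_filter.1 hc2
  have hw12 : w1 ≠ w2 := fun e => hc (hl.lin _ _ _ _ hw1z e1 (by rw [e]; exact e2))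
  have hnA : ∀ t, l t w1 ≠ l t w2 := by
    intro t ht
    have := hl.tri3 hw12 hw2z hw1z ht e2 e1
    exact hc (this.2.trans this.1)
  have nz : ∀ w : {x // x ∈ S6}, w.1 ≠ z := by
    intro w e
    have := w.2
    rw [e] at this
    simp [hS6] at this
  have sub : ∀ w, w ∈ S → w ≠ z → ∃ w' : {x // x ∈ S6}, w'.1 = w :=
    fun w h h' => ⟨⟨w, by rw [hS6]; exact mem_erase.2 ⟨h', h⟩⟩, rfl⟩
  obtain ⟨w1, rfl⟩ := sub w1 hw1 hw1z
  obtain ⟨w2, rfl⟩ := sub w2 hw2 hw2z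
  have x1 := nz v1
  have x2 := nz v2
  have x3 := nz v3
  have y1 := nz u1
  have y2 := nz u2
  have y3 := nz u3
  have no : ∀ t, ¬ (l t w1.1 = l t w2.1) := hnA
  have nA : ¬ Ad l w1.1 w2.1 := fun h => by obtain ⟨-, t, e⟩ := h; exact hnA t e
  have nA' : ¬ Ad l w2.1 w1.1 := fun h => nA h.symm
  have Ku := fun {u1 u2 u3 : P} => @kz P V _ _ r l hl h7 u1 u2 u3 v1.1 v2.1 v3.1 z c1 c2
  have Kv := fun {w1 w2 w3 : P} => @kz P V _ _ r l hl h7 w1 w2 w3 u1.1 u2.1 u3.1 z c1 c2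
  rcases exh w1 with h | h | h | h | h | h <;> subst h <;> (rcases exh w2 with h | h | h | h | h | h <;> subst h)
  · exact hw12 rfl
  · exact Ku nu1 nu2 nu3 nv1 nv2 nv3 x1 x2 x3 y1 y2 (sy _ _ a11) (sy _ _ a12) (sy _ _ a13) (sy _ _ a21) (sy _ _ a22) (sy _ _ a23) (sy _ _ a31) (sy _ _ a32) (sy _ _ a33) e1 e2 hc
  · exact Ku nu2 nu1 nu3.symm nv1 nv2 nv3 x1 x2 x3 y1 y3 (sy _ _ a11) (sy _ _ a12) (sy _ _ a13) (sy _ _ a31) (sy _ _ a32) (sy _ _ a33) (sy _ _ a21) (sy _ _ a22) (sy _ _ a23) e1 e2 hc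
  · first | exact nA (by assumption) | exact nA' (by assumption)
  · first | exact nA (by assumption) | exact nA' (by assumption)
  · first | exact nA (by assumption) | exact nA' (by assumption)
  · exact Ku nu1.symm nu3 nu2 nv1 nv2 nv3 x1 x2 x3 y2 y1 (sy _ _ a21) (sy _ _ a22) (sy _ _ a23) (sy _ _ a11) (sy _ _ a12) (sy _ _ a13) (sy _ _ a31) (sy _ _ a32) (sy _ _ a33) e1 e2 hc
  · exact hw12 rfl
  · exact Ku nu3 nu1.symm nu2.symm nv1 nv2 nv3 x1 x2 x3 y2 y3 (sy _ _ a21) (sy _ _ a22) (sy _ _ a23) (sy _ _ a31) (sy _ _ a32) (sy _ _ a33) (sy _ _ a11) (sy _ _ a12) (sy _ _ a13) e1 e2 hc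
  · first | exact nA (by assumption) | exact nA' (by assumption)
  · first | exact nA (by assumption) | exact nA' (by assumption)
  · first | exact nA (by assumption) | exact nA' (by assumption)
  · exact Ku nu2.symm nu3.symm nu1 nv1 nv2 nv3 x1 x2 x3 y3 y1 (sy _ _ a31) (sy _ _ a32) (sy _ _ a33) (sy _ _ a11) (sy _ _ a12) (sy _ _ a13) (sy _ _ a21) (sy _ _ a22) (sy _ _ a23) e1 e2 hc
  · exact Ku nu3.symm nu2.symm nu1.symm nv1 nv2 nv3 x1 x2 x3 y3 y2 (sy _ _ a31) (sy _ _ a32) (sy _ _ a33) (sy _ _ a21) (sy _ _ a22) (sy _ _ a23) (sy _ _ a11) (sy _ _ a12) (sy _ _ a13) e1 e2 hc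
  · exact hw12 rfl
  · first | exact nA (by assumption) | exact nA' (by assumption)
  · first | exact nA (by assumption) | exact nA' (by assumption)
  · first | exact nA (by assumption) | exact nA' (by assumption)
  · first | exact nA (by assumption) | exact nA' (by assumption)
  · first | exact nA (by assumption) | exact nA' (by assumption)
  · first | exact nA (by assumption) | exact nA' (by assumption)
  · exact hw12 rfl
  · exact Kv nv1 nv2 nv3 nu1 nu2 nu3 y1 y2 y3 x1 x2 a11 a21 a31 a12 a22 a32 a13 a23 a33 e1 e2 hc
  · exact Kv nv2 nv1 nv3.symm nu1 nu2 nu3 y1 y2 y3 x1 x3 a11 a21 a31 a13 a23 a33 a12 a22 a32 e1 e2 hc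
  · first | exact nA (by assumption) | exact nA' (by assumption)
  · first | exact nA (by assumption) | exact nA' (by assumption)
  · first | exact nA (by assumption) | exact nA' (by assumption)
  · exact Kv nv1.symm nv3 nv2 nu1 nu2 nu3 y1 y2 y3 x2 x1 a12 a22 a32 a11 a21 a31 a13 a23 a33 e1 e2 hc
  · exact hw12 rfl
  · exact Kv nv3 nv1.symm nv2.symm nu1 nu2 nu3 y1 y2 y3 x2 x3 a12 a22 a32 a13 a23 a33 a11 a21 a31 e1 e2 hc
  · first | exact nA (by assumption) | exact nA' (by assumption)
  · first | exact nA (by assumption) | exact nA' (by assumption)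
  · first | exact nA (by assumption) | exact nA' (by assumption)
  · exact Kv nv2.symm nv3.symm nv1 nu1 nu2 nu3 y1 y2 y3 x3 x1 a13 a23 a33 a11 a21 a31 a12 a22 a32 e1 e2 hc
  · exact Kv nv3.symm nv2.symm nv1.symm nu1 nu2 nu3 y1 y2 y3 x3 x2 a13 a23 a33 a12 a22 a32 a11 a21 a31 e1 e2 hc
  · exact hw12 rfl

theorem sav8 {l : Fin r → P → V} (hl : Lin l) (h7 : X7 l) (h8a : X8a l) (h8b : X8b l)
    (S : Finset P) (hS : S.card = 8) : sav l S ≤ 12 := by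
  by_contra hcon
  have hd : ∀ p ∈ S, 3 ≤ (dTimes l S p).card := by
    intro p hp
    have h1 := sav_erase l S p hp
    have h2 := sav7 hl h7 (S.erase p) (by rw [card_erase_of_mem hp]; omega)
    omega
  have g := mkGH hl S (by omega) hd
  have h2 := two_sav_le (l := l) S (fun p hp q hq s hs => no_tri hl S (by omega) hd hp hq hs)
  have h4 : ∃ p ∈ S, 4 ≤ (dTimes l S p).card := by
    by_contra hh
    push Not at hh
    have : ∑ p ∈ S, (dTimes l S p).card ≤ ∑ p ∈ S, 3 := sum_le_sum fun p hp => by have := hh p hp; omega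
    rw [sum_const, hS, smul_eq_mul] at this
    omega
  obtain ⟨p, hp, h4⟩ := h4
  refine g8 g (N7_of g h7) (N8a_of g h8a) (N8b_of g h8b) (by rw [Fintype.card_coe]; omega) ⟨p, hp⟩ ?_
  intro a b c
  have h := h4.trans (times_le_nb hl S p)
  have h2 : 0 < ((((nb l S p).erase a.1).erase b.1).erase c.1).card := by
    have := pred_card_le_card_erase (s := ((nb l S p).erase a.1).erase b.1) (a := c.1)
    have := pred_card_le_card_erase (s := (nb l S p).erase a.1) (a := b.1)
    have := pred_card_le_card_erase (s := (nb l S p)) (a := a.1)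
    omega
  obtain ⟨w, hw⟩ := card_pos.1 h2
  obtain ⟨hc, hw⟩ := mem_erase.1 hw
  obtain ⟨hb, hw⟩ := mem_erase.1 hw
  obtain ⟨ha, hw⟩ := mem_erase.1 hw
  obtain ⟨hS, hA⟩ := mem_nb.1 hw
  exact ⟨⟨w, hS⟩, hA, fun e => ha (congrArg Subtype.val e), fun e => hb (congrArg Subtype.val e), fun e => hc (congrArg Subtype.val e)⟩

end bridge


section poly
variable {r : ℕ} {K : Type*} [CommRing K]

def fI (c : Fin r → K) (i j : Fin r) : K := c i - c j
def fCR (c : Fin r → K) (a1 a2 a3 a4 b1 b2 b3 b4 : Fin r) : K :=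
  (c b2 - c b3) * (c a1 - c a3) * (c b1 - c b4) * (c a2 - c a4)
  - (c b2 - c b4) * (c a1 - c a4) * (c b1 - c b3) * (c a2 - c a3)
def fK (c : Fin r → K) (a1 a2 a4 g1 g2 g3 : Fin r) : K :=
  (c a1 - c a4) * (c g1 - c g3) * (c g2 - c a2) + (c g2 - c g3) * (c g1 - c a1) * (c a2 - c a4)
def fQA (c : Fin r → K) (a1 a2 a3 a4 g1 g2 h3 h4 d : Fin r) : K :=
  (c h3 - c h4) * (c a4 - c a3) * ((c d - c g2) * (c g1 - c a1) + (c d - c g1) * (c g2 - c a2))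
  - (c g1 - c g2) * (c a2 - c a1) * ((c d - c h4) * (c h3 - c a3) + (c d - c h3) * (c h4 - c a4))
def fQB (c : Fin r → K) (a1 a2 a3 a4 g1 g2 h3 h4 d : Fin r) : K :=
  (c h3 - c h4) * ((c d - c g2) * (c g1 - c a1) * (c a4 - c a2) - (c d - c g1) * (c g2 - c a2) * (c a3 - c a1))
  + (c g1 - c g2) * ((c d - c h4) * (c h3 - c a3) * (c a4 - c a2) - (c d - c h3) * (c h4 - c a4) * (c a3 - c a1))
def fE (c : Fin r → K) (ai aj ak w bi bk gij gik gkj gki : Fin r) : K :=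
  (c ak - c w) * (c gij - c gik) * (c bi - c w) * (c gki - c bk) * (c gkj - c aj) * (c ai - c aj)
  - (c ai - c w) * (c gkj - c gki) * (c bk - c w) * (c gik - c bi) * (c gij - c aj) * (c ak - c aj)

structure Gen (b : Fin r → ℤ) : Prop where
  inj : ∀ i j, b i - b j = 0 → i = j
  cr : ∀ a1 a2 a3 a4 b1 b2 b3 b4, fCR b a1 a2 a3 a4 b1 b2 b3 b4 = 0 →
    ∀ c : Fin r → ℤ, fCR c a1 a2 a3 a4 b1 b2 b3 b4 = 0
  k : ∀ a1 a2 a4 g1 g2 g3, fK b a1 a2 a4 g1 g2 g3 = 0 →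
    ∀ c : Fin r → ℤ, fK c a1 a2 a4 g1 g2 g3 = 0
  qa : ∀ a1 a2 a3 a4 g1 g2 h3 h4 d, fQA b a1 a2 a3 a4 g1 g2 h3 h4 d = 0 →
    ∀ c : Fin r → ℤ, fQA c a1 a2 a3 a4 g1 g2 h3 h4 d = 0
  qb : ∀ a1 a2 a3 a4 g1 g2 h3 h4 d, fQB b a1 a2 a3 a4 g1 g2 h3 h4 d = 0 →
    ∀ c : Fin r → ℤ, fQB c a1 a2 a3 a4 g1 g2 h3 h4 d = 0
  e : ∀ ai aj ak w bi bk gij gik gkj gki, fE b ai aj ak w bi bk gij gik gkj gki = 0 →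
    ∀ c : Fin r → ℤ, fE c ai aj ak w bi bk gij gik gkj gki = 0

theorem exGeneric (s : Set (MvPolynomial (Fin r) ℤ)) (hs : s.Finite) :
    ∃ b : Fin r → ℤ, ∀ p ∈ s, MvPolynomial.eval b p = 0 → p = 0 := by
  classical
  let t := hs.toFinset.filter (fun p => p ≠ 0)
  have hP : (∏ p ∈ t, p) ≠ 0 := prod_ne_zero_iff.2 fun p hp => (mem_filter.1 hp).2
  have : ∃ b, MvPolynomial.eval b (∏ p ∈ t, p) ≠ 0 := by
    by_contra hcon
    push Not at hcon
    exact hP (MvPolynomial.funext fun x => by rw [hcon x, map_zero])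
  obtain ⟨b, hb⟩ := this
  refine ⟨b, fun p hp h0 => ?_⟩
  by_contra hne
  rw [map_prod, prod_ne_zero_iff] at hb
  exact hb p (mem_filter.2 ⟨hs.mem_toFinset.2 hp, hne⟩) h0

theorem exGen (r : ℕ) : ∃ b : Fin r → ℤ, Gen b := by
  let X : Fin r → MvPolynomial (Fin r) ℤ := MvPolynomial.X
  let F : Fin 6 → (Fin 10 → Fin r) → MvPolynomial (Fin r) ℤ := fun k t =>
    ![fI X (t 0) (t 1), fCR X (t 0) (t 1) (t 2) (t 3) (t 4) (t 5) (t 6) (t 7),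
      fK X (t 0) (t 1) (t 2) (t 3) (t 4) (t 5),
      fQA X (t 0) (t 1) (t 2) (t 3) (t 4) (t 5) (t 6) (t 7) (t 8),
      fQB X (t 0) (t 1) (t 2) (t 3) (t 4) (t 5) (t 6) (t 7) (t 8),
      fE X (t 0) (t 1) (t 2) (t 3) (t 4) (t 5) (t 6) (t 7) (t 8) (t 9)] k
  obtain ⟨b, hb⟩ := exGeneric (Set.range (fun kt : Fin 6 × (Fin 10 → Fin r) => F kt.1 kt.2))
    (Set.finite_range _)
  have hb' : ∀ k t, MvPolynomial.eval b (F k t) = 0 → ∀ c, MvPolynomial.eval c (F k t) = 0 := by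
    intro k t h c
    have h0 : F k t = 0 := hb _ ⟨(k, t), rfl⟩ h
    rw [h0, map_zero]
  refine ⟨b, ?_, ?_, ?_, ?_, ?_, ?_⟩
  · intro i j h
    by_contra hij
    have := hb' 0 ![i, j, i, i, i, i, i, i, i, i] (by simpa [F, fI, X] using h) (fun k => if k = i then 1 else 0)
    simp [F, fI, X, Ne.symm hij] at this
  · intro a1 a2 a3 a4 b1 b2 b3 b4 h c
    have := hb' 1 ![a1, a2, a3, a4, b1, b2, b3, b4, a1, a1] (by simpa [F, fCR, X] using h) c
    simpa [F, fCR, X] using this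
  · intro a1 a2 a3 a4 b1 b2 h c
    have := hb' 2 ![a1, a2, a3, a4, b1, b2, a1, a1, a1, a1] (by simpa [F, fK, X] using h) c
    simpa [F, fK, X] using this
  · intro a1 a2 a3 a4 b1 b2 b3 b4 b5 h c
    have := hb' 3 ![a1, a2, a3, a4, b1, b2, b3, b4, b5, a1] (by simpa [F, fQA, X] using h) c
    simpa [F, fQA, X] using this
  · intro a1 a2 a3 a4 b1 b2 b3 b4 b5 h c
    have := hb' 4 ![a1, a2, a3, a4, b1, b2, b3, b4, b5, a1] (by simpa [F, fQB, X] using h) c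
    simpa [F, fQB, X] using this
  · intro a1 a2 a3 a4 b1 b2 b3 b4 b5 b6 h c
    have := hb' 5 ![a1, a2, a3, a4, b1, b2, b3, b4, b5, b6] (by simpa [F, fE, X] using h) c
    simpa [F, fE, X] using this

/-- merging two colours -/
def mg (x y : Fin r) : Fin r → ℤ := fun i => if i = x then (y.val : ℤ) else (i.val : ℤ)

def MG (x y i j : Fin r) : Prop := i = j ∨ (i = x ∧ j = y) ∨ (i = y ∧ j = x)

theorem mg_iff (x y i j : Fin r) : mg x y i - mg x y j = 0 ↔ MG x y i j := by
  unfold mg MG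
  rw [sub_eq_zero]
  have key : ∀ a b : Fin r, ((a.val : ℤ) = (b.val : ℤ)) ↔ a = b := by
    intro a b
    rw [Int.natCast_inj, Fin.val_inj]
  split_ifs with h1 h2 h2 <;> rw [key] <;> grind

theorem mg_self (x y : Fin r) : mg x y x - mg x y y = 0 := (mg_iff _ _ _ _).2 (Or.inr (Or.inl ⟨rfl, rfl⟩))

theorem klein {a1 a2 a3 a4 b1 b2 b3 b4 : Fin r} (h : ∀ c : Fin r → ℤ, fCR c a1 a2 a3 a4 b1 b2 b3 b4 = 0)
    (n12 : a1 ≠ a2) (n13 : a1 ≠ a3) (n14 : a1 ≠ a4) (n23 : a2 ≠ a3) (n24 : a2 ≠ a4) (n34 : a3 ≠ a4)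
    (m12 : b1 ≠ b2) (m13 : b1 ≠ b3) (m14 : b1 ≠ b4) (m23 : b2 ≠ b3) (m24 : b2 ≠ b4) (m34 : b3 ≠ b4)
    (k1 : a1 ≠ b1) (k2 : a2 ≠ b2) (k3 : a3 ≠ b3) (k4 : a4 ≠ b4) :
    (b1 = a2 ∧ b2 = a1 ∧ b3 = a4 ∧ b4 = a3) ∨ (b1 = a3 ∧ b2 = a4 ∧ b3 = a1 ∧ b4 = a2) ∨
    (b1 = a4 ∧ b2 = a3 ∧ b3 = a2 ∧ b4 = a1) := by
  have h1 := h (mg a1 a3)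
  have h2 := h (mg a2 a4)
  have h3 := h (mg a1 a4)
  have h4 := h (mg a2 a3)
  simp only [fCR, mg_self, mul_zero, zero_mul, zero_sub, sub_zero, neg_eq_zero, mul_eq_zero, mg_iff] at h1 h2 h3 h4
  have e1 : (b2 = a1 ∧ b4 = a3) ∨ (b2 = a3 ∧ b4 = a1) ∨ (b1 = a1 ∧ b3 = a3) ∨ (b1 = a3 ∧ b3 = a1) := by
    unfold MG at h1; grind
  have e2 : (b2 = a2 ∧ b4 = a4) ∨ (b2 = a4 ∧ b4 = a2) ∨ (b1 = a2 ∧ b3 = a4) ∨ (b1 = a4 ∧ b3 = a2) := by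
    unfold MG at h2; grind
  have e3 : (b2 = a1 ∧ b3 = a4) ∨ (b2 = a4 ∧ b3 = a1) ∨ (b1 = a1 ∧ b4 = a4) ∨ (b1 = a4 ∧ b4 = a1) := by
    unfold MG at h3; grind
  clear h1 h2 h3 h4 h
  grind
end poly


section poly2
variable {r : ℕ}

theorem kcomb {a1 a2 a4 g1 g2 g3 : Fin r} (h : ∀ c : Fin r → ℤ, fK c a1 a2 a4 g1 g2 g3 = 0)
    (n12 : a1 ≠ a2) (n14 : a1 ≠ a4) (n24 : a2 ≠ a4) 
    (m12 : g1 ≠ g2) (m13 : g1 ≠ g3) (m23 : g2 ≠ g3)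
    (k1 : g1 ≠ a1) (k2 : g1 ≠ a2) (k3 : g2 ≠ a1) (k4 : g2 ≠ a2) (k5 : g3 ≠ a4) : False := by
  have h1 := h (mg a1 a4)
  have h2 := h (mg a2 a4)
  have h3 := h (fun i => (i.val : ℤ))
  simp only [fK, mg_self, mul_zero, zero_mul, zero_add, add_zero, mul_eq_zero, mg_iff] at h1 h2
  have e1 : (g2 = a4 ∧ g3 = a1) ∨ g1 = a4 := by unfold MG at h1; grind
  have e2 : (g1 = a4 ∧ g3 = a2) ∨ g2 = a4 := by unfold MG at h2; grind
  have key : ∀ a b : Fin r, ((a.val : ℤ) - (b.val : ℤ)) = 0 → a = b := by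
    intro a b h
    rwa [sub_eq_zero, Int.natCast_inj, Fin.val_inj] at h
  have hc : (g2 = a4 ∧ g3 = a1) ∨ (g1 = a4 ∧ g3 = a2) := by clear h h1 h2 h3; grind
  simp only [fK] at h3
  rcases hc with ⟨rfl, rfl⟩ | ⟨rfl, rfl⟩
  · have : ((g1.val : ℤ) - g3.val) * ((a2.val : ℤ) - g2.val) * ((g2.val : ℤ) - g3.val) = 0 := by linarith
    rcases mul_eq_zero.1 this with h | h
    · rcases mul_eq_zero.1 h with h | h
      · exact m13 (key _ _ h)
      · exact n24 (key _ _ h)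
    · exact m23 (key _ _ h)
  · have : ((g2.val : ℤ) - g3.val) * ((g1.val : ℤ) - g3.val) * ((g1.val : ℤ) - a1.val) = 0 := by linarith
    rcases mul_eq_zero.1 this with h | h
    · rcases mul_eq_zero.1 h with h | h
      · exact m23 (key _ _ h)
      · exact m13 (key _ _ h)
    · exact k1 (key _ _ h)

theorem qa1 {a1 a2 a3 a4 g1 g2 h3 h4 d : Fin r}
    (h : ∀ c : Fin r → ℤ, fQA c a1 a2 a3 a4 g1 g2 h3 h4 d = 0)
    (n12 : a1 ≠ a2) (n13 : a1 ≠ a3) (n14 : a1 ≠ a4) (n23 : a2 ≠ a3) (n24 : a2 ≠ a4) (n34 : a3 ≠ a4)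
    (mg12 : g1 ≠ g2) (mh : h3 ≠ h4) (k1 : h3 ≠ a3) (k2 : h3 ≠ a4) (k3 : h4 ≠ a3) (k4 : h4 ≠ a4)
    (d3 : d ≠ h3) (d4 : d ≠ h4) : (g1 = a3 ∧ g2 = a4) ∨ (g1 = a4 ∧ g2 = a3) := by
  by_contra hcon
  let c : Fin r → ℤ := fun i => if i = a3 then 0 else if i = a4 then 0 else if i = h3 then 1
    else if i = h4 then 2 else if i = d then 3 else (i.val : ℤ) + 4
  have key : ∀ i j, c i - c j = 0 → i = j ∨ (i = a3 ∧ j = a4) ∨ (i = a4 ∧ j = a3) := by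
    intro i j hij
    have : ∀ a b : Fin r, (a.val : ℤ) = (b.val : ℤ) → a = b := by
      intro a b h
      rwa [Int.natCast_inj, Fin.val_inj] at h
    by_contra hne
    simp only [c] at hij
    split_ifs at hij <;> first | omega | (exact hne (Or.inl (this _ _ (by omega)))) | (subst_vars; simp at hne)
  have c3 : c a3 = 0 := by simp [c]
  have c4 : c a4 = 0 := by simp [c]
  have ch3 : c h3 = 1 := by simp [c, k1, k2]
  have ch4 : c h4 = 2 := by simp [c, k3, k4, mh.symm]
  have cd : c d = 0 ∨ c d = 3 := by
    simp only [c]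
    split_ifs <;> simp_all
  have hh := h c
  simp only [fQA, c3, c4, ch3, ch4] at hh
  have : (c g1 - c g2) * (c a2 - c a1) = 0 := by
    rcases cd with e | e <;> rw [e] at hh <;> linarith
  rcases mul_eq_zero.1 this with h | h
  · rcases key _ _ h with h | h | h
    · exact mg12 h
    · exact hcon (Or.inl h)
    · exact hcon (Or.inr h)
  · rcases key _ _ h with h | h | h
    · exact n12 h.symm
    · exact n23 h.1
    · exact n24 h.1

theorem qacomb {a1 a2 a3 a4 g1 g2 h3 h4 d : Fin r}
    (h : ∀ c : Fin r → ℤ, fQA c a1 a2 a3 a4 g1 g2 h3 h4 d = 0)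
    (n12 : a1 ≠ a2) (n13 : a1 ≠ a3) (n14 : a1 ≠ a4) (n23 : a2 ≠ a3) (n24 : a2 ≠ a4) (n34 : a3 ≠ a4)
    (mg12 : g1 ≠ g2) (mh : h3 ≠ h4) (k1 : h3 ≠ a3) (k2 : h3 ≠ a4) (k3 : h4 ≠ a3) (k4 : h4 ≠ a4)
    (d3 : d ≠ h3) (d4 : d ≠ h4) (l1 : g1 ≠ a1) (l2 : g1 ≠ a2) (l3 : g2 ≠ a1) (l4 : g2 ≠ a2)
    (d1 : d ≠ g1) (d2 : d ≠ g2) : False := by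
  have e1 := qa1 h n12 n13 n14 n23 n24 n34 mg12 mh k1 k2 k3 k4 d3 d4
  have e2 := qa1 (a1 := a3) (a2 := a4) (a3 := a1) (a4 := a2) (g1 := h3) (g2 := h4) (h3 := g1) (h4 := g2) (d := d)
    (fun c => by have := h c; simp only [fQA] at *; linarith) n34 n13.symm n23.symm n14.symm n24.symm n12 mh mg12 l1 l2 l3 l4 d1 d2
  let c : Fin r → ℤ := fun i => if i = a1 then 0 else if i = a2 then 1 else if i = a3 then 3
    else if i = a4 then 7 else 20
  have hh := h c
  have c1 : c a1 = 0 := by simp [c]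
  have c2 : c a2 = 1 := by simp [c, n12.symm]
  have c3 : c a3 = 3 := by simp [c, n13.symm, n23.symm]
  have c4 : c a4 = 7 := by simp [c, n14.symm, n24.symm, n34.symm]
  have cd : c d = 20 := by
    simp only [c]
    rcases e1 with ⟨rfl, rfl⟩ | ⟨rfl, rfl⟩ <;> rcases e2 with ⟨rfl, rfl⟩ | ⟨rfl, rfl⟩ <;> simp [d1, d2, d3, d4]
  rcases e1 with ⟨e, e'⟩ | ⟨e, e'⟩ <;> rcases e2 with ⟨f, f'⟩ | ⟨f, f'⟩ <;>
    simp only [fQA, e, e', f, f', c1, c2, c3, c4, cd] at hh <;> norm_num at hh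

theorem qb1 {a1 a2 a3 a4 g1 g2 h3 h4 d : Fin r}
    (h : ∀ c : Fin r → ℤ, fQB c a1 a2 a3 a4 g1 g2 h3 h4 d = 0)
    (n12 : a1 ≠ a2) (n13 : a1 ≠ a3) (n14 : a1 ≠ a4) (n23 : a2 ≠ a3) (n24 : a2 ≠ a4) (n34 : a3 ≠ a4)
    (mg12 : g1 ≠ g2) (mh : h3 ≠ h4) (k1 : h3 ≠ a3) (k2 : h3 ≠ a1) (k3 : h4 ≠ a2) (k4 : h4 ≠ a4)
    (d3 : d ≠ h3) (d4 : d ≠ h4) (l1 : g1 ≠ a1) (l2 : g1 ≠ a3) (l3 : g2 ≠ a2) (l4 : g2 ≠ a4)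
    (d1 : d ≠ g1) (d2 : d ≠ g2) : d = a1 ∨ d = a3 := by
  by_contra hcon
  push Not at hcon
  obtain ⟨x1, x3⟩ := hcon
  let c : Fin r → ℤ := fun i => if i = d then 10 else if i = g1 then 1 else if i = h3 then 2
    else if i = a2 then 3 else 0
  have hh := h c
  have cd : c d = 10 := by simp [c]
  have cg1 : c g1 = 1 := by simp [c, d1.symm]
  have c1 : c a1 = 0 := by simp [c, x1.symm, l1.symm, k2.symm, n12]
  have c3 : c a3 = 0 := by simp [c, x3.symm, l2.symm, k1.symm, n23.symm]
  have c24 : c a4 - c a2 ≠ 0 := by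
    simp only [c]
    split_ifs <;> simp_all
  have e1 : (c h3 - c h4) * (c d - c g2) * c g1 + (c g1 - c g2) * (c d - c h4) * c h3 = 0 := by
    simp only [fQB, c1, c3] at hh
    have : (c a4 - c a2) * ((c h3 - c h4) * (c d - c g2) * c g1 + (c g1 - c g2) * (c d - c h4) * c h3) = 0 := by
      linarith
    exact (mul_eq_zero.1 this).resolve_left c24
  rw [cd, cg1] at e1
  have ch3 : (h3 = g1 ∧ c h3 = 1) ∨ (h3 ≠ g1 ∧ c h3 = 2) := by
    by_cases e : h3 = g1
    · exact Or.inl ⟨e, e ▸ cg1⟩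
    · exact Or.inr ⟨e, by simp [c, d3.symm, e]⟩
  have ch4 : (h4 = g1 ∧ c h4 = 1) ∨ (h4 ≠ g1 ∧ c h4 = 0) := by
    by_cases e : h4 = g1
    · exact Or.inl ⟨e, e ▸ cg1⟩
    · exact Or.inr ⟨e, by simp [c, d4.symm, e, mh.symm, k3]⟩
  have cg2 : (g2 = h3 ∧ c g2 = 2) ∨ (g2 ≠ h3 ∧ c g2 = 0) := by
    by_cases e : g2 = h3
    · exact Or.inl ⟨e, by simp [c, d2.symm, mg12.symm, e, d3.symm, e ▸ mg12.symm]⟩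
    · exact Or.inr ⟨e, by simp [c, d2.symm, e, mg12.symm, l3]⟩
  rcases ch3 with ⟨p1, q1⟩ | ⟨p1, q1⟩ <;> rcases ch4 with ⟨p2, q2⟩ | ⟨p2, q2⟩ <;> rcases cg2 with ⟨p3, q3⟩ | ⟨p3, q3⟩ <;>
    rw [q1, q2, q3] at e1 <;> first | norm_num at e1 | skip
  all_goals first | (exact mh (p1.trans p2.symm)) | (exact mg12 (p3.trans p1).symm)

theorem qbcomb {a1 a2 a3 a4 g1 g2 h3 h4 d : Fin r}
    (h : ∀ c : Fin r → ℤ, fQB c a1 a2 a3 a4 g1 g2 h3 h4 d = 0)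
    (n12 : a1 ≠ a2) (n13 : a1 ≠ a3) (n14 : a1 ≠ a4) (n23 : a2 ≠ a3) (n24 : a2 ≠ a4) (n34 : a3 ≠ a4)
    (mg12 : g1 ≠ g2) (mh : h3 ≠ h4) (k1 : h3 ≠ a3) (k2 : h3 ≠ a1) (k3 : h4 ≠ a2) (k4 : h4 ≠ a4)
    (d3 : d ≠ h3) (d4 : d ≠ h4) (l1 : g1 ≠ a1) (l2 : g1 ≠ a3) (l3 : g2 ≠ a2) (l4 : g2 ≠ a4)
    (d1 : d ≠ g1) (d2 : d ≠ g2) : False := by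
  have e1 := qb1 h n12 n13 n14 n23 n24 n34 mg12 mh k1 k2 k3 k4 d3 d4 l1 l2 l3 l4 d1 d2
  have e2 := qb1 (a1 := a2) (a2 := a1) (a3 := a4) (a4 := a3) (g1 := g2) (g2 := g1) (h3 := h4) (h4 := h3) (d := d)
    (fun c => by have := h c; simp only [fQB] at *; linarith) n12.symm n24 n23 n14 n13 n34.symm mg12.symm mh.symm k4 k3 k2 k1 d4 d3 l3 l4 l1 l2 d2 d1
  rcases e1 with rfl | rfl
  · rcases e2 with h | h
    exacts [n12 h, n14 h]
  · rcases e2 with h | h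
    exacts [n23 h.symm, n34 h]
end poly2


section poly3
variable {r : ℕ}

structure EC (ai aj ak w bi bk gij gik gkj gki : Fin r) : Prop where
  e : ∀ c : Fin r → ℤ, fE c ai aj ak w bi bk gij gik gkj gki = 0
  a1 : ai ≠ aj
  a2 : ai ≠ ak
  a3 : aj ≠ ak
  w1 : ai ≠ w
  w2 : aj ≠ w
  w3 : ak ≠ w
  b1 : bi ≠ w
  b2 : bk ≠ w
  b3 : bi ≠ bk
  g1 : gij ≠ gik
  g2 : gij ≠ bi
  g3 : gik ≠ bi
  g4 : gkj ≠ gki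
  g5 : gkj ≠ bk
  g6 : gki ≠ bk
  c1 : gij ≠ aj
  c2 : gkj ≠ aj
  c3 : gij ≠ gkj
  c4 : gik ≠ ak
  c5 : gki ≠ ai

theorem EC.symm {ai aj ak w bi bk gij gik gkj gki : Fin r} (h : EC ai aj ak w bi bk gij gik gkj gki) :
    EC ak aj ai w bk bi gkj gki gij gik where
  e := fun c => by have := h.e c; simp only [fE] at *; linarith
  a1 := h.a3.symm
  a2 := h.a2.symm
  a3 := h.a1.symm
  w1 := h.w3
  w2 := h.w2
  w3 := h.w1
  b1 := h.b2
  b2 := h.b1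
  b3 := h.b3.symm
  g1 := h.g4
  g2 := h.g5
  g3 := h.g6
  g4 := h.g1
  g5 := h.g2
  g6 := h.g3
  c1 := h.c2
  c2 := h.c1
  c3 := h.c3.symm
  c4 := h.c5
  c5 := h.c4

theorem EC.s1 {ai aj ak w bi bk gij gik gkj gki : Fin r} (h : EC ai aj ak w bi bk gij gik gkj gki) :
    bk = ak ∨ ((gki = ak ∧ gkj = w) ∨ (gki = w ∧ gkj = ak)) ∨ bi = ak := by
  obtain ⟨e, a1, a2, a3, w1, w2, w3, b1, b2, b3, g1, g2, g3, g4, g5, g6, c1, c2, c3, c4, c5⟩ := h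
  have h1 := e (mg ak w)
  clear e
  simp only [fE, mg_self, mul_zero, zero_mul, zero_sub, sub_zero, neg_eq_zero, mul_eq_zero, mg_iff] at h1
  unfold MG at h1
  rcases h1 with ((((h1 | h1) | h1) | h1) | h1) | h1 <;> grind

theorem vkey {r : ℕ} (a b : Fin r) (h : a ≠ b) : ((a.val : ℤ) - (b.val : ℤ)) ≠ 0 := by
  intro h'
  rw [sub_eq_zero, Int.natCast_inj, Fin.val_inj] at h'
  exact h h'

theorem EC.s2 {ai aj ak w bi bk gij gik gkj gki : Fin r} (h : EC ai aj ak w bi bk gij gik gkj gki) 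
    (hb : bi ≠ ai) (h1 : gij = w) (h2 : gik = ai) : False := by
  obtain ⟨e, a1, a2, a3, w1, w2, w3, b1, b2, b3, g1, g2, g3, g4, g5, g6, c1, c2, c3, c4, c5⟩ := h
  subst h1 h2
  have h1 := e (mg bi gij)
  have h2 := e (mg gik aj)
  have h3 := e (mg ak gij)
  have h4 := e (mg ak aj)
  have h5 := e (fun i => (i.val : ℤ))
  clear e
  simp only [fE, mg_self, mul_zero, zero_mul, zero_sub, sub_zero, neg_eq_zero, mul_eq_zero, mg_iff] at h1 h2 h3 h4
  have e1 : ((gkj = bi ∧ gki = gij) ∨ (gkj = gij ∧ gki = bi)) ∨ bi = aj := by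
    clear h2 h3 h4 h5
    unfold MG at h1
    rcases h1 with ((((h1 | h1) | h1) | h1) | h1) | h1 <;> grind
  have e2 : ((gkj = gik ∧ gki = aj) ∨ (gkj = aj ∧ gki = gik)) ∨ bi = aj := by
    clear h1 h3 h4 h5
    unfold MG at h2
    rcases h2 with ((((h1 | h1) | h1) | h1) | h1) | h1 <;> grind
  have e3 : bi = aj := by clear h1 h2 h3 h4 h5; grind
  subst e3
  have e4 : (gkj = ak ∧ gki = gij) ∨ bk = ak := by
    clear h1 h2 h4 h5
    unfold MG at h3
    rcases h3 with ((((h1 | h1) | h1) | h1) | h1) | h1 <;> grind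
  simp only [fE] at h5
  rcases e4 with ⟨rfl, rfl⟩ | rfl
  · have := mul_ne_zero (mul_ne_zero (mul_ne_zero (mul_ne_zero (mul_ne_zero (vkey _ _ w3) (vkey _ _ w1)) (vkey _ _ w2)) (vkey _ _ b2)) (vkey _ _ a3)) (vkey _ _ a1)
    exact this (by linarith)
  · have e5 : gki = bi := by
      clear h1 h2 h3 h5
      unfold MG at h4
      rcases h4 with ((((h1 | h1) | h1) | h1) | h1) | h1 <;> grind
    subst e5
    have := mul_ne_zero (mul_ne_zero (mul_ne_zero (mul_ne_zero (mul_ne_zero (vkey _ _ w3) (vkey _ _ w1)) (vkey _ _ w2)) (vkey _ _ c2)) (vkey _ _ a3)) (vkey _ _ a1)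
    exact this (by linarith)

theorem EC.s3 {ai aj ak w bi bk gij gik gkj gki : Fin r} (h : EC ai aj ak w bi bk gij gik gkj gki) 
    (h1 : bi = ai) (h2 : bk = ak) : gik = aj := by
  obtain ⟨e, a1, a2, a3, w1, w2, w3, b1, b2, b3, g1, g2, g3, g4, g5, g6, c1, c2, c3, c4, c5⟩ := h
  subst h1 h2
  by_contra hcon
  have h1 := e (mg bi aj)
  simp only [fE, mg_self, mul_zero, zero_mul, zero_sub, sub_zero, neg_eq_zero, mul_eq_zero, mg_iff] at h1
  have e1 : gkj = bi ∧ gki = aj := by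
    clear e
    unfold MG at h1
    rcases h1 with ((((h1 | h1) | h1) | h1) | h1) | h1 <;> grind
  obtain ⟨rfl, rfl⟩ := e1
  clear h1
  let c : Fin r → ℤ := fun i => if i = gkj then 0 else if i = gki then 2 else if i = gik then 1 else (i.val : ℤ) + 3
  have key : ∀ i j, i ≠ j → c i - c j ≠ 0 := by
    intro i j hij h0
    have hv := vkey i j hij
    simp only [c] at h0
    split_ifs at h0 <;> first | omega | (subst_vars; exact hij rfl)
  have cz : c gkj = 0 := by simp [c]
  have c2' : c gki = 2 := by simp [c, c5]
  have c1' : c gik = 1 := by simp [c, g3, hcon]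
  have cg : c gij ≥ 3 := by
    have : c gij = (gij.val : ℤ) + 3 := by simp [c, g2, c1, g1]
    omega
  have he := e c
  have hm := mul_ne_zero (mul_ne_zero (mul_ne_zero (key _ _ w3) (key _ _ w1)) (key _ _ a3)) (key _ _ a1)
  have : (c bk - c w) * (c gkj - c w) * (c gki - c bk) * (c gkj - c gki) * 
     ((c gij - c gik) * (c gkj - c gki) + (c gik - c gkj) * (c gij - c gki)) = 0 := by
    simp only [fE] at he
    linarith
  have h6 := (mul_eq_zero.1 this).resolve_left hm
  rw [cz, c2', c1'] at h6
  omega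

theorem ecomb {a1 a2 a3 w b1 b2 b3 g12 g13 g21 g23 g31 g32 : Fin r}
    (E1 : EC a2 a1 a3 w b2 b3 g21 g23 g31 g32) (E2 : EC a1 a2 a3 w b1 b3 g12 g13 g32 g31)
    (E3 : EC a1 a3 a2 w b1 b2 g13 g12 g23 g21) :
    (b1 = a1 ∧ b2 = a2 ∧ b3 = a3) ∧ (g12 = a3 ∧ g21 = a3) ∧ (g13 = a2 ∧ g31 = a2) ∧
    (g23 = a1 ∧ g32 = a1) := by
  have h3 : b3 = a3 := by
    by_contra hne
    rcases E2.s1 with h | (h | h) | h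
    · exact hne h
    · exact E2.symm.s2 hne h.2 h.1
    · exact E1.symm.s2 hne h.1 h.2
    · rcases E1.s1 with k | (k | k) | k
      · exact hne k
      · exact E1.symm.s2 hne k.2 k.1
      · exact E2.symm.s2 hne k.1 k.2
      · exact E3.b3 (h.trans k.symm)
  have h2 : b2 = a2 := by
    by_contra hne
    rcases E3.s1 with h | (h | h) | h
    · exact hne h
    · exact E3.symm.s2 hne h.2 h.1
    · exact E1.s2 hne h.1 h.2
    · rcases E1.symm.s1 with k | (k | k) | k
      · exact hne k
      · exact E1.s2 hne k.2 k.1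
      · exact E3.symm.s2 hne k.1 k.2
      · exact E2.b3 (h.trans k.symm)
  have h1 : b1 = a1 := by
    by_contra hne
    rcases E3.symm.s1 with h | (h | h) | h
    · exact hne h
    · exact E3.s2 hne h.2 h.1
    · exact E2.s2 hne h.1 h.2
    · rcases E2.symm.s1 with k | (k | k) | k
      · exact hne k
      · exact E2.s2 hne k.2 k.1
      · exact E3.s2 hne k.1 k.2
      · exact E1.b3 (h.trans k.symm)
  exact ⟨⟨h1, h2, h3⟩, ⟨E3.s3 h1 h2, E3.symm.s3 h2 h1⟩, ⟨E2.s3 h1 h3, E2.symm.s3 h3 h1⟩,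
    ⟨E1.s3 h2 h3, E1.symm.s3 h3 h2⟩⟩
end poly3


section ray
open Matrix
variable {r D : ℕ} {R : ℤ}

def Ray (D : ℕ) (R : ℤ) : Type := {p : (Fin D → ℤ) × (Fin D → ℤ) // p.2 ⬝ᵥ p.2 = R}

instance : DecidableEq (Ray D R) := fun a b => decidable_of_iff (a.1 = b.1) Subtype.ext_iff.symm

def RL (b : Fin r → ℤ) (i : Fin r) (p : Ray D R) : Fin D → ℤ := p.1.1 + b i • p.1.2

def RN (u v : Ray D R) : ℤ := (v.1.2 - u.1.2) ⬝ᵥ (v.1.2 - u.1.2)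

theorem dsq (w : Fin D → ℤ) (h : w ⬝ᵥ w = 0) : w = 0 := dotProduct_self_eq_zero.1 h

theorem dnn (w : Fin D → ℤ) : 0 ≤ w ⬝ᵥ w := by
  unfold dotProduct; exact sum_nonneg fun i _ => mul_self_nonneg _

theorem RL_sub {b : Fin r → ℤ} {i : Fin r} {u v : Ray D R} (h : RL b i u = RL b i v) :
    v.1.1 - u.1.1 = - (b i • (v.1.2 - u.1.2)) := by
  unfold RL at h
  ext k
  have := congrFun h k
  simp only [Pi.add_apply, Pi.smul_apply, smul_eq_mul, Pi.sub_apply, Pi.neg_apply] at *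
  linarith

theorem RNpos {b : Fin r → ℤ} {i : Fin r} {u v : Ray D R} (hne : u ≠ v) (h : RL b i u = RL b i v) :
    0 < RN u v := by
  rcases (dnn (v.1.2 - u.1.2)).lt_or_eq with h0 | h0
  · exact h0
  · exfalso
    have h1 := dsq _ h0.symm
    have h2 := RL_sub h
    rw [h1, smul_zero, neg_zero] at h2
    exact hne (Subtype.ext (Prod.ext (sub_eq_zero.1 h2).symm (sub_eq_zero.1 h1).symm))

theorem RNdot (u v : Ray D R) : 2 * (u.1.2 ⬝ᵥ (v.1.2 - u.1.2)) = - RN u v := by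
  have h1 := u.2
  have h2 := v.2
  unfold RN
  simp only [dotProduct_sub, sub_dotProduct]
  rw [dotProduct_comm v.1.2 u.1.2]
  linarith

theorem par_eq {u v w : Ray D R} {k m : ℤ} (h : k • (v.1.2 - u.1.2) = m • (w.1.2 - u.1.2)) (hk : k ≠ 0)
    (h0 : 0 < RN u v) : k = m := by
  have h1 := congrArg (fun z => u.1.2 ⬝ᵥ z) h
  have h2 := congrArg (fun z => z ⬝ᵥ z) h
  simp only [dotProduct_smul, smul_dotProduct, smul_eq_mul] at h1 h2
  have e1 := RNdot u v
  have e2 := RNdot u w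
  have h1' : k * RN u v = m * RN u w := by linear_combination (-2) * h1 + k * e1 - m * e2
  have h2' : k * (k * RN u v) = m * (m * RN u w) := h2
  have h3 : (k * RN u v) * (k - m) = 0 := by rw [← h1'] at h2'; linarith
  rcases mul_eq_zero.1 h3 with h | h
  · exact absurd h (mul_ne_zero hk h0.ne')
  · linarith

variable {b : Fin r → ℤ}

theorem Gen.ne (hb : Gen b) {i j : Fin r} (h : i ≠ j) : b i - b j ≠ 0 := fun e => h (hb.inj i j e)

theorem ray_lin (hb : Gen b) : Lin (RL b : Fin r → Ray D R → Fin D → ℤ) where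
  lin := by
    intro p q i j hpq hi hj
    by_contra hij
    have hN := RNpos hpq hi
    have h1 := RL_sub hi
    rw [RL_sub hj, neg_inj] at h1
    have h2 : (b j - b i) • (q.1.2 - p.1.2) = 0 := by rw [sub_smul, h1, sub_self]
    rcases smul_eq_zero.1 h2 with h | h
    · exact hb.ne (Ne.symm hij) h
    · unfold RN at hN; rw [h] at hN; simp at hN
  tri := by
    intro p q s i j k hpq hqs hps hi hj hk
    by_contra hij
    have h1 := RL_sub hi.symm
    have h2 := RL_sub hj
    have h3 := RL_sub hk
    have h4 : (b k - b i) • (p.1.2 - q.1.2) = (b k - b j) • (s.1.2 - q.1.2) := by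
      ext t
      have e1 := congrFun h1 t
      have e2 := congrFun h2 t
      have e3 := congrFun h3 t
      simp only [Pi.smul_apply, smul_eq_mul, Pi.sub_apply, Pi.neg_apply] at *
      linear_combination e2 - e1 - e3
    by_cases hki : k = i
    · subst hki
      have h5 := par_eq h4.symm (hb.ne hij) (RNpos hqs hj)
      rw [sub_self] at h5
      exact hb.ne hij h5
    · have h5 := par_eq h4 (hb.ne hki) (RNpos hpq.symm hi.symm)
      exact hij (hb.inj i j (by linarith))

theorem ray_pair (u u' : Ray D R) : ∃ A B A' B' : ℤ, ∀ (v : Ray D R) (i j : Fin r),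
    RL b i u = RL b i v → RL b j u' = RL b j v →
    (b j - b i) * RN u v = A + B * b j ∧ b i * ((b j - b i) * RN u v) = A' + B' * b j := by
  set X := u'.1.1 - u.1.1 with hX
  set Y := u'.1.2 - u.1.2 with hY
  refine ⟨-2 * (u.1.2 ⬝ᵥ X), Y ⬝ᵥ Y, -(X ⬝ᵥ X), -2 * (u.1.2 ⬝ᵥ X) - 2 * (X ⬝ᵥ Y), ?_⟩
  intro v i j hi hj
  have h1 := RL_sub hi
  have h2 := RL_sub hj
  have h3 : X + b j • Y = (b j - b i) • (v.1.2 - u.1.2) := by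
    ext t
    have e1 := congrFun h1 t
    have e2 := congrFun h2 t
    simp only [hX, hY, Pi.add_apply, Pi.smul_apply, smul_eq_mul, Pi.sub_apply, Pi.neg_apply] at *
    linear_combination e1 - e2
  have d1 := congrArg (fun z => u.1.2 ⬝ᵥ z) h3
  have d2 := congrArg (fun z => z ⬝ᵥ z) h3
  simp only [dotProduct_smul, smul_dotProduct, smul_eq_mul, dotProduct_add, add_dotProduct] at d1 d2
  rw [dotProduct_comm Y X] at d2
  have e1 := RNdot u v
  have e2 : 2 * (u.1.2 ⬝ᵥ Y) = -(Y ⬝ᵥ Y) := RNdot u u'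
  have d2' : X ⬝ᵥ X + b j * (X ⬝ᵥ Y) + b j * (X ⬝ᵥ Y + b j * (Y ⬝ᵥ Y)) =
    (b j - b i) * ((b j - b i) * RN u v) := by
    unfold RN; linarith
  have f1 : (b j - b i) * RN u v = -2 * (u.1.2 ⬝ᵥ X) + (Y ⬝ᵥ Y) * b j := by
    linear_combination (2:ℤ) * d1 - (b j) * e2 + (b j - b i) * e1
  refine ⟨f1, ?_⟩
  linear_combination (b j) * f1 + d2'

theorem rho {u u' v1 v2 v3 : Ray D R} {i1 i2 i3 j1 j2 j3 : Fin r}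
    (h1 : RL b i1 u = RL b i1 v1) (h2 : RL b i2 u = RL b i2 v2) (h3 : RL b i3 u = RL b i3 v3)
    (k1 : RL b j1 u' = RL b j1 v1) (k2 : RL b j2 u' = RL b j2 v2) (k3 : RL b j3 u' = RL b j3 v3) :
    (b j2 - b j3) * (b i1 - b i3) * (b j1 - b i1) * RN u v1 =
    (b j1 - b j3) * (b i2 - b i3) * (b j2 - b i2) * RN u v2 := by
  obtain ⟨A, B, A', B', h⟩ := ray_pair (b := b) u u'
  obtain ⟨p1, q1⟩ := h v1 i1 j1 h1 k1
  obtain ⟨p2, q2⟩ := h v2 i2 j2 h2 k2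
  obtain ⟨p3, q3⟩ := h v3 i3 j3 h3 k3
  have q3' : b i3 * (A + B * b j3) = A' + B' * b j3 := by rw [← p3, q3]
  have r1 : (b i1 - b i3) * ((b j1 - b i1) * RN u v1) = (B' - b i3 * B) * (b j1 - b j3) := by
    linear_combination q1 - b i3 * p1 - q3'
  have r2 : (b i2 - b i3) * ((b j2 - b i2) * RN u v2) = (B' - b i3 * B) * (b j2 - b j3) := by
    linear_combination q2 - b i3 * p2 - q3'
  linear_combination (b j2 - b j3) * r1 - (b j1 - b j3) * r2

theorem NA.time {P V : Type*} {l : Fin r → P → V} {p q s : P} {i j : Fin r} (h : NA l p q)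
    (hi : l i s = l i p) (hj : l j s = l j q) : i ≠ j := by
  rintro rfl
  exact h i (hi.symm.trans hj)

theorem ray_cr (hb : Gen b) {u u' v1 v2 v3 v4 : Ray D R} {i1 i2 i3 i4 j1 j2 j3 j4 : Fin r}
    (h1 : RL b i1 u = RL b i1 v1) (h2 : RL b i2 u = RL b i2 v2) (h3 : RL b i3 u = RL b i3 v3)
    (h4 : RL b i4 u = RL b i4 v4)
    (k1 : RL b j1 u' = RL b j1 v1) (k2 : RL b j2 u' = RL b j2 v2) (k3 : RL b j3 u' = RL b j3 v3)
    (k4 : RL b j4 u' = RL b j4 v4) (n1 : u ≠ v1) (n2 : u ≠ v2)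
    (hu : NA (RL b) u u') (h12 : NA (RL b) v1 v2) (h13 : NA (RL b) v1 v3) (h14 : NA (RL b) v1 v4)
    (h23 : NA (RL b) v2 v3) (h24 : NA (RL b) v2 v4) (h34 : NA (RL b) v3 v4) :
    (j1 = i2 ∧ j2 = i1 ∧ j3 = i4 ∧ j4 = i3) ∨ (j1 = i3 ∧ j2 = i4 ∧ j3 = i1 ∧ j4 = i2) ∨
    (j1 = i4 ∧ j2 = i3 ∧ j3 = i2 ∧ j4 = i1) := by
  have t1 := hu.time h1.symm k1.symm
  have t2 := hu.time h2.symm k2.symm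
  have t3 := hu.time h3.symm k3.symm
  have t4 := hu.time h4.symm k4.symm
  refine klein (hb.cr _ _ _ _ _ _ _ _ ?_) (h12.time h1 h2) (h13.time h1 h3) (h14.time h1 h4)
    (h23.time h2 h3) (h24.time h2 h4) (h34.time h3 h4) (h12.time k1 k2) (h13.time k1 k3) (h14.time k1 k4)
    (h23.time k2 k3) (h24.time k2 k4) (h34.time k3 k4) t1 t2 t3 t4
  have r3 := rho h1 h2 h3 k1 k2 k3
  have r4 := rho h1 h2 h4 k1 k2 k4
  have N1 := (RNpos n1 h1).ne'
  have N2 := (RNpos n2 h2).ne'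
  have c : ((b j1 - b i1) * RN u v1) * ((b j2 - b i2) * RN u v2) ≠ 0 :=
    mul_ne_zero (mul_ne_zero (hb.ne t1.symm) N1) (mul_ne_zero (hb.ne t2.symm) N2)
  refine (mul_eq_zero.1 ?_).resolve_right c
  unfold fCR
  linear_combination (b j1 - b j4) * (b i2 - b i4) * ((b j2 - b i2) * RN u v2) * r3 -
    (b j1 - b j3) * (b i2 - b i3) * ((b j2 - b i2) * RN u v2) * r4

theorem x7core (hb : Gen b) {u1 u2 u3 v1 v2 v3 : Ray D R} {i1 i2 i3 i4 g1 g2 g3 : Fin r}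
    (h1 : RL b i1 u1 = RL b i1 v1) (h2 : RL b i2 u1 = RL b i2 v2) (h3 : RL b i3 u1 = RL b i3 v3)
    (k1 : RL b i2 u2 = RL b i2 v1) (k2 : RL b i1 u2 = RL b i1 v2) (k3 : RL b i4 u2 = RL b i4 v3)
    (m1 : RL b g1 u3 = RL b g1 v1) (m2 : RL b g2 u3 = RL b g2 v2) (m3 : RL b g3 u3 = RL b g3 v3)
    (n1 : u1 ≠ v1) (n2 : u1 ≠ v2)
    (hu12 : NA (RL b) u1 u2) (hu13 : NA (RL b) u1 u3) (hu23 : NA (RL b) u2 u3)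
    (h12 : NA (RL b) v1 v2) (h13 : NA (RL b) v1 v3) (h23 : NA (RL b) v2 v3) : False := by
  have e12 := h12.time h1 h2
  have e13 := h13.time h1 h3
  have e23 := h23.time h2 h3
  have e24 := h13.time k1 k3
  have e14 := h23.time k2 k3
  refine kcomb (hb.k i1 i2 i4 g1 g2 g3 ?_) e12 e14 e24 (h12.time m1 m2) (h13.time m1 m3)
    (h23.time m2 m3) (hu13.symm.time m1.symm h1.symm) (hu23.symm.time m1.symm k1.symm)
    (hu23.symm.time m2.symm k2.symm) (hu13.symm.time m2.symm h2.symm) (hu23.symm.time m3.symm k3.symm)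
  have r3 := rho h1 h2 h3 k1 k2 k3
  have r4 := rho h1 h2 h3 m1 m2 m3
  have N1 := (RNpos n1 h1).ne'
  have N2 := (RNpos n2 h2).ne'
  have c : ((b i1 - b i3) * RN u1 v1) * ((b i2 - b i3) * RN u1 v2) * (b i2 - b i1) ≠ 0 :=
    mul_ne_zero (mul_ne_zero (mul_ne_zero (hb.ne e13) N1) (mul_ne_zero (hb.ne e23) N2)) (hb.ne e12.symm)
  refine (mul_eq_zero.1 ?_).resolve_right c
  unfold fK
  linear_combination (b g1 - b g3) * (b g2 - b i2) * ((b i2 - b i3) * RN u1 v2) * r3 -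
    (b i2 - b i4) * (b i1 - b i2) * ((b i2 - b i3) * RN u1 v2) * r4

theorem ray_x7 (hb : Gen b) : X7 (RL b : Fin r → Ray D R → Fin D → ℤ) := by
  intro u1 u2 u3 v1 v2 v3 v4 u12 u13 u23 v12 v13 v14 v23 v24 v34
  rintro ⟨n1, i1, h1⟩ ⟨n2, i2, h2⟩ ⟨n3, i3, h3⟩ ⟨n4, i4, h4⟩ ⟨-, j1, k1⟩ ⟨-, j2, k2⟩ ⟨-, j3, k3⟩ ⟨-, j4, k4⟩
    ⟨-, g1, m1⟩ ⟨-, g2, m2⟩ ⟨-, g3, m3⟩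
  rcases ray_cr hb h1 h2 h3 h4 k1 k2 k3 k4 n1 n2 u12 v12 v13 v14 v23 v24 v34 with
    ⟨rfl, rfl, rfl, rfl⟩ | ⟨rfl, rfl, rfl, rfl⟩ | ⟨rfl, rfl, rfl, rfl⟩
  · exact x7core hb h1 h2 h3 k1 k2 k3 m1 m2 m3 n1 n2 u12 u13 u23 v12 v13 v23
  · exact x7core hb h1 h3 h2 k1 k3 k2 m1 m3 m2 n1 n3 u12 u13 u23 v13 v12 v23.symm
  · exact x7core hb h2 h3 h1 k2 k3 k1 m2 m3 m1 n2 n3 u12 u13 u23 v23 v12.symm v13.symm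

end ray


section ray2
open Matrix
variable {r D : ℕ} {R : ℤ} {b : Fin r → ℤ}

theorem RLk {b : Fin r → ℤ} {i : Fin r} {u v : Ray D R} (h : RL b i u = RL b i v) (t : Fin D) :
    u.1.1 t + b i * u.1.2 t = v.1.1 t + b i * v.1.2 t := by
  have := congrFun h t
  simpa [RL] using this

theorem QPzero (hb : Gen b) {u u' v : Ray D R} {i j : Fin r} {Q P : ℤ} (h : RL b i u = RL b i v)
    (k : RL b j u' = RL b j v) (hu : NA (RL b) u u') (n : u ≠ v) (n' : u' ≠ v)
    (e : ∀ t, Q * (u'.1.1 t - u.1.1 t) + P * (u'.1.2 t - u.1.2 t) = 0) : Q = 0 := by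
  by_contra hQ
  have hij := hu.time h.symm k.symm
  have h1 : (Q * (b j - b i)) • (v.1.2 - u.1.2) = (Q * b j - P) • (u'.1.2 - u.1.2) := by
    ext t
    have e1 := RLk h t
    have e2 := RLk k t
    have e3 := e t
    simp only [Pi.smul_apply, smul_eq_mul, Pi.sub_apply]
    linear_combination e3 + Q * e1 - Q * e2
  have hk : Q * (b j - b i) ≠ 0 := mul_ne_zero hQ (hb.ne hij.symm)
  have h2 := par_eq h1 hk (RNpos n h)
  rw [← h2] at h1
  have h3 := smul_right_injective _ hk h1
  have h4 := RNpos n' k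
  unfold RN at h4
  have h5 : v.1.2 - u'.1.2 = 0 := by
    have := sub_left_inj.1 h3
    rw [this, sub_self]
  rw [h5] at h4
  simp at h4

theorem x8bA (hb : Gen b) {u u' v1 v2 v3 v4 e d : Ray D R} {i1 i2 i3 i4 g1 g2 h3 h4 δ : Fin r}
    (uu : NA (RL b) u u') (v12 : NA (RL b) v1 v2) (v13 : NA (RL b) v1 v3) (v14 : NA (RL b) v1 v4)
    (v23 : NA (RL b) v2 v3) (v24 : NA (RL b) v2 v4) (v34 : NA (RL b) v3 v4)
    (eu : NA (RL b) e u) (eu' : NA (RL b) e u') (du : NA (RL b) d u) (du' : NA (RL b) d u')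
    (ev3 : NA (RL b) e v3) (ev4 : NA (RL b) e v4) (dv1 : NA (RL b) d v1) (dv2 : NA (RL b) d v2)
    (a1 : RL b i1 u = RL b i1 v1) (a2 : RL b i2 u = RL b i2 v2) (a3 : RL b i3 u = RL b i3 v3)
    (a4 : RL b i4 u = RL b i4 v4)
    (b1 : RL b i2 u' = RL b i2 v1) (b2 : RL b i1 u' = RL b i1 v2) (b3 : RL b i4 u' = RL b i4 v3)
    (b4 : RL b i3 u' = RL b i3 v4)
    (c1 : RL b g1 e = RL b g1 v1) (c2 : RL b g2 e = RL b g2 v2)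
    (c3 : RL b h3 d = RL b h3 v3) (c4 : RL b h4 d = RL b h4 v4) (cd : RL b δ e = RL b δ d)
    (n : u ≠ v1) (n' : u' ≠ v1) : False := by
  refine qacomb (hb.qa i1 i2 i3 i4 g1 g2 h3 h4 δ ?_) (v12.time a1 a2) (v13.time a1 a3) (v14.time a1 a4)
    (v23.time a2 a3) (v24.time a2 a4) (v34.time a3 a4) (v12.time c1 c2) (v34.time c3 c4)
    (du.time c3.symm a3.symm) (du'.time c3.symm b3.symm) (du'.time c4.symm b4.symm) (du.time c4.symm a4.symm)
    (ev3.time cd.symm c3) (ev4.time cd.symm c4)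
    (eu.time c1.symm a1.symm) (eu'.time c1.symm b1.symm) (eu'.time c2.symm b2.symm) (eu.time c2.symm a2.symm)
    (dv1.time cd c1) (dv2.time cd c2)
  unfold fQA
  refine QPzero (P := (b h3 - b h4) * (b i4 - b i3) * ((b δ - b g2) * (b g1 - b i1) * b i2 + (b δ - b g1) * (b g2 - b i2) * b i1)
      - (b g1 - b g2) * (b i2 - b i1) * ((b δ - b h4) * (b h3 - b i3) * b i4 + (b δ - b h3) * (b h4 - b i4) * b i3)) hb a1 b1 uu n n' ?_
  intro t
  have A1 := RLk a1 t
  have A2 := RLk a2 t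
  have A3 := RLk a3 t
  have A4 := RLk a4 t
  have B1 := RLk b1 t
  have B2 := RLk b2 t
  have B3 := RLk b3 t
  have B4 := RLk b4 t
  have C1 := RLk c1 t
  have C2 := RLk c2 t
  have C3 := RLk c3 t
  have C4 := RLk c4 t
  have CD := RLk cd t
  have S1 : (u'.1.1 t - u.1.1 t) + b i2 * (u'.1.2 t - u.1.2 t) = (b i2 - b i1) * (v1.1.2 t - u.1.2 t) := by
    linear_combination B1 - A1
  have S2 : (u'.1.1 t - u.1.1 t) + b i1 * (u'.1.2 t - u.1.2 t) = (b i1 - b i2) * (v2.1.2 t - u.1.2 t) := by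
    linear_combination B2 - A2
  have S3 : (u'.1.1 t - u.1.1 t) + b i4 * (u'.1.2 t - u.1.2 t) = (b i4 - b i3) * (v3.1.2 t - u.1.2 t) := by
    linear_combination B3 - A3
  have S4 : (u'.1.1 t - u.1.1 t) + b i3 * (u'.1.2 t - u.1.2 t) = (b i3 - b i4) * (v4.1.2 t - u.1.2 t) := by
    linear_combination B4 - A4
  have E1 : (e.1.1 t - u.1.1 t) + b g1 * (e.1.2 t - u.1.2 t) = (b g1 - b i1) * (v1.1.2 t - u.1.2 t) := by
    linear_combination C1 - A1
  have E2 : (e.1.1 t - u.1.1 t) + b g2 * (e.1.2 t - u.1.2 t) = (b g2 - b i2) * (v2.1.2 t - u.1.2 t) := by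
    linear_combination C2 - A2
  have E3 : (d.1.1 t - u.1.1 t) + b h3 * (d.1.2 t - u.1.2 t) = (b h3 - b i3) * (v3.1.2 t - u.1.2 t) := by
    linear_combination C3 - A3
  have E4 : (d.1.1 t - u.1.1 t) + b h4 * (d.1.2 t - u.1.2 t) = (b h4 - b i4) * (v4.1.2 t - u.1.2 t) := by
    linear_combination C4 - A4
  have F : (b h3 - b h4) * ((b δ - b g2) * (b g1 - b i1) * (v1.1.2 t - u.1.2 t) - (b δ - b g1) * (b g2 - b i2) * (v2.1.2 t - u.1.2 t))
    = (b g1 - b g2) * ((b δ - b h4) * (b h3 - b i3) * (v3.1.2 t - u.1.2 t) - (b δ - b h3) * (b h4 - b i4) * (v4.1.2 t - u.1.2 t)) := by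
    linear_combination (-1) * (b h3 - b h4) * ((b δ - b g2) * E1 - (b δ - b g1) * E2) + (b g1 - b g2) * ((b δ - b h4) * E3 - (b δ - b h3) * E4) + (b h3 - b h4) * (b g1 - b g2) * CD
  linear_combination (b i2 - b i1) * (b i4 - b i3) * F + (b h3 - b h4) * (b i4 - b i3) * ((b δ - b g2) * (b g1 - b i1) * S1 + (b δ - b g1) * (b g2 - b i2) * S2) - (b g1 - b g2) * (b i2 - b i1) * ((b δ - b h4) * (b h3 - b i3) * S3 + (b δ - b h3) * (b h4 - b i4) * S4)

theorem x8bB (hb : Gen b) {u u' v1 v2 v3 v4 e d : Ray D R} {i1 i2 i3 i4 g1 g2 h3 h4 δ : Fin r}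
    (uu : NA (RL b) u u') (v12 : NA (RL b) v1 v2) (v13 : NA (RL b) v1 v3) (v14 : NA (RL b) v1 v4)
    (v23 : NA (RL b) v2 v3) (v24 : NA (RL b) v2 v4) (v34 : NA (RL b) v3 v4)
    (eu : NA (RL b) e u) (eu' : NA (RL b) e u') (du : NA (RL b) d u) (du' : NA (RL b) d u')
    (ev3 : NA (RL b) e v3) (ev4 : NA (RL b) e v4) (dv1 : NA (RL b) d v1) (dv2 : NA (RL b) d v2)
    (a1 : RL b i1 u = RL b i1 v1) (a2 : RL b i2 u = RL b i2 v2) (a3 : RL b i3 u = RL b i3 v3)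
    (a4 : RL b i4 u = RL b i4 v4)
    (b1 : RL b i3 u' = RL b i3 v1) (b2 : RL b i4 u' = RL b i4 v2) (b3 : RL b i1 u' = RL b i1 v3)
    (b4 : RL b i2 u' = RL b i2 v4)
    (c1 : RL b g1 e = RL b g1 v1) (c2 : RL b g2 e = RL b g2 v2)
    (c3 : RL b h3 d = RL b h3 v3) (c4 : RL b h4 d = RL b h4 v4) (cd : RL b δ e = RL b δ d)
    (n : u ≠ v1) (n' : u' ≠ v1) : False := by
  refine qbcomb (hb.qb i1 i2 i3 i4 g1 g2 h3 h4 δ ?_) (v12.time a1 a2) (v13.time a1 a3) (v14.time a1 a4)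
    (v23.time a2 a3) (v24.time a2 a4) (v34.time a3 a4) (v12.time c1 c2) (v34.time c3 c4)
    (du.time c3.symm a3.symm) (du'.time c3.symm b3.symm) (du'.time c4.symm b4.symm) (du.time c4.symm a4.symm)
    (ev3.time cd.symm c3) (ev4.time cd.symm c4)
    (eu.time c1.symm a1.symm) (eu'.time c1.symm b1.symm) (eu.time c2.symm a2.symm) (eu'.time c2.symm b2.symm)
    (dv1.time cd c1) (dv2.time cd c2)
  unfold fQB
  refine QPzero (P := (b h3 - b h4) * ((b δ - b g2) * (b g1 - b i1) * (b i4 - b i2) * b i3 - (b δ - b g1) * (b g2 - b i2) * (b i3 - b i1) * b i4)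
      + (b g1 - b g2) * ((b δ - b h4) * (b h3 - b i3) * (b i4 - b i2) * b i1 - (b δ - b h3) * (b h4 - b i4) * (b i3 - b i1) * b i2)) hb a1 b1 uu n n' ?_
  intro t
  have A1 := RLk a1 t
  have A2 := RLk a2 t
  have A3 := RLk a3 t
  have A4 := RLk a4 t
  have B1 := RLk b1 t
  have B2 := RLk b2 t
  have B3 := RLk b3 t
  have B4 := RLk b4 t
  have C1 := RLk c1 t
  have C2 := RLk c2 t
  have C3 := RLk c3 t
  have C4 := RLk c4 t
  have CD := RLk cd t
  have S1 : (u'.1.1 t - u.1.1 t) + b i3 * (u'.1.2 t - u.1.2 t) = (b i3 - b i1) * (v1.1.2 t - u.1.2 t) := by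
    linear_combination B1 - A1
  have S2 : (u'.1.1 t - u.1.1 t) + b i4 * (u'.1.2 t - u.1.2 t) = (b i4 - b i2) * (v2.1.2 t - u.1.2 t) := by
    linear_combination B2 - A2
  have S3 : (u'.1.1 t - u.1.1 t) + b i1 * (u'.1.2 t - u.1.2 t) = (b i1 - b i3) * (v3.1.2 t - u.1.2 t) := by
    linear_combination B3 - A3
  have S4 : (u'.1.1 t - u.1.1 t) + b i2 * (u'.1.2 t - u.1.2 t) = (b i2 - b i4) * (v4.1.2 t - u.1.2 t) := by
    linear_combination B4 - A4
  have E1 : (e.1.1 t - u.1.1 t) + b g1 * (e.1.2 t - u.1.2 t) = (b g1 - b i1) * (v1.1.2 t - u.1.2 t) := by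
    linear_combination C1 - A1
  have E2 : (e.1.1 t - u.1.1 t) + b g2 * (e.1.2 t - u.1.2 t) = (b g2 - b i2) * (v2.1.2 t - u.1.2 t) := by
    linear_combination C2 - A2
  have E3 : (d.1.1 t - u.1.1 t) + b h3 * (d.1.2 t - u.1.2 t) = (b h3 - b i3) * (v3.1.2 t - u.1.2 t) := by
    linear_combination C3 - A3
  have E4 : (d.1.1 t - u.1.1 t) + b h4 * (d.1.2 t - u.1.2 t) = (b h4 - b i4) * (v4.1.2 t - u.1.2 t) := by
    linear_combination C4 - A4
  have F : (b h3 - b h4) * ((b δ - b g2) * (b g1 - b i1) * (v1.1.2 t - u.1.2 t) - (b δ - b g1) * (b g2 - b i2) * (v2.1.2 t - u.1.2 t))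
    = (b g1 - b g2) * ((b δ - b h4) * (b h3 - b i3) * (v3.1.2 t - u.1.2 t) - (b δ - b h3) * (b h4 - b i4) * (v4.1.2 t - u.1.2 t)) := by
    linear_combination (-1) * (b h3 - b h4) * ((b δ - b g2) * E1 - (b δ - b g1) * E2) + (b g1 - b g2) * ((b δ - b h4) * E3 - (b δ - b h3) * E4) + (b h3 - b h4) * (b g1 - b g2) * CD
  linear_combination (b i3 - b i1) * (b i4 - b i2) * F + (b h3 - b h4) * ((b δ - b g2) * (b g1 - b i1) * (b i4 - b i2) * S1 - (b δ - b g1) * (b g2 - b i2) * (b i3 - b i1) * S2) + (b g1 - b g2) * ((b δ - b h4) * (b h3 - b i3) * (b i4 - b i2) * S3 - (b δ - b h3) * (b h4 - b i4) * (b i3 - b i1) * S4)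

theorem ray_x8b (hb : Gen b) : X8b (RL b : Fin r → Ray D R → Fin D → ℤ) := by
  intro u u' v1 v2 v3 v4 e d uu v12 v13 v14 v23 v24 v34 eu eu' du du' ev3 ev4 dv1 dv2
  rintro ⟨n1, i1, a1⟩ ⟨n2, i2, a2⟩ ⟨n3, i3, a3⟩ ⟨n4, i4, a4⟩ ⟨m1, j1, b1⟩ ⟨-, j2, b2⟩ ⟨-, j3, b3⟩ ⟨-, j4, b4⟩
    ⟨-, g1, c1⟩ ⟨-, g2, c2⟩ ⟨-, h3, c3⟩ ⟨-, h4, c4⟩ ⟨-, δ, cd⟩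
  rcases ray_cr hb a1 a2 a3 a4 b1 b2 b3 b4 n1 n2 uu v12 v13 v14 v23 v24 v34 with
    ⟨rfl, rfl, rfl, rfl⟩ | ⟨rfl, rfl, rfl, rfl⟩ | ⟨rfl, rfl, rfl, rfl⟩
  · exact x8bA hb uu v12 v13 v14 v23 v24 v34 eu eu' du du' ev3 ev4 dv1 dv2 a1 a2 a3 a4 b1 b2 b3 b4 c1 c2 c3 c4 cd n1 m1
  · exact x8bB hb uu v12 v13 v14 v23 v24 v34 eu eu' du du' ev3 ev4 dv1 dv2 a1 a2 a3 a4 b1 b2 b3 b4 c1 c2 c3 c4 cd n1 m1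
  · exact x8bB hb uu v12 v14 v13 v24 v23 v34.symm eu eu' du du' ev4 ev3 dv1 dv2 a1 a2 a4 a3 b1 b2 b4 b3 c1 c2 c4 c3 cd n1 m1
end ray2


section ray3
open Matrix
variable {r D : ℕ} {R : ℤ} {b : Fin r → ℤ}

theorem mkEC (hb : Gen b) {ui uk u4 vi vj vk v4 : Ray D R} {ai aj ak w bi bk gij gik gkj gki : Fin r}
    (uik : NA (RL b) ui uk) (ui4 : NA (RL b) ui u4) (uk4 : NA (RL b) uk u4)
    (vij : NA (RL b) vi vj) (vik : NA (RL b) vi vk) (vjk : NA (RL b) vj vk)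
    (vi4 : NA (RL b) vi v4) (vj4 : NA (RL b) vj v4) (vk4 : NA (RL b) vk v4)
    (hai : RL b ai u4 = RL b ai vi) (haj : RL b aj u4 = RL b aj vj) (hak : RL b ak u4 = RL b ak vk)
    (hw : RL b w u4 = RL b w v4) (hbi : RL b bi ui = RL b bi v4) (hbk : RL b bk uk = RL b bk v4)
    (hij : RL b gij ui = RL b gij vj) (hik : RL b gik ui = RL b gik vk)
    (hkj : RL b gkj uk = RL b gkj vj) (hki : RL b gki uk = RL b gki vi)
    (n1 : u4 ≠ vj) (n2 : u4 ≠ v4) : EC ai aj ak w bi bk gij gik gkj gki where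
  e := by
    apply hb.e
    have r1 := rho haj hw hak hij hbi hik
    have r2 := rho haj hw hai hkj hbk hki
    have c : RN u4 vj * RN u4 v4 ≠ 0 := mul_ne_zero (RNpos n1 haj).ne' (RNpos n2 hw).ne'
    refine (mul_eq_zero.1 ?_).resolve_right c
    unfold fE
    linear_combination (-1) * (b gkj - b gki) * (b ai - b w) * (b bk - b w) * RN u4 v4 * r1 + (b gij - b gik) * (b ak - b w) * (b bi - b w) * RN u4 v4 * r2
  a1 := vij.time hai haj
  a2 := vik.time hai hak
  a3 := vjk.time haj hak
  w1 := vi4.time hai hw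
  w2 := vj4.time haj hw
  w3 := vk4.time hak hw
  b1 := ui4.time hbi.symm hw.symm
  b2 := uk4.time hbk.symm hw.symm
  b3 := uik.time hbi.symm hbk.symm
  g1 := vjk.time hij hik
  g2 := vj4.time hij hbi
  g3 := vk4.time hik hbi
  g4 := vij.symm.time hkj hki
  g5 := vj4.time hkj hbk
  g6 := vi4.time hki hbk
  c1 := ui4.time hij.symm haj.symm
  c2 := uk4.time hkj.symm haj.symm
  c3 := uik.time hij.symm hkj.symm
  c4 := ui4.time hik.symm hak.symm
  c5 := uk4.time hki.symm hai.symm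

theorem x8afin {a1 a2 a3 w N1 N2 N3 N4 : ℤ} (k12 : a1 - a2 ≠ 0) (k13 : a1 - a3 ≠ 0) (k23 : a2 - a3 ≠ 0)
    (w1 : a1 - w ≠ 0) (h1 : 0 < N1) (h2 : 0 < N2) (h3 : 0 < N3)
    (r1 : (a2 - a1) * (a1 - a3) * (a3 - a1) * N1 = (a3 - a1) * (w - a3) * (a2 - w) * N4)
    (r2 : (a1 - a2) * (a2 - a3) * (a3 - a2) * N2 = (a3 - a2) * (w - a3) * (a1 - w) * N4)
    (r3 : (a1 - a3) * (a3 - a2) * (a2 - a3) * N3 = (a2 - a3) * (w - a2) * (a1 - w) * N4) : False := by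
  have s1 : (a2 - a1) * (a1 - a3) * N1 = (w - a3) * (a2 - w) * N4 := by
    apply mul_left_cancel₀ k13; linear_combination (-1) * r1
  have s2 : (a1 - a2) * (a2 - a3) * N2 = (w - a3) * (a1 - w) * N4 := by
    apply mul_left_cancel₀ k23; linear_combination (-1) * r2
  have s3 : (a1 - a3) * (a3 - a2) * N3 = (w - a2) * (a1 - w) * N4 := by
    apply mul_left_cancel₀ k23; linear_combination r3
  have s : ((a1 - a2) * (a2 - a3) * (a3 - a1)) * ((a1 - w) ^ 2 * N1 + (a2 - w) ^ 2 * N2 + (a3 - w) ^ 2 * N3) = 0 := by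
    linear_combination (a2 - a3) * (a1 - w) ^ 2 * s1 + (a3 - a1) * (a2 - w) ^ 2 * s2 + (a1 - a2) * (a3 - w) ^ 2 * s3
  have k31 : a3 - a1 ≠ 0 := fun h => k13 (by linarith)
  have := (mul_eq_zero.1 s).resolve_left (mul_ne_zero (mul_ne_zero k12 k23) k31)
  have p1 : 0 < (a1 - w) ^ 2 * N1 := by positivity
  have p2 : 0 ≤ (a2 - w) ^ 2 * N2 := by positivity
  have p3 : 0 ≤ (a3 - w) ^ 2 * N3 := by positivity
  linarith

theorem ray_x8a (hb : Gen b) : X8a (RL b : Fin r → Ray D R → Fin D → ℤ) := by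
  intro u1 u2 u3 u4 v1 v2 v3 v4 u12 u13 u14 u23 u24 u34 v12 v13 v14 v23 v24 v34
  rintro ⟨-, g12, h12⟩ ⟨-, g13, h13⟩ ⟨-, b1, hb1⟩ ⟨-, g21, h21⟩ ⟨-, g23, h23⟩ ⟨-, b2, hb2⟩ ⟨-, g31, h31⟩
    ⟨-, g32, h32⟩ ⟨-, b3, hb3⟩ ⟨n1, a1, h1⟩ ⟨n2, a2, h2⟩ ⟨n3, a3, h3⟩ ⟨n4, w, hw⟩
  have E1 := mkEC hb u23 u24 u34 v12.symm v23 v13 v24 v14 v34 h2 h1 h3 hw hb2 hb3 h21 h23 h31 h32 n1 n4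
  have E2 := mkEC hb u13 u14 u34 v12 v13 v23 v14 v24 v34 h1 h2 h3 hw hb1 hb3 h12 h13 h32 h31 n2 n4
  have E3 := mkEC hb u12 u14 u24 v13 v12 v23.symm v14 v34 v24 h1 h3 h2 hw hb1 hb2 h13 h12 h23 h21 n3 n4
  obtain ⟨⟨rfl, rfl, rfl⟩, ⟨rfl, e1⟩, ⟨rfl, e2⟩, ⟨rfl, e3⟩⟩ := ecomb E1 E2 E3
  subst e1 e2 e3
  have k12 := hb.ne E2.a1
  have k13 := hb.ne E2.a2
  have k23 := hb.ne E2.a3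
  have w1 := hb.ne E2.w1
  have w2 := hb.ne E2.w2
  have w3 := hb.ne E2.w3
  have r2 := rho h2 hw h3 h12 hb1 h13
  have r1 := rho h1 hw h3 h21 hb2 h23
  have r3 := rho h3 hw h2 h13 hb1 h12
  have N1 := RNpos n1 h1
  have N2 := RNpos n2 h2
  have N3 := RNpos n3 h3
  exact x8afin k12 k13 k23 w1 N1 N2 N3 r1 r2 r3
end ray3


section final
open Matrix

theorem le_extremalF {r n v e : ℕ} (H : Finset (Finset (Fin n))) (h1 : ∀ A ∈ H, A.card = r)
    (h2 : GFree H v e) : H.card ≤ extremalF r n v e := by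
  refine le_csSup ⟨Fintype.card (Finset (Fin n)), ?_⟩ ⟨H, h1, h2, rfl⟩
  rintro m ⟨H', -, -, rfl⟩
  exact card_le_univ H'

theorem build {P V : Type*} [DecidableEq P] [DecidableEq V] {r : ℕ} (l : Fin r → P → V) (hl : Lin l)
    (hr : 2 ≤ r) (T : Finset P) (e : ℕ) (he : 2 ≤ e)
    (hs : ∀ S : Finset P, S.card = e → sav l S ≤ 2 * e - 4)
    (W : Finset (Fin r × V)) (hW : ∀ p ∈ T, ∀ i, (i, l i p) ∈ W) (n : ℕ) (hn : W.card ≤ n) :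
    T.card ≤ extremalF r n (e * (r - 2) + 3) e := by
  rcases T.eq_empty_or_nonempty with rfl | ⟨p0, hp0⟩
  · simp
  have hWpos : 0 < W.card := card_pos.2 ⟨_, hW p0 hp0 ⟨0, by omega⟩⟩
  obtain ⟨g, hg⟩ : ∃ g : Fin r × V → Fin n, Set.InjOn g W := by
    have : Fintype.card {x // x ∈ W} ≤ Fintype.card (Fin n) := by simpa using hn
    obtain ⟨f⟩ := Function.Embedding.nonempty_of_card_le this
    refine ⟨fun x => if h : x ∈ W then f ⟨x, h⟩ else ⟨0, by omega⟩, ?_⟩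
    intro x hx y hy hxy
    have hx' : x ∈ W := hx
    have hy' : y ∈ W := hy
    simp only [hx', hy', dif_pos] at hxy
    exact congrArg Subtype.val (f.injective hxy)
  let E : P → Finset (Fin n) := fun p => univ.image (fun i => g (i, l i p))
  have hE : Set.InjOn E T := by
    intro p hp q hq hpq
    by_contra hne
    have key : ∀ i, l i p = l i q := by
      intro i
      have : g (i, l i p) ∈ E q := by rw [← hpq]; exact mem_image_of_mem _ (mem_univ i)
      obtain ⟨j, -, hj⟩ := mem_image.1 this
      have := hg (hW q hq j) (hW p hp i) hj
      obtain ⟨rfl, h2⟩ := Prod.mk.inj this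
      exact h2.symm
    have := hl.lin p q ⟨0, by omega⟩ ⟨1, by omega⟩ hne (key _) (key _)
    simp at this
  rw [← card_image_of_injOn hE]
  apply le_extremalF
  · intro A hA
    obtain ⟨p, hp, rfl⟩ := mem_image.1 hA
    rw [card_image_of_injective, card_univ, Fintype.card_fin]
    intro i j hij
    exact (Prod.mk.inj (hg (hW p hp i) (hW p hp j) hij)).1
  · intro S hS hSe
    obtain ⟨S', hS', rfl⟩ := subset_image_iff.1 hS
    have hc : S'.card = e := by
      rw [← hSe, card_image_of_injOn (hE.mono (by exact_mod_cast hS'))]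
    have h1 : ∑ i, (S'.image (l i)).card ≤ ((S'.image E).biUnion id).card := by
      rw [← card_sigma univ (fun i => S'.image (l i))]
      refine card_le_card_of_injOn (fun x => g (x.1, x.2)) ?_ ?_
      · rintro ⟨i, v⟩ hx
        obtain ⟨p, hp, hv⟩ := mem_image.1 (mem_sigma.1 hx).2
        dsimp only at hv
        subst hv
        exact mem_biUnion.2 ⟨E p, mem_image_of_mem _ hp, mem_image_of_mem _ (mem_univ i)⟩
      · rintro ⟨i, v⟩ hx ⟨j, w⟩ hy hxy
        obtain ⟨p, hp, hv⟩ := mem_image.1 (mem_sigma.1 hx).2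
        dsimp only at hv
        subst hv
        obtain ⟨q, hq, hw⟩ := mem_image.1 (mem_sigma.1 hy).2
        dsimp only at hw
        subst hw
        have := hg (hW p (hS' hp) i) (hW q (hS' hq) j) hxy
        obtain ⟨rfl, h2⟩ := Prod.mk.inj this
        simp only [h2]
    refine le_trans ?_ h1
    have h2 : sav l S' + ∑ i, (S'.image (l i)).card = r * e := by
      unfold sav
      rw [← sum_add_distrib, sum_congr rfl (fun i _ => Nat.sub_add_cancel (card_image_le (s := S') (f := l i))), hc]
      simp
    have h3 := hs S' hc
    obtain ⟨k, rfl⟩ : ∃ k, r = k + 2 := ⟨r - 2, by omega⟩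
    rw [Nat.add_sub_cancel]
    have : (k + 2) * e = e * k + 2 * e := by ring
    omega

theorem exRays (D M : ℕ) : ∃ (R : ℤ) (T : Finset (Ray D R)),
    (∀ p ∈ T, ∀ k, (0 ≤ p.1.1 k ∧ p.1.1 k < M) ∧ (0 ≤ p.1.2 k ∧ p.1.2 k < M)) ∧
    M ^ (2 * D) ≤ T.card * (D * M ^ 2 + 1) := by
  classical
  let box : Finset (Fin D → ℤ) := Fintype.piFinset (fun _ => Ico (0 : ℤ) M)
  have hbox : box.card = M ^ D := by simp [box]
  let f : (Fin D → ℤ) × (Fin D → ℤ) → ℤ := fun p => p.2 ⬝ᵥ p.2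
  have hmap : ∀ p ∈ box ×ˢ box, f p ∈ Icc (0 : ℤ) ((D * M ^ 2 : ℕ) : ℤ) := by
    intro p hp
    have h2 := (mem_product.1 hp).2
    simp only [box, Fintype.mem_piFinset, mem_Ico] at h2
    refine mem_Icc.2 ⟨dnn _, ?_⟩
    show p.2 ⬝ᵥ p.2 ≤ _
    unfold dotProduct
    refine (sum_le_sum (g := fun _ => (M : ℤ) ^ 2) fun k _ => ?_).trans ?_
    · have := h2 k; nlinarith
    · simp
  have hsum := card_eq_sum_card_fiberwise hmap
  rw [card_product, hbox] at hsum
  have hR : ∃ R ∈ Icc (0 : ℤ) ((D * M ^ 2 : ℕ) : ℤ),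
      M ^ (2 * D) ≤ ((box ×ˢ box).filter (fun p => f p = R)).card * (D * M ^ 2 + 1) := by
    by_contra hcon
    push Not at hcon
    have hne : (Icc (0 : ℤ) ((D * M ^ 2 : ℕ) : ℤ)).Nonempty := ⟨0, mem_Icc.2 ⟨le_refl _, Int.natCast_nonneg _⟩⟩
    have := sum_lt_sum_of_nonempty hne hcon
    rw [← sum_mul, ← hsum, sum_const, Int.card_Icc, smul_eq_mul] at this
    have e : ((D * M ^ 2 : ℕ) + 1 - 0 : ℤ).toNat = D * M ^ 2 + 1 := by omega
    rw [e] at this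
    have e2 : M ^ (2 * D) = M ^ D * M ^ D := by ring
    rw [e2, mul_comm] at this
    exact lt_irrefl _ this
  obtain ⟨R, -, hR⟩ := hR
  refine ⟨R, (Finset.subtype (fun p : (Fin D → ℤ) × (Fin D → ℤ) => p.2 ⬝ᵥ p.2 = R) (box ×ˢ box) :), ?_, ?_⟩
  · intro p hp k
    have := mem_product.1 (mem_subtype.1 hp)
    simp only [box, Fintype.mem_piFinset, mem_Ico] at this
    exact ⟨this.1 k, this.2 k⟩
  · have hc := card_subtype (fun p : (Fin D → ℤ) × (Fin D → ℤ) => p.2 ⬝ᵥ p.2 = R) (box ×ˢ box)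
    exact le_of_le_of_eq hR (congrArg (fun z => z * (D * M ^ 2 + 1)) hc.symm)

theorem main_count (r : ℕ) (hr : 2 ≤ r) (e : ℕ) (he : e = 4 ∨ e = 5 ∨ e = 7 ∨ e = 8) (D : ℕ) :
    ∃ K : ℕ, 1 ≤ K ∧ ∀ M n : ℕ, r * (K * M) ^ D ≤ n →
      M ^ (2 * D) ≤ extremalF r n (e * (r - 2) + 3) e * (D * M ^ 2 + 1) := by
  obtain ⟨b, hb⟩ := exGen r
  let B : ℕ := ∑ i, (b i).natAbs
  have hB : ∀ i, |b i| ≤ (B : ℤ) := by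
    intro i
    rw [Int.abs_eq_natAbs]
    exact_mod_cast single_le_sum (f := fun i => (b i).natAbs) (fun _ _ => Nat.zero_le _) (mem_univ i)
  refine ⟨2 * B + 1, by omega, ?_⟩
  intro M n hn
  obtain ⟨R, T, hT, hcard⟩ := exRays D M
  refine hcard.trans (Nat.mul_le_mul_right _ ?_)
  have hl := ray_lin (D := D) (R := R) hb
  refine build (RL b) hl hr T e (by omega) ?_
    (univ ×ˢ Fintype.piFinset (fun _ : Fin D => Ico (-(B * M : ℤ)) ((B + 1) * M))) ?_ n ?_
  · intro S hS
    rcases he with rfl | rfl | rfl | rfl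
    · exact sav4 hl S hS
    · exact sav5 hl S hS
    · exact sav7 hl (ray_x7 hb) S hS
    · exact sav8 hl (ray_x7 hb) (ray_x8a hb) (ray_x8b hb) S hS
  · intro p hp i
    refine mem_product.2 ⟨mem_univ _, Fintype.mem_piFinset.2 fun k => mem_Ico.2 ?_⟩
    obtain ⟨⟨h1, h2⟩, h3, h4⟩ := hT p hp k
    have h5 := abs_le.1 (hB i)
    show _ ≤ p.1.1 k + b i * p.1.2 k ∧ p.1.1 k + b i * p.1.2 k < _
    constructor
    · nlinarith [mul_le_mul_of_nonneg_right h5.1 h3, mul_le_mul_of_nonneg_left h4.le (Int.natCast_nonneg B)]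
    · nlinarith [mul_le_mul_of_nonneg_right h5.2 h3, mul_le_mul_of_nonneg_left h4.le (Int.natCast_nonneg B)]
  · rw [card_product, card_univ, Fintype.card_fin, Fintype.card_piFinset_const, Int.card_Ico]
    have : ((B + 1) * M - (-(B * M)) : ℤ).toNat = (2 * B + 1) * M := by
      have : ((B + 1) * M - (-(B * M)) : ℤ) = (((2 * B + 1) * M : ℕ) : ℤ) := by push_cast; ring
      rw [this, Int.toNat_natCast]
    rw [this]
    exact hn

theorem final_ineq (C D M n t : ℕ) (ε : ℝ) (hε : 0 < ε) (hD : 3 ≤ D) (hDε : 3 ≤ (D : ℝ) * ε) (hε1 : ε ≤ 1)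
    (hn1 : n ≤ C * M ^ D) (hC : 1 ≤ C) (hM : C ^ 2 * (D + 1) < M) (ht : M ^ (2 * D) ≤ t * (D * M ^ 2 + 1)) :
    (n : ℝ) ^ ((2 : ℝ) - ε) < t := by
  have hM1 : 1 ≤ M := by omega
  have hMr : (1 : ℝ) ≤ M := by exact_mod_cast hM1
  have hCr : (1 : ℝ) ≤ C := by exact_mod_cast hC
  have h1 : (n : ℝ) ^ ((2 : ℝ) - ε) ≤ ((C ^ 2 * M ^ (2 * D - 3) : ℕ) : ℝ) := by
    calc (n : ℝ) ^ ((2 : ℝ) - ε) ≤ ((C : ℝ) * (M : ℝ) ^ D) ^ ((2 : ℝ) - ε) := by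
          apply Real.rpow_le_rpow (by positivity) (by exact_mod_cast hn1) (by linarith)
      _ = (C : ℝ) ^ ((2 : ℝ) - ε) * ((M : ℝ) ^ D) ^ ((2 : ℝ) - ε) := Real.mul_rpow (by positivity) (by positivity)
      _ ≤ (C : ℝ) ^ (2 : ℝ) * (M : ℝ) ^ (((2 * D - 3 : ℕ) : ℝ)) := by
          apply mul_le_mul _ _ (by positivity) (by positivity)
          · exact Real.rpow_le_rpow_of_exponent_le hCr (by linarith)
          · rw [← Real.rpow_natCast, ← Real.rpow_mul (by positivity)]
            apply Real.rpow_le_rpow_of_exponent_le hMr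
            rw [Nat.cast_sub (by omega)]
            push_cast
            linarith
      _ = _ := by rw [Real.rpow_natCast]; push_cast; norm_num
  refine h1.trans_lt ?_
  norm_cast
  by_contra hcon
  push Not at hcon
  have e1 : M ^ (2 * D) = M ^ (2 * D - 3) * M ^ 2 * M := by
    rw [← pow_add, ← pow_succ]; congr 1; omega
  have e2 : t * (D * M ^ 2 + 1) ≤ C ^ 2 * M ^ (2 * D - 3) * ((D + 1) * M ^ 2) := by
    apply Nat.mul_le_mul hcon
    have : 1 ≤ M ^ 2 := Nat.one_le_pow _ _ hM1
    nlinarith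
  have e3 : M ^ (2 * D - 3) * M ^ 2 * (C ^ 2 * (D + 1)) < M ^ (2 * D - 3) * M ^ 2 * M :=
    Nat.mul_lt_mul_of_pos_left hM (by positivity)
  have e4 : C ^ 2 * M ^ (2 * D - 3) * ((D + 1) * M ^ 2) = M ^ (2 * D - 3) * M ^ 2 * (C ^ 2 * (D + 1)) := by ring
  omega

end final

theorem brown_erdos_sos_lower_4578 (r : ℕ) (hr : 3 ≤ r) (e : ℕ)
    (he : e = 4 ∨ e = 5 ∨ e = 7 ∨ e = 8) (ε : ℝ) (hε : 0 < ε) :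
    ∃ N : ℕ, ∀ n : ℕ, N ≤ n →
      (n : ℝ) ^ ((2 : ℝ) - ε) < (extremalF r n (e * (r - 2) + 3) e : ℝ) := by
  set δ := min ε 1 with hδ
  have hδ0 : 0 < δ := lt_min hε one_pos
  have hδ1 : δ ≤ 1 := min_le_right _ _
  obtain ⟨D, hD⟩ := exists_nat_ge (3 / δ)
  have hDδ : 3 ≤ (D : ℝ) * δ := (div_le_iff₀ hδ0).1 hD
  have hD3 : 3 ≤ D := by
    have h : (3 : ℝ) ≤ D := by
      have : (D : ℝ) * δ ≤ D * 1 := mul_le_mul_of_nonneg_left hδ1 (Nat.cast_nonneg D)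
      linarith
    exact_mod_cast h
  obtain ⟨K, hK, hmain⟩ := main_count r (by omega) e he D
  let C := r * (2 * K) ^ D
  have hC : 1 ≤ C := Nat.mul_pos (by omega) (Nat.pow_pos (by omega))
  let M0 := C ^ 2 * (D + 1) + 1
  refine ⟨r * (K * M0) ^ D + 1, fun n hn => ?_⟩
  have hex : ∃ M, n < r * (K * M) ^ D := by
    refine ⟨n + 1, ?_⟩
    calc n < n + 1 := Nat.lt_succ_self n
      _ ≤ K * (n + 1) := Nat.le_mul_of_pos_left _ hK
      _ ≤ (K * (n + 1)) ^ D := Nat.le_self_pow (by omega) _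
      _ ≤ _ := Nat.le_mul_of_pos_left _ (by omega)
  classical
  obtain ⟨M', hM', hmin⟩ : ∃ M', n < r * (K * M') ^ D ∧ ∀ m < M', r * (K * m) ^ D ≤ n :=
    ⟨Nat.find hex, Nat.find_spec hex, fun m hm => not_lt.1 (Nat.find_min hex hm)⟩
  have hlt : M0 < M' := by
    by_contra hcon
    have : r * (K * M') ^ D ≤ r * (K * M0) ^ D :=
      Nat.mul_le_mul_left _ (Nat.pow_le_pow_left (Nat.mul_le_mul_left _ (not_lt.1 hcon)) _)
    omega
  obtain ⟨M, rfl⟩ : ∃ M, M' = M + 1 := ⟨M' - 1, by omega⟩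
  have hM0 : C ^ 2 * (D + 1) < M := by
    have : M0 = C ^ 2 * (D + 1) + 1 := rfl
    omega
  have hnC : n ≤ C * M ^ D := by
    have h1 : r * (K * (M + 1)) ^ D ≤ r * (K * (2 * M)) ^ D :=
      Nat.mul_le_mul_left _ (Nat.pow_le_pow_left (Nat.mul_le_mul_left _ (by omega)) _)
    have h2 : r * (K * (2 * M)) ^ D = C * M ^ D := by
      show _ = r * (2 * K) ^ D * M ^ D
      rw [mul_assoc, ← mul_pow]; congr 2; ring
    omega
  have hfin := final_ineq C D M n _ δ hδ0 hD3 hDδ hδ1 hnC hC hM0 (hmain M n (hmin M (Nat.lt_succ_self M)))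
  refine lt_of_le_of_lt ?_ hfin
  have hn1 : (1 : ℝ) ≤ n := by
    have : 1 ≤ n := by omega
    exact_mod_cast this
  exact Real.rpow_le_rpow_of_exponent_le hn1 (by have := min_le_left ε 1; linarith)
end
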